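/- Let n ≥ 1 and let α = (α_1, …, α_p) and β = (β_1, …, β_q) be partitions of n with p and q parts respectively, and let d = gcd(α, β) be the greatest common divisor of all the numbers α_1, …, α_p, β_1, …, β_q (so d divides n). Then the following are equivalent: (i) there exist coprime monic polynomials P, Q ∈ ℂ[X] with factorization patterns α and β respectively such that deg(P − Q) = (n + 1) − (p + q); (ii) p + q ≤ n/d + 1. -/

import Mathlib

section ZanAll

open Set Filter Topology

namespace Zan

structure Pot (φ : ℂ → ℝ) : Prop where
  cont : Continuous φ
  lo : ∀ x, -1 ≤ φ x
  hi : ∀ x, φ x ≤ 1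
  lim : Tendsto φ (cocompact ℂ) (𝓝 0)
  finlo : {x | φ x = -1}.Finite
  finhi : {x | φ x = 1}.Finite
  reg : ∀ x, -1 < φ x → φ x < 1 → ∀ U ∈ 𝓝 x, ∃ O ⊆ U, IsOpen O ∧ x ∈ O ∧
    IsPreconnected (O ∩ {y | φ y < φ x}) ∧ IsPreconnected (O ∩ {y | φ x < φ y}) ∧
    ∀ y ∈ O, φ y = φ x → y ∈ closure (O ∩ {y | φ y < φ x}) ∧ y ∈ closure (O ∩ {y | φ x < φ y})

def Lo (φ : ℂ → ℝ) (t : ℝ) (y : ℂ) : Set ℂ := connectedComponentIn {x | φ x < t} y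

def Cross (φ : ℂ → ℝ) (y z : ℂ) : Prop :=
  ∃ x, φ x = 0 ∧ x ∈ closure (Lo φ 0 y) ∧ x ∈ closure (Lo (-φ) 0 z)

theorem Pot.neg {φ : ℂ → ℝ} (h : Pot φ) : Pot (-φ) where
  cont := h.cont.neg
  lo x := by have := h.hi x; simp only [Pi.neg_apply]; linarith
  hi x := by have := h.lo x; simp only [Pi.neg_apply]; linarith
  lim := by
    have := h.lim.neg
    rw [neg_zero] at this
    exact this
  finlo := by
    convert h.finhi using 3
    simp
  finhi := by
    convert h.finlo using 3
    simp [neg_eq_iff_eq_neg]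
  reg x h1 h2 U hU := by
    simp only [Pi.neg_apply] at h1 h2
    obtain ⟨O, a, b, c, d, e, f⟩ := h.reg x (by linarith) (by linarith) U hU
    refine ⟨O, a, b, c, ?_, ?_, ?_⟩
    · simpa using e
    · simpa using d
    · intro y hy hyx
      have := f y hy (by simpa using hyx)
      simpa using this.symm

section
variable {φ : ℂ → ℝ} {t : ℝ} {x y z : ℂ}

theorem Lo_open (h : Pot φ) : IsOpen (Lo φ t y) :=
  (isOpen_lt h.cont continuous_const).connectedComponentIn

theorem Lo_sub : Lo φ t y ⊆ {x | φ x < t} := connectedComponentIn_subset _ _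

theorem Lo_lt (hx : x ∈ Lo φ t y) : φ x < t := by
  have := Lo_sub hx
  exact this

theorem Lo_pos (hx : x ∈ Lo φ t y) : φ y < t := by
  have : (connectedComponentIn {x | φ x < t} y).Nonempty := ⟨x, hx⟩
  have := connectedComponentIn_nonempty_iff.mp this
  exact this

theorem Lo_pre : IsPreconnected (Lo φ t y) := isPreconnected_connectedComponentIn

theorem mem_Lo (hy : φ y < t) : y ∈ Lo φ t y := mem_connectedComponentIn hy

theorem Lo_cl_le (h : Pot φ) (hx : x ∈ closure (Lo φ t y)) : φ x ≤ t := by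
  have : closure (Lo φ t y) ⊆ {x | φ x ≤ t} :=
    closure_minimal (fun x hx => by have := Lo_lt hx; exact this.le) (isClosed_le h.cont continuous_const)
  exact this hx

theorem Lo_cl_lt (hx : x ∈ closure (Lo φ t y)) (hxt : φ x < t) : x ∈ Lo φ t y := by
  have hne : (Lo φ t y).Nonempty := by
    by_contra hh
    rw [not_nonempty_iff_eq_empty] at hh
    rw [hh] at hx; simp at hx
  have hy : φ y < t := Lo_pos hne.some_mem
  have hp : IsPreconnected (insert x (Lo φ t y)) :=
    Lo_pre.subset_closure (subset_insert _ _) (insert_subset hx subset_closure)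
  exact hp.subset_connectedComponentIn (mem_insert_of_mem _ (mem_Lo hy))
    (insert_subset hxt Lo_sub) (mem_insert _ _)

theorem Lo_eq (h : x ∈ Lo φ t y) : Lo φ t y = Lo φ t x := connectedComponentIn_eq h

/-- local structure near a boundary point -/
theorem Lo_loc (h : Pot φ) (h1 : -1 < t) (h2 : t < 1) (hxt : φ x = t)
    (hx : x ∈ closure (Lo φ t y)) :
    ∃ O, IsOpen O ∧ x ∈ O ∧ O ∩ {z | φ z < t} ⊆ Lo φ t y ∧ O ∩ {z | φ z ≤ t} ⊆ closure (Lo φ t y) := by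
  obtain ⟨O, -, hO, hxO, hpre, -, hcl⟩ := h.reg x (by linarith) (by linarith) univ univ_mem
  rw [hxt] at hpre hcl
  obtain ⟨u, huO, hu⟩ := mem_closure_iff.mp hx O hO hxO
  have hsub : O ∩ {z | φ z < t} ⊆ Lo φ t y := by
    rw [Lo_eq hu]
    exact hpre.subset_connectedComponentIn ⟨huO, Lo_sub hu⟩ inter_subset_right
  refine ⟨O, hO, hxO, hsub, ?_⟩
  rintro v ⟨hvO, hv⟩
  rcases lt_or_eq_of_le (show φ v ≤ t from hv) with hlt | heq
  · exact subset_closure (hsub ⟨hvO, hlt⟩)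
  · exact closure_mono hsub (hcl v hvO heq).1

theorem Lo_uniq (h : Pot φ) (h1 : -1 < t) (h2 : t < 1) (hxt : φ x = t)
    (hx : x ∈ closure (Lo φ t y)) (hx' : x ∈ closure (Lo φ t z)) : Lo φ t y = Lo φ t z := by
  obtain ⟨O, hO, hxO, hs, -⟩ := Lo_loc h h1 h2 hxt hx
  obtain ⟨u, huO, hu⟩ := mem_closure_iff.mp hx' O hO hxO
  rw [Lo_eq hu, Lo_eq (hs ⟨huO, Lo_sub hu⟩)]

theorem Lo_exists (h : Pot φ) (h1 : -1 < t) (h2 : t < 1) (hxt : φ x = t) :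
    ∃ y, φ y < t ∧ x ∈ closure (Lo φ t y) := by
  obtain ⟨O, -, hO, hxO, hpre, -, hcl⟩ := h.reg x (by linarith) (by linarith) univ univ_mem
  rw [hxt] at hpre hcl
  have hx := (hcl x hxO hxt).1
  obtain ⟨u, -, hu⟩ := mem_closure_iff.mp hx univ isOpen_univ (mem_univ _)
  exact ⟨u, hu.2, closure_mono (hpre.subset_connectedComponentIn hu inter_subset_right) hx⟩

theorem front_meet {S O : Set ℂ} (hS : IsPreconnected S) (hO : IsOpen O) (h1 : x ∈ S) (h1' : x ∈ O)
    (h2 : y ∈ S) (h2' : y ∉ O) : ∃ w ∈ S, w ∈ frontier O := by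
  by_contra hh
  push Not at hh
  have := hS O (closure O)ᶜ hO isClosed_closure.isOpen_compl (by
    intro w hw
    by_cases hwO : w ∈ O
    · exact Or.inl hwO
    · right
      intro hc
      apply hh w hw
      rw [hO.frontier_eq]
      exact ⟨hc, hwO⟩) ⟨x, h1, h1'⟩ ⟨y, h2, fun hc => hh y h2 (by rw [hO.frontier_eq]; exact ⟨hc, h2'⟩)⟩
  obtain ⟨w, -, hw1, hw2⟩ := this
  exact hw2 (subset_closure hw1)

theorem Sep (h : Pot φ) (h1 : -1 < t) (h2 : t < 1) (hb : Bornology.IsBounded (Lo φ t y)) :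
    ∃ O, IsOpen O ∧ Lo φ t y ⊆ O ∧ Bornology.IsBounded O ∧
      (∀ x ∈ O, φ x ≤ t → x ∈ closure (Lo φ t y)) ∧ ∃ δ > 0, ∀ x ∈ frontier O, t + δ ≤ φ x := by
  have hK : IsCompact (closure (Lo φ t y)) := hb.isCompact_closure
  have hloc : ∀ x ∈ closure (Lo φ t y), ∃ O, IsOpen O ∧ x ∈ O ∧
      O ∩ {z | φ z ≤ t} ⊆ closure (Lo φ t y) := by
    intro x hx
    rcases lt_or_eq_of_le (Lo_cl_le h hx) with hlt | heq
    · exact ⟨Lo φ t y, Lo_open h, Lo_cl_lt hx hlt, inter_subset_left.trans subset_closure⟩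
    · obtain ⟨O, a, b, _, c⟩ := Lo_loc h h1 h2 heq hx
      exact ⟨O, a, b, c⟩
  choose! f hf using hloc
  obtain ⟨V, hV, hKV, hVU, hVc⟩ := exists_open_between_and_isCompact_closure hK
    (isOpen_biUnion fun x hx => (hf x hx).1) (fun x hx => mem_biUnion hx (hf x hx).2.1)
  have hU : ∀ x ∈ closure V, φ x ≤ t → x ∈ closure (Lo φ t y) := by
    intro x hx hxt
    obtain ⟨w, hw, hxw⟩ := mem_iUnion₂.mp (hVU hx)
    exact (hf w hw).2.2 ⟨hxw, hxt⟩
  refine ⟨V, hV, subset_closure.trans hKV, hVc.isBounded.subset subset_closure,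
    fun x hx => hU x (subset_closure hx), ?_⟩
  have hfc : IsCompact (frontier V) := hVc.of_isClosed_subset isClosed_frontier
    frontier_subset_closure
  rcases (frontier V).eq_empty_or_nonempty with he | hne
  · exact ⟨1, one_pos, by simp [he]⟩
  · obtain ⟨m, hm, hmin⟩ := hfc.exists_isMinOn hne h.cont.continuousOn
    have : t < φ m := by
      by_contra hh
      have := hKV (hU m (frontier_subset_closure hm) (not_lt.mp hh))
      rw [hV.frontier_eq] at hm
      exact hm.2 this
    exact ⟨φ m - t, by linarith, fun x hx => by have : φ m ≤ φ x := hmin hx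
                                                linarith⟩

theorem cpt_le (h : Pot φ) (ht : t < 0) : IsCompact {x | φ x ≤ t} := by
  have : ∀ᶠ x in cocompact ℂ, t < φ x := h.lim.eventually (lt_mem_nhds ht)
  obtain ⟨K, hK, hs⟩ := mem_cocompact.mp this
  refine hK.of_isClosed_subset (isClosed_le h.cont continuous_const) ?_
  intro x hx
  by_contra hh
  have h2 := hs hh
  simp only [mem_setOf_eq] at h2 hx
  linarith

theorem T1 (h : Pot φ) (hy : φ y < 0) : ∃ a ∈ Lo φ 0 y, φ a = -1 := by
  have hc : IsCompact (closure (Lo φ 0 y) ∩ {x | φ x ≤ φ y}) :=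
    (cpt_le h hy).inter_left isClosed_closure
  obtain ⟨m, hm, hmin⟩ := hc.exists_isMinOn ⟨y, subset_closure (mem_Lo hy), by simp⟩
    h.cont.continuousOn
  have hm0 : φ m < 0 := lt_of_le_of_lt hm.2 hy
  have hmL : m ∈ Lo φ 0 y := Lo_cl_lt hm.1 hm0
  refine ⟨m, hmL, ?_⟩
  by_contra hne
  have hlo : -1 < φ m := lt_of_le_of_ne (h.lo m) (Ne.symm hne)
  obtain ⟨O, hOU, hO, hxO, -, -, hcl⟩ := h.reg m hlo (by linarith) _ ((Lo_open h).mem_nhds hmL)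
  obtain ⟨u, -, hu⟩ := mem_closure_iff.mp (hcl m hxO rfl).1 univ isOpen_univ (mem_univ _)
  have hum : φ u < φ m := hu.2
  have h3 : φ m ≤ φ u := hmin ⟨subset_closure (hOU hu.1), hum.le.trans hm.2⟩
  linarith

theorem Lo_lower (h : Pot φ) (hx : x ∈ Lo φ t y) : ∃ s < t, ∀ r, s < r → x ∈ Lo φ r y := by
  have hy : φ y < t := Lo_pos hx
  have hpc : IsPathConnected (Lo φ t y) :=
    (Lo_open h).isConnected_iff_isPathConnected.mp ⟨⟨x, hx⟩, Lo_pre⟩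
  obtain ⟨γ, hγ⟩ := hpc.joinedIn y (mem_Lo hy) x hx
  have hc : IsCompact (range γ) := isCompact_range γ.continuous
  obtain ⟨m, hm, hmax⟩ := hc.exists_isMaxOn ⟨_, mem_range_self 0⟩ h.cont.continuousOn
  obtain ⟨s, rfl⟩ := hm
  refine ⟨φ (γ s), Lo_sub (hγ s), fun r hr => ?_⟩
  have hp : IsPreconnected (range γ) := isPreconnected_range γ.continuous
  refine hp.subset_connectedComponentIn ⟨0, γ.source⟩ ?_ ⟨1, γ.target⟩
  intro w hw
  exact lt_of_le_of_lt (hmax hw) hr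

theorem T2 (h : Pot φ) (hy : φ y = -1) (hz : φ z = -1) (hzy : z ∈ Lo φ 0 y) : z = y := by
  by_contra hne
  obtain ⟨ε, hε, hball⟩ : ∃ ε > 0, ∀ w ∈ Metric.closedBall y ε, φ w = -1 → w = y := by
    have : ({x | φ x = -1} \ {y})ᶜ ∈ 𝓝 y :=
      (h.finlo.sdiff).isClosed.isOpen_compl.mem_nhds (by simp)
    obtain ⟨ε, hε, hs⟩ := Metric.nhds_basis_closedBall.mem_iff.mp this
    refine ⟨ε, hε, fun w hw hw1 => ?_⟩
    by_contra hh
    exact hs hw ⟨hw1, hh⟩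
  have hsph : ∃ m > -1, ∀ w ∈ frontier (Metric.ball y ε), m ≤ φ w := by
    have hsub : frontier (Metric.ball y ε) ⊆ Metric.sphere y ε := Metric.frontier_ball_subset_sphere
    have hc : IsCompact (frontier (Metric.ball y ε)) :=
      (isCompact_sphere y ε).of_isClosed_subset isClosed_frontier hsub
    rcases (frontier (Metric.ball y ε)).eq_empty_or_nonempty with he | hn
    · exact ⟨0, by norm_num, by simp [he]⟩
    · obtain ⟨m, hm, hmin⟩ := hc.exists_isMinOn hn h.cont.continuousOn
      refine ⟨φ m, ?_, fun w hw => hmin hw⟩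
      refine lt_of_le_of_ne (h.lo m) (fun hh => ?_)
      have h3 := hball m (Metric.sphere_subset_closedBall (hsub hm)) hh.symm
      have := hsub hm
      rw [h3] at this
      simp at this
      exact hε.ne this
  obtain ⟨m, hm, hms⟩ := hsph
  have hzb : z ∉ Metric.ball y ε := fun hh => hne (hball z (Metric.ball_subset_closedBall hh) hz)
  set S : Set ℝ := {t | z ∈ Lo φ t y} with hS
  have hSm : ∀ t ∈ S, m < t := by
    intro t ht
    have hyt : φ y < t := Lo_pos ht
    obtain ⟨w, hw, hwf⟩ := front_meet (x := y) (y := z) (Lo_pre (φ := φ) (t := t) (y := y))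
      Metric.isOpen_ball (mem_Lo hyt) (Metric.mem_ball_self hε) ht hzb
    exact lt_of_le_of_lt (hms w hwf) (Lo_sub hw)
  have hbdd : BddBelow S := ⟨m, fun t ht => (hSm t ht).le⟩
  have h0 : (0:ℝ) ∈ S := hzy
  set T := sInf S with hT
  have hTm : m ≤ T := le_csInf ⟨0, h0⟩ fun t ht => (hSm t ht).le
  have hTS : T ∉ S := by
    intro hh
    obtain ⟨s, hs, hs'⟩ := Lo_lower h hh
    have : T ≤ (s + T) / 2 := csInf_le hbdd (hs' _ (by linarith))
    linarith
  have hT0 : T < 0 := lt_of_le_of_ne (csInf_le hbdd h0) (fun hh => hTS (by rw [hh]; exact h0))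
  have hb : Bornology.IsBounded (Lo φ T y) :=
    (cpt_le h hT0).isBounded.subset (fun w hw => by have := Lo_lt hw; exact this.le)
  obtain ⟨O, hO, hLO, -, hO2, δ, hδ, hfr⟩ := Sep h (by linarith) (by linarith) hb
  have hzO : z ∉ O := by
    intro hh
    exact hTS (Lo_cl_lt (hO2 z hh (by linarith)) (by linarith))
  obtain ⟨t, htS, ht⟩ := exists_lt_of_csInf_lt ⟨0, h0⟩ (show sInf S < T + δ by linarith)
  have hyt : φ y < t := Lo_pos htS
  obtain ⟨w, hw, hwf⟩ := front_meet (x := y) (y := z) (Lo_pre (φ := φ) (t := t) (y := y))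
      hO (mem_Lo hyt) (hLO (mem_Lo (by linarith))) htS hzO
  have := hfr w hwf
  have := Lo_sub hw
  simp only [mem_setOf_eq] at this
  linarith

theorem conn_far {r : ℝ} (hr : 0 ≤ r) : IsPreconnected (Metric.closedBall (0:ℂ) r)ᶜ := by
  have h1 : IsPreconnected ((Ioi r) ×ˢ (Metric.sphere (0:ℂ) 1)) :=
    isPreconnected_Ioi.prod (isPreconnected_sphere (by simp) 0 1)
  have h2 := h1.image (fun p : ℝ × ℂ => (p.1 : ℂ) * p.2) (by fun_prop)
  convert h2 using 1
  ext x
  simp only [mem_compl_iff, Metric.mem_closedBall, dist_zero_right, not_le, mem_image, mem_prod,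
    mem_Ioi, mem_sphere_iff_norm, sub_zero, Prod.exists]
  constructor
  · intro hx
    have hx0 : (‖x‖ : ℂ) ≠ 0 := by
      have : ‖x‖ ≠ 0 := by linarith
      exact_mod_cast this
    refine ⟨‖x‖, x / ‖x‖, ⟨hx, ?_⟩, by field_simp⟩
    rw [norm_div, Complex.norm_real, norm_norm, div_self]
    exact_mod_cast hx0
  · rintro ⟨a, b, ⟨ha, hb⟩, rfl⟩
    rw [norm_mul, hb, Complex.norm_real, Real.norm_eq_abs, abs_of_pos (by linarith)]
    linarith

theorem unb_of_mem (h : Pot φ) {t0 : ℝ} (ht : 0 < t0) :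
    ∃ r : ℝ, ∀ t, t0 ≤ t → ∀ x ∈ Lo φ t y, r < ‖x‖ → ¬ Bornology.IsBounded (Lo φ t y) := by
  have : ∀ᶠ x in cocompact ℂ, φ x < t0 := h.lim.eventually (gt_mem_nhds ht)
  rw [← Metric.cobounded_eq_cocompact] at this
  obtain ⟨r, -, hr⟩ := (Metric.hasBasis_cobounded_compl_closedBall (0:ℂ)).mem_iff.mp this
  refine ⟨max r 0, fun t ht0 x hx hrx hb => ?_⟩
  have hsub : (Metric.closedBall (0:ℂ) (max r 0))ᶜ ⊆ Lo φ t y := by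
    rw [Lo_eq hx]
    refine (conn_far (le_max_right _ _)).subset_connectedComponentIn (by simpa using hrx) ?_
    intro w hw
    refine lt_of_lt_of_le (show φ w < t0 from hr ?_) ht0
    simp only [mem_compl_iff, Metric.mem_closedBall, dist_zero_right, not_le, max_lt_iff] at hw ⊢
    exact hw.1
  obtain ⟨R, hR⟩ := (Metric.isBounded_iff_subset_closedBall 0).mp (hb.subset hsub)
  set M := max (max r 0) R + 1 with hM
  have h1 : max r 0 < M := by have := le_max_left (max r 0) R; linarith
  have h2 : R < M := by have := le_max_right (max r 0) R; linarith
  have hM0 : 0 ≤ M := (le_max_right r 0).trans h1.le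
  have h3 : (M : ℂ) ∈ (Metric.closedBall (0:ℂ) (max r 0))ᶜ := by
    simp only [mem_compl_iff, Metric.mem_closedBall, dist_zero_right, not_le, Complex.norm_real,
      Real.norm_eq_abs, abs_of_nonneg hM0]
    exact h1
  have h4 := hR h3
  simp only [Metric.mem_closedBall, dist_zero_right, Complex.norm_real,
      Real.norm_eq_abs, abs_of_nonneg hM0] at h4
  linarith

theorem T5 (h : Pot φ) (hy : φ y = -1) : ¬ Bornology.IsBounded (Lo φ 0 y) := by
  intro hb
  set S : Set ℝ := {t | ¬ Bornology.IsBounded (Lo φ t y)} with hS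
  have h1 : (1:ℝ) ∈ S := by
    have hc : IsConnected ({x | φ x = 1}ᶜ) :=
      h.finhi.countable.isConnected_compl_of_one_lt_rank (by simp)
    have he : {x | φ x = 1}ᶜ ⊆ Lo φ 1 y := by
      refine hc.isPreconnected.subset_connectedComponentIn (by simp [hy]; norm_num) ?_
      intro w hw
      exact lt_of_le_of_ne (h.hi w) hw
    intro hbb
    have : Bornology.IsBounded (univ : Set ℂ) := by
      rw [← union_compl_self {x | φ x = 1}]
      exact h.finhi.isBounded.union (hbb.subset he)
    exact NormedSpace.unbounded_univ ℝ ℂ this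
  have hmono : ∀ s t, s ≤ t → s ∈ S → t ∈ S := by
    intro s t hst hs hb'
    exact hs (hb'.subset (connectedComponentIn_mono _ (fun w (hw : φ w < s) => lt_of_lt_of_le hw hst)))
  have hbd : ∀ t ∈ S, (0:ℝ) < t := by
    intro t ht
    by_contra hh
    exact (hmono t 0 (not_lt.mp hh) ht) hb
  have hbdd : BddBelow S := ⟨0, fun t ht => (hbd t ht).le⟩
  set T := sInf S
  have hT0 : 0 ≤ T := le_csInf ⟨1, h1⟩ fun t ht => (hbd t ht).le
  have hTS : T ∉ S := by
    intro hT
    have hTpos := hbd T hT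
    -- far points
    obtain ⟨r, hr⟩ := unb_of_mem (y := y) h (half_pos hTpos)
    have : ∃ x ∈ Lo φ T y, r < ‖x‖ := by
      by_contra hh
      push Not at hh
      exact hT ((Metric.isBounded_closedBall (x := (0:ℂ)) (r := r)).subset
        (fun x hx => by simpa using hh x hx))
    obtain ⟨x, hx, hrx⟩ := this
    obtain ⟨s, hs, hs'⟩ := Lo_lower h hx
    set u := max ((s + T) / 2) (T / 2) with hu
    have huT : u < T := max_lt (by linarith) (by linarith)
    have hus : s < u := lt_of_lt_of_le (by linarith) (le_max_left ((s + T) / 2) (T / 2))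
    have hu2 : T / 2 ≤ u := le_max_right _ _
    have h5 : T ≤ u := csInf_le hbdd (hr u hu2 x (hs' u hus) hrx)
    linarith
  have hT1 : T < 1 := lt_of_le_of_ne (csInf_le hbdd h1) (fun hh => hTS (by rw [hh]; exact h1))
  obtain ⟨O, hO, hLO, hOb, hO2, δ, hδ, hfr⟩ := Sep h (by linarith) hT1 (not_not.mp hTS)
  obtain ⟨t, htS, ht⟩ := exists_lt_of_csInf_lt ⟨1, h1⟩ (show sInf S < T + δ by linarith)
  have htp := hbd t htS
  apply htS
  refine hOb.subset (fun z hz => ?_)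
  by_contra hzO
  obtain ⟨w, hw, hwf⟩ := front_meet (x := y) (y := z) (Lo_pre (φ := φ) (t := t) (y := y))
      hO (mem_Lo (by linarith)) (hLO (mem_Lo (by linarith))) hz hzO
  have := hfr w hwf
  have := Lo_lt hw
  linarith

theorem Cross.neg (h : Cross φ y z) : Cross (-φ) z y := by
  obtain ⟨x, h1, h2, h3⟩ := h
  exact ⟨x, by simp [h1], h3, by rwa [neg_neg]⟩

/-- a neighbourhood of a zero point sees exactly one component on each side -/
theorem near_zero (h : Pot φ) (hx0 : φ x = 0) : ∃ y z, φ y = -1 ∧ φ z = 1 ∧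
    x ∈ closure (Lo φ 0 y) ∧ x ∈ closure (Lo (-φ) 0 z) := by
  have key : ∀ φ : ℂ → ℝ, Pot φ → φ x = 0 → ∃ y, φ y = -1 ∧ x ∈ closure (Lo φ 0 y) := by
    intro φ h hx0
    obtain ⟨y, hy, hxy⟩ := Lo_exists h (by norm_num) (by norm_num) hx0
    obtain ⟨a, ha, ha1⟩ := T1 h hy
    exact ⟨a, ha1, by rwa [← Lo_eq ha]⟩
  obtain ⟨y, hy, hxy⟩ := key φ h hx0
  obtain ⟨z, hz, hxz⟩ := key (-φ) h.neg (by simp [hx0])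
  exact ⟨y, z, hy, by simpa [neg_eq_iff_eq_neg] using hz, hxy, hxz⟩

/-- connectedness -/
theorem T3 (h : Pot φ) (P : ℂ → Prop) (hP : ∀ y z, φ y = -1 → φ z = 1 → Cross φ y z → (P y ↔ P z))
    (hne : ∃ y, (φ y = -1 ∨ φ y = 1) ∧ P y) : ∀ y, (φ y = -1 ∨ φ y = 1) → P y := by
  set W : Set ℂ := (⋃ y ∈ {y | φ y = -1 ∧ P y}, closure (Lo φ 0 y)) ∪
    (⋃ y ∈ {y | φ y = 1 ∧ P y}, closure (Lo (-φ) 0 y)) with hW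
  have memL : ∀ y, φ y = -1 → P y → closure (Lo φ 0 y) ⊆ W := fun y hy hp x hx =>
    Or.inl (mem_biUnion (show y ∈ {y | φ y = -1 ∧ P y} from ⟨hy, hp⟩) hx)
  have memR : ∀ y, φ y = 1 → P y → closure (Lo (-φ) 0 y) ⊆ W := fun y hy hp x hx =>
    Or.inr (mem_biUnion (show y ∈ {y | φ y = 1 ∧ P y} from ⟨hy, hp⟩) hx)
  have hcl : IsClosed W := by
    refine IsClosed.union ?_ ?_
    · exact (h.finlo.subset (fun y hy => hy.1)).isClosed_biUnion fun _ _ => isClosed_closure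
    · exact (h.finhi.subset (fun y hy => hy.1)).isClosed_biUnion fun _ _ => isClosed_closure
  have hop : IsOpen W := by
    rw [isOpen_iff_mem_nhds]
    intro x hx
    rcases lt_trichotomy (φ x) 0 with hx0 | hx0 | hx0
    · rcases hx with hx | hx
      · obtain ⟨y, hy, hxy⟩ := mem_iUnion₂.mp hx
        exact mem_of_superset ((Lo_open h).mem_nhds (Lo_cl_lt hxy hx0))
          (subset_closure.trans (memL y hy.1 hy.2))
      · obtain ⟨y, hy, hxy⟩ := mem_iUnion₂.mp hx
        have := Lo_cl_le h.neg hxy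
        simp at this; linarith
    · obtain ⟨y, z, hy, hz, hxy, hxz⟩ := near_zero h hx0
      have hyz : P y ↔ P z := hP y z hy hz ⟨x, hx0, hxy, hxz⟩
      have hPy : P y := by
        rcases hx with hx | hx
        · obtain ⟨y', hy', hxy'⟩ := mem_iUnion₂.mp hx
          have := Lo_uniq h (by norm_num) (by norm_num) hx0 hxy hxy'
          have : y = y' := T2 h hy'.1 hy (this ▸ mem_Lo (by linarith))
          rw [this]; exact hy'.2
        · obtain ⟨y', hy', hxy'⟩ := mem_iUnion₂.mp hx
          have := Lo_uniq h.neg (by norm_num) (by norm_num) (by simp [hx0]) hxz hxy'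
          have : z = y' := T2 h.neg (by simp [hy'.1]) (by simp [hz])
            (this ▸ mem_Lo (by simp [hz]))
          rw [hyz, this]; exact hy'.2
      obtain ⟨O1, hO1, hx1, -, hs1⟩ := Lo_loc h (by norm_num) (by norm_num) hx0 hxy
      obtain ⟨O2, hO2, hx2, -, hs2⟩ := Lo_loc h.neg (by norm_num) (by norm_num) (by simp [hx0]) hxz
      refine mem_of_superset ((hO1.inter hO2).mem_nhds ⟨hx1, hx2⟩) ?_
      rintro w ⟨hw1, hw2⟩
      rcases le_total (φ w) 0 with hw | hw
      · exact memL y hy hPy (hs1 ⟨hw1, hw⟩)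
      · exact memR z hz (hyz.mp hPy) (hs2 ⟨hw2, by simpa using hw⟩)
    · rcases hx with hx | hx
      · obtain ⟨y, hy, hxy⟩ := mem_iUnion₂.mp hx
        have := Lo_cl_le h hxy
        linarith
      · obtain ⟨y, hy, hxy⟩ := mem_iUnion₂.mp hx
        exact mem_of_superset ((Lo_open h.neg).mem_nhds (Lo_cl_lt hxy (by simpa using hx0)))
          (subset_closure.trans (memR y hy.1 hy.2))
  have hWu : W = univ := by
    refine IsClopen.eq_univ ⟨hcl, hop⟩ ?_
    obtain ⟨y, hy | hy, hPy⟩ := hne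
    · exact ⟨y, memL y hy hPy (subset_closure (mem_Lo (by linarith)))⟩
    · exact ⟨y, memR y hy hPy (subset_closure (mem_Lo (by simp [hy])))⟩
  rintro y hy
  have hyW : y ∈ W := by rw [hWu]; trivial
  rcases hyW with hyW | hyW
  · obtain ⟨y', hy', hxy'⟩ := mem_iUnion₂.mp hyW
    have h1 := Lo_cl_le h hxy'
    have hy1 : φ y = -1 := by
      rcases hy with hy | hy
      · exact hy
      · linarith
    have := T2 h hy'.1 hy1 (Lo_cl_lt hxy' (by linarith))
    rw [this]; exact hy'.2
  · obtain ⟨y', hy', hxy'⟩ := mem_iUnion₂.mp hyW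
    have h1 := Lo_cl_le h.neg hxy'
    simp only [Pi.neg_apply] at h1
    have hy1 : φ y = 1 := by
      rcases hy with hy | hy
      · linarith
      · exact hy
    have := T2 h.neg (by simp [hy'.1]) (by simp [hy1]) (Lo_cl_lt hxy' (by simp [hy1]))
    rw [this]; exact hy'.2

theorem int_const {S : Set ℂ} (hS : IsPreconnected S) {g : ℂ → ℝ} (hg : ContinuousOn g S)
    (hi : ∀ x ∈ S, ∃ n : ℤ, g x = n) {u v : ℂ} (hu : u ∈ S) (hv : v ∈ S) : g u = g v := by
  by_contra hne
  wlog hlt : g u < g v generalizing u v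
  · exact this hv hu (Ne.symm hne) (lt_of_le_of_ne (not_lt.mp hlt) (Ne.symm hne))
  obtain ⟨n, hn⟩ := hi u hu
  obtain ⟨m, hm⟩ := hi v hv
  have hnm : n < m := by rw [hn, hm] at hlt; exact_mod_cast hlt
  have hnm' : (n:ℝ) + 1 ≤ m := by exact_mod_cast hnm
  obtain ⟨w, hw, hgw⟩ := hS.intermediate_value hu hv hg
    (show (n:ℝ) + 1/2 ∈ Icc (g u) (g v) from ⟨by linarith, by linarith⟩)
  obtain ⟨k, hk⟩ := hi w hw
  rw [hk] at hgw
  have h1 : (n:ℝ) < k := by linarith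
  have h2 : (k:ℝ) < n + 1 := by linarith
  have h1' : n < k := by exact_mod_cast h1
  have h2' : k < n + 1 := by exact_mod_cast h2
  omega

theorem T4 (h : Pot φ) {a b : ℂ} (ha : φ a = -1) (hb : φ b = 1) (hab : Cross φ a b) :
    ∃ γ : ℂ → ℝ, γ a ≠ γ b ∧ ∀ y z, φ y = -1 → φ z = 1 → Cross φ y z → ¬ (y = a ∧ z = b) →
      γ y = γ z := by
  set V := Lo (-φ) 0 b with hV
  have hVo : IsOpen V := Lo_open h.neg
  set Γ := closure (Lo φ 0 a) ∩ closure V with hΓ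
  have hbV : b ∈ V := mem_Lo (by simp [hb])
  have hΓ0 : ∀ x ∈ Γ, φ x = 0 := by
    rintro x ⟨h1, h2⟩
    have h1 := Lo_cl_le h h1
    have h2 := Lo_cl_le h.neg h2
    simp at h2; linarith
  have hF0 : ∀ x ∈ frontier V, φ x = 0 := by
    intro x hx
    rw [hVo.frontier_eq] at hx
    have h2 := Lo_cl_le h.neg hx.1
    by_contra hne
    exact hx.2 (Lo_cl_lt hx.1 (lt_of_le_of_ne h2 (by simpa using hne)))
  set E := (frontier V \ Γ) ∪ {b} with hE
  have hΓc : IsClosed Γ := isClosed_closure.inter isClosed_closure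
  have hEc : IsClosed E := by
    refine IsClosed.union ?_ isClosed_singleton
    rw [← isOpen_compl_iff, isOpen_iff_mem_nhds]
    intro x hx
    by_cases hxF : x ∈ frontier V
    · have hxΓ : x ∈ Γ := by by_contra hh; exact hx ⟨hxF, hh⟩
      obtain ⟨O, hO, hxO, -, hs⟩ := Lo_loc h (by norm_num) (by norm_num) (hΓ0 x hxΓ) hxΓ.1
      refine mem_of_superset (hO.mem_nhds hxO) ?_
      rintro w hw ⟨hw1, hw2⟩
      exact hw2 ⟨hs ⟨hw, (hF0 w hw1).le⟩, frontier_subset_closure hw1⟩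
    · exact mem_of_superset (isClosed_frontier.isOpen_compl.mem_nhds hxF) (fun w hw hw' => hw hw'.1)
  have hΓn : Γ.Nonempty := by
    obtain ⟨x, -, h2, h3⟩ := hab
    exact ⟨x, h2, h3⟩
  have hEn : E.Nonempty := ⟨b, Or.inr rfl⟩
  have hdisj : ∀ x ∈ E, x ∉ Γ := by
    rintro x (hx | hx) hxΓ
    · exact hx.2 hxΓ
    · have := hΓ0 x hxΓ
      rw [mem_singleton_iff.mp hx, hb] at this
      norm_num at this
  set ρ : ℂ → ℝ := fun x => Metric.infDist x E / (Metric.infDist x E + Metric.infDist x Γ) with hρ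
  have hden : ∀ x, Metric.infDist x E + Metric.infDist x Γ ≠ 0 := by
    intro x hx
    have h1 : 0 ≤ Metric.infDist x E := Metric.infDist_nonneg
    have h2 : 0 ≤ Metric.infDist x Γ := Metric.infDist_nonneg
    have h3 : x ∈ E := (hEc.mem_iff_infDist_zero hEn).mpr (by linarith)
    have h4 : x ∈ Γ := (hΓc.mem_iff_infDist_zero hΓn).mpr (by linarith)
    exact hdisj x h3 h4
  have hρc : Continuous ρ :=
    (Metric.continuous_infDist_pt E).div ((Metric.continuous_infDist_pt E).add
      (Metric.continuous_infDist_pt Γ)) hden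
  have hρE : ∀ x ∈ E, ρ x = 0 := by
    intro x hx
    simp [hρ, (hEc.mem_iff_infDist_zero hEn).mp hx]
  have hρΓ : ∀ x ∈ Γ, ρ x = 1 := by
    intro x hx
    have := hden x
    simp only [hρ]
    rw [(hΓc.mem_iff_infDist_zero hΓn).mp hx] at this ⊢
    rw [add_zero] at this ⊢
    exact div_self this
  have hρF : ∀ x ∈ frontier V, (ρ x : AddCircle (1:ℝ)) = 0 := by
    intro x hx
    by_cases hxΓ : x ∈ Γ
    · rw [hρΓ x hxΓ]; exact AddCircle.coe_period 1
    · rw [hρE x (Or.inl ⟨hx, hxΓ⟩)]; rfl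
  classical
  set Φ : ℂ → AddCircle (1:ℝ) := V.piecewise (fun x => (ρ x : AddCircle (1:ℝ))) (fun _ => 0) with hΦ
  have hΦc : Continuous Φ := by
    refine Continuous.piecewise ?_ ?_ continuous_const
    · intro x hx; exact hρF x hx
    · exact (AddCircle.continuous_mk' 1).comp hρc
  have hcov : IsCoveringMap ((↑) : ℝ → AddCircle (1:ℝ)) := AddCircle.isCoveringMap_coe 1
  obtain ⟨e₀, he₀⟩ := QuotientAddGroup.mk_surjective (Φ 0)
  obtain ⟨g, ⟨-, hg⟩, -⟩ := hcov.existsUnique_continuousMap_lifts ⟨Φ, hΦc⟩ 0 e₀ he₀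
  have hg' : ∀ x, ((g x : ℝ) : AddCircle (1:ℝ)) = Φ x := fun x => congrFun hg x
  have hzero : ∀ r : ℝ, (r : AddCircle (1:ℝ)) = 0 → ∃ n : ℤ, r = n := by
    intro r hr
    obtain ⟨n, hn⟩ := (AddCircle.coe_eq_zero_iff 1).mp hr
    exact ⟨n, by rw [← hn]; simp⟩
  have hoff : ∀ x, x ∉ V → ∃ n : ℤ, g x = n := by
    intro x hx
    apply hzero
    rw [hg' x, hΦ, piecewise_eq_of_notMem _ _ _ hx]
  have hon : ∀ x ∈ closure V, ∃ n : ℤ, g x - ρ x = n := by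
    intro x hx
    apply hzero
    rw [AddCircle.coe_sub, hg' x, hΦ]
    by_cases hxV : x ∈ V
    · rw [piecewise_eq_of_mem _ _ _ hxV, sub_self]
    · rw [piecewise_eq_of_notMem _ _ _ hxV, hρF x (by rw [hVo.frontier_eq]; exact ⟨hx, hxV⟩), sub_self]
  -- lower components
  have hA : ∀ y, φ y = -1 → ∀ x ∈ closure (Lo φ 0 y), g x = g y := by
    intro y hy x hx
    refine int_const (S := closure (Lo φ 0 y)) Lo_pre.closure g.continuous.continuousOn ?_ hx
      (subset_closure (mem_Lo (by linarith)))
    intro w hw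
    apply hoff
    intro hwV
    have h1 := Lo_cl_le h hw
    have h2 := Lo_lt hwV
    simp at h2; linarith
  have hB : ∀ z, φ z = 1 → z ≠ b → ∀ x ∈ closure (Lo (-φ) 0 z), g x = g z := by
    intro z hz hzb x hx
    refine int_const (S := closure (Lo (-φ) 0 z)) Lo_pre.closure g.continuous.continuousOn ?_ hx
      (subset_closure (mem_Lo (by simp [hz])))
    intro w hw
    apply hoff
    intro hwV
    have h2 := Lo_cl_lt hw (Lo_lt hwV)
    apply hzb
    refine T2 h.neg (by simp [hb]) (by simp [hz]) ?_
    have : Lo (-φ) 0 b = Lo (-φ) 0 z := by rw [Lo_eq h2, Lo_eq hwV]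
    rw [this]; exact mem_Lo (by simp [hz])
  have hVV : ∀ x ∈ closure V, g x - ρ x = g b - ρ b := by
    intro x hx
    exact int_const (S := closure V) (g := fun x => g x - ρ x) Lo_pre.closure
      ((g.continuous.sub hρc).continuousOn) hon hx (subset_closure hbV)
  have hρb : ρ b = 0 := hρE b (Or.inr rfl)
  refine ⟨g, ?_, ?_⟩
  · obtain ⟨x, hx⟩ := hΓn
    have h1 := hA a ha x hx.1
    have h2 := hVV x hx.2
    rw [hρΓ x hx, hρb] at h2
    intro hh; rw [hh] at h1; linarith
  · rintro y z hy hz ⟨x, hx0, hxy, hxz⟩ hne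
    by_cases hzb : z = b
    · rw [hzb] at hxz ⊢
      have hyne : y ≠ a := fun hh => hne ⟨hh, hzb⟩
      have hxE : x ∈ E := by
        left
        refine ⟨?_, ?_⟩
        · rw [hVo.frontier_eq]
          refine ⟨hxz, fun hh => ?_⟩
          have := Lo_lt hh
          simp [hx0] at this
        · intro hxΓ
          have := Lo_uniq h (by norm_num) (by norm_num) hx0 hxy hxΓ.1
          exact hyne (T2 h ha hy (this ▸ mem_Lo (by linarith)))
      have h1 := hA y hy x hxy
      have h2 := hVV x hxz
      rw [hρE x hxE, hρb] at h2
      linarith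
    · rw [← hA y hy x hxy, ← hB z hz hzb x hxz]
end
end Zan

open Set Filter Topology

namespace Zan

section cfg
variable {ι : Type*} [Fintype ι]

open Classical in
def CfgL (c : ι → ℂ) (w : ι → ℝ) (L : ℂ) : Prop :=
  L ≠ 0 ∧ ∀ k, (w k : ℂ) * ∏ l ∈ Finset.univ.erase k, (c k - c l) = L

def Cfg (c : ι → ℂ) (w : ι → ℝ) : Prop := ∃ L, CfgL c w L

variable {c : ι → ℂ} {w : ι → ℝ} {L : ℂ}

theorem CfgL.inj (h : CfgL c w L) : Function.Injective c := by
  classical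
  intro k l hkl
  by_contra hne
  apply h.1
  rw [← h.2 k, Finset.prod_eq_zero (i := l) (by simp [Ne.symm hne]) (by simp [hkl]), mul_zero]

theorem CfgL.w_ne (h : CfgL c w L) (k : ι) : w k ≠ 0 := by
  intro hk
  apply h.1
  rw [← h.2 k, hk]; simp

open Polynomial in
theorem CfgL.sum_eval (h : CfgL c w L) {P : ℂ[X]} (hP : P.degree < Fintype.card ι) :
    ∑ k, (w k : ℂ) * P.eval (c k) = L * P.coeff (Fintype.card ι - 1) := by
  classical
  have := Lagrange.coeff_eq_sum (s := Finset.univ) (v := c) (P := P) h.inj.injOn (by simpa using hP)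
  rw [Finset.card_univ] at this
  rw [this, Finset.mul_sum]
  refine Finset.sum_congr rfl fun k _ => ?_
  have h2 := h.2 k
  have h3 : ∏ l ∈ Finset.univ.erase k, (c k - c l) ≠ 0 := by
    intro h0; apply h.1; rw [← h2]
    have : ∏ l ∈ Finset.univ.erase k, (c k - c l) = 0 := h0
    convert mul_zero _
  have h2' : (w k : ℂ) * ∏ l ∈ Finset.univ.erase k, (c k - c l) = L := by convert h2
  rw [← h2']
  field_simp

theorem CfgL.pow (h : CfgL c w L) {j : ℕ} (hj : j + 1 < Fintype.card ι) :
    ∑ k, (w k : ℂ) * c k ^ j = 0 := by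
  have := h.sum_eval (P := Polynomial.X ^ j) (by
    rw [Polynomial.degree_X_pow]; exact_mod_cast (by omega))
  simp only [Polynomial.eval_pow, Polynomial.eval_X, Polynomial.coeff_X_pow] at this
  rw [this, if_neg (by omega), mul_zero]

theorem CfgL.pow_top (h : CfgL c w L) {j : ℕ} (hj : j + 1 = Fintype.card ι) :
    ∑ k, (w k : ℂ) * c k ^ j = L := by
  have := h.sum_eval (P := Polynomial.X ^ j) (by
    rw [Polynomial.degree_X_pow]; exact_mod_cast (by omega))
  simp only [Polynomial.eval_pow, Polynomial.eval_X, Polynomial.coeff_X_pow] at this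
  rw [this, if_pos (by omega), mul_one]

theorem CfgL.sum_zero [Nontrivial ι] (h : CfgL c w L) : ∑ k, w k = 0 := by
  have := h.pow (j := 0) (by simpa using Fintype.one_lt_card)
  simp only [pow_zero, mul_one] at this
  exact_mod_cast this

open Classical in
theorem CfgL.poly [Nonempty ι] (h : CfgL c w L) (x : ℂ) :
    ∑ k, (w k : ℂ) * ∏ l ∈ Finset.univ.erase k, (x - c l) = L := by
  have hs := Lagrange.sum_basis (s := Finset.univ) (v := c) h.inj.injOn Finset.univ_nonempty
  have hs := congrArg (fun p => L * Polynomial.eval x p) hs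
  simp only [Polynomial.eval_one, mul_one, Polynomial.eval_finsetSum, Finset.mul_sum] at hs
  rw [← hs]
  refine Finset.sum_congr rfl fun k _ => ?_
  have h2 := h.2 k
  have h3 : ∏ l ∈ Finset.univ.erase k, (c k - c l) ≠ 0 := by
    intro h0; apply h.1; rw [← h2, h0, mul_zero]
  rw [← h2, Lagrange.basis, Polynomial.eval_prod]
  simp only [Lagrange.basisDivisor, Polynomial.eval_mul, Polynomial.eval_C, Polynomial.eval_sub,
    Polynomial.eval_X, Finset.prod_mul_distrib, Finset.prod_inv_distrib]
  field_simp

theorem CfgL.inv [Nonempty ι] (h : CfgL c w L) {x : ℂ} (hx : ∀ k, x ≠ c k) :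
    ∑ k, (w k : ℂ) / (x - c k) = L / ∏ k, (x - c k) := by
  classical
  have hne : ∀ k, x - c k ≠ 0 := fun k => sub_ne_zero.mpr (hx k)
  rw [← h.poly x, Finset.sum_div]
  refine Finset.sum_congr rfl fun k _ => ?_
  rw [← Finset.mul_prod_erase Finset.univ (fun k => x - c k) (Finset.mem_univ k)]
  have : ∏ l ∈ Finset.univ.erase k, (x - c l) ≠ 0 := Finset.prod_ne_zero_iff.mpr fun l _ => hne l
  have := hne k
  field_simp

open Polynomial in
theorem Cfg.of_pow (hc : Function.Injective c) (hw : ∀ k, w k ≠ 0)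
    (hp : ∀ j, j + 1 < Fintype.card ι → ∑ k, (w k : ℂ) * c k ^ j = 0) : Cfg c w := by
  classical
  have hP : ∀ P : ℂ[X], P.natDegree + 1 < Fintype.card ι → ∑ k, (w k : ℂ) * P.eval (c k) = 0 := by
    intro P hP
    simp only [Polynomial.eval_eq_sum_range, Finset.mul_sum]
    rw [Finset.sum_comm]
    refine Finset.sum_eq_zero fun j hj => ?_
    rw [Finset.mem_range] at hj
    have := hp j (by omega)
    calc _ = ∑ k, P.coeff j * ((w k : ℂ) * c k ^ j) := by
            refine Finset.sum_congr rfl fun k _ => by ring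
      _ = 0 := by rw [← Finset.mul_sum, this, mul_zero]
  have heq : ∀ k m, (w k : ℂ) * ∏ l ∈ Finset.univ.erase k, (c k - c l) =
      (w m : ℂ) * ∏ l ∈ Finset.univ.erase m, (c m - c l) := by
    intro k m
    by_cases hkm : k = m
    · rw [hkm]
    have hmk : m ≠ k := fun hh => hkm hh.symm
    set S := (Finset.univ.erase k).erase m with hS
    have hS2 : (Finset.univ.erase m).erase k = S := Finset.erase_right_comm
    have hcard : S.card + 2 = Fintype.card ι := by
      have h1 : S.card = (Finset.univ.erase k).card - 1 := Finset.card_erase_of_mem (by simp [hmk])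
      have h2 : (Finset.univ.erase k).card = Fintype.card ι - 1 := by
        rw [Finset.card_erase_of_mem (Finset.mem_univ k), Finset.card_univ]
      have h3 : 1 < Fintype.card ι := Fintype.one_lt_card_iff.mpr ⟨k, m, hkm⟩
      omega
    have h0 := hP (∏ l ∈ S, (X - C (c l))) (by
      rw [Polynomial.natDegree_prod_of_monic _ _ (fun l _ => monic_X_sub_C _)]
      simp; omega)
    simp only [eval_prod, eval_sub, eval_X, eval_C] at h0
    rw [← Finset.add_sum_erase _ _ (Finset.mem_univ k),
      ← Finset.add_sum_erase _ _ (show m ∈ Finset.univ.erase k by simp [hmk]),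
      Finset.sum_eq_zero (s := (Finset.univ.erase k).erase m)] at h0
    · rw [← Finset.mul_prod_erase _ _ (show m ∈ Finset.univ.erase k by simp [hmk]),
        ← Finset.mul_prod_erase _ _ (show k ∈ Finset.univ.erase m by simp [hkm]), hS2]
      linear_combination (c k - c m) * h0
    · intro l hl
      rw [Finset.prod_eq_zero (i := l) hl (sub_self _), mul_zero]
  rcases isEmpty_or_nonempty ι with he | ⟨⟨k0⟩⟩
  · exact ⟨1, one_ne_zero, fun k => (he.false k).elim⟩
  · refine ⟨(w k0 : ℂ) * ∏ l ∈ Finset.univ.erase k0, (c k0 - c l), ?_, fun k => ?_⟩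
    · refine mul_ne_zero (by exact_mod_cast hw k0) (Finset.prod_ne_zero_iff.mpr fun l hl => ?_)
      have : l ≠ k0 := (Finset.mem_erase.mp hl).1
      exact sub_ne_zero.mpr (fun hh => this (hc hh).symm)
    · convert heq k k0

end cfg

section pot
variable {ι : Type*} [Fintype ι]

noncomputable def AA (c : ι → ℂ) (w : ι → ℝ) (x : ℂ) : ℝ := ∏ k, ‖x - c k‖ ^ (max (w k) 0)

noncomputable def hh (c : ι → ℂ) (w : ι → ℝ) (x : ℂ) : ℝ := ∑ k, w k * Real.log ‖x - c k‖

noncomputable def TT (r : ℝ) : ℝ := (Real.exp r - 1) / (Real.exp r + 1)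

noncomputable def pot (c : ι → ℂ) (w : ι → ℝ) (x : ℂ) : ℝ :=
  (AA c w x - AA c (-w) x) / (AA c w x + AA c (-w) x)

theorem TT_lt {r s : ℝ} : TT r < TT s ↔ r < s := by
  have h1 := Real.exp_pos r
  have h2 := Real.exp_pos s
  unfold TT
  rw [div_lt_div_iff₀ (by linarith) (by linarith)]
  rw [← Real.exp_lt_exp (x := r)]
  constructor <;> intro h <;> nlinarith

theorem TT_zero : TT 0 = 0 := by simp [TT]

theorem TT_inj {r s : ℝ} : TT r = TT s ↔ r = s := by
  constructor
  · intro h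
    rcases lt_trichotomy r s with h1 | h1 | h1
    · have := TT_lt.mpr h1; linarith
    · exact h1
    · have := TT_lt.mpr h1; linarith
  · rintro rfl; rfl

theorem TT_cont : Continuous TT := by
  unfold TT
  refine Continuous.div (by fun_prop) (by fun_prop) (fun x => ?_)
  have := Real.exp_pos x
  positivity

theorem TT_mem (r : ℝ) : -1 < TT r ∧ TT r < 1 := by
  have h1 := Real.exp_pos r
  unfold TT
  rw [lt_div_iff₀ (by linarith), div_lt_iff₀ (by linarith)]
  constructor <;> linarith

variable {c : ι → ℂ} {w : ι → ℝ} {L : ℂ} {x : ℂ}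

theorem AA_nonneg : 0 ≤ AA c w x := Finset.prod_nonneg fun k _ => Real.rpow_nonneg (norm_nonneg _) _

theorem AA_pos (hx : ∀ k, x ≠ c k) : 0 < AA c w x :=
  Finset.prod_pos fun k _ => Real.rpow_pos_of_pos (norm_pos_iff.mpr (sub_ne_zero.mpr (hx k))) _

theorem AA_zero {k : ι} (hk : 0 < w k) : AA c w (c k) = 0 := by
  refine Finset.prod_eq_zero (Finset.mem_univ k) ?_
  rw [sub_self, norm_zero, Real.zero_rpow]
  rw [max_eq_left hk.le]; exact hk.ne'

theorem AA_eq_zero (h : AA c w x = 0) : ∃ k, x = c k ∧ 0 < w k := by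
  obtain ⟨k, -, hk⟩ := Finset.prod_eq_zero_iff.mp h
  refine ⟨k, ?_⟩
  rw [Real.rpow_eq_zero_iff_of_nonneg (norm_nonneg _), norm_eq_zero, sub_eq_zero] at hk
  refine ⟨hk.1, ?_⟩
  by_contra hw
  exact hk.2 (max_eq_right (not_lt.mp hw))

theorem AA_cont : Continuous (AA c w) := by
  unfold AA
  refine continuous_finsetProd _ fun k _ => ?_
  exact (by fun_prop : Continuous fun x : ℂ => ‖x - c k‖).rpow_const fun x => Or.inr (le_max_right _ _)

theorem AA_ratio (hx : ∀ k, x ≠ c k) : AA c w x = Real.exp (hh c w x) * AA c (-w) x := by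
  unfold AA hh
  rw [Real.exp_sum, ← Finset.prod_mul_distrib]
  refine Finset.prod_congr rfl fun k _ => ?_
  have hp : 0 < ‖x - c k‖ := norm_pos_iff.mpr (sub_ne_zero.mpr (hx k))
  rw [mul_comm (w k), Real.exp_mul, Real.exp_log hp, ← Real.rpow_add hp]
  congr 1
  simp only [Pi.neg_apply]
  rcases le_total (w k) 0 with h | h
  · rw [max_eq_right h, max_eq_left (by linarith)]; ring
  · rw [max_eq_left h, max_eq_right (by linarith)]; ring

theorem pot_eq (hx : ∀ k, x ≠ c k) : pot c w x = TT (hh c w x) := by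
  have h1 : 0 < AA c (-w) x := AA_pos hx
  have := Real.exp_pos (hh c w x)
  unfold pot TT
  rw [AA_ratio hx]
  field_simp

theorem AA_sum_pos (hc : Function.Injective c) : 0 < AA c w x + AA c (-w) x := by
  have h1 : 0 ≤ AA c w x := AA_nonneg
  have h2 : 0 ≤ AA c (-w) x := AA_nonneg
  rcases h1.lt_or_eq with h1 | h1
  · linarith
  rcases h2.lt_or_eq with h2 | h2
  · linarith
  obtain ⟨k, hk, hk'⟩ := AA_eq_zero h1.symm
  obtain ⟨l, hl, hl'⟩ := AA_eq_zero h2.symm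
  have : k = l := hc (hk.symm.trans hl)
  subst this
  simp at hl'
  linarith

theorem pot_lo (hc : Function.Injective c) {k : ι} (hk : 0 < w k) : pot c w (c k) = -1 := by
  have h1 := AA_sum_pos (w := w) (x := c k) hc
  unfold pot
  rw [AA_zero hk] at *
  rw [zero_add] at *
  rw [zero_sub, neg_div, div_self h1.ne']

theorem pot_neg : pot c (-w) = -pot c w := by
  ext x
  simp only [pot, neg_neg, Pi.neg_apply]
  rw [← neg_div, neg_sub, add_comm]

theorem pot_hi (hc : Function.Injective c) {k : ι} (hk : w k < 0) : pot c w (c k) = 1 := by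
  have := pot_lo (w := -w) hc (k := k) (by simpa using hk)
  rw [pot_neg] at this
  simp at this
  linarith

theorem pot_cont (hc : Function.Injective c) : Continuous (pot c w) :=
  (AA_cont.sub AA_cont).div (AA_cont.add AA_cont) fun _ => (AA_sum_pos hc).ne'

theorem hh_lim (hs : ∑ k, w k = 0) : Tendsto (hh c w) (cocompact ℂ) (𝓝 0) := by
  have h1 : ∀ᶠ x in cocompact ℂ, (∀ k, x ≠ c k) ∧ x ≠ 0 := by
    have : ((range c) ∪ {0})ᶜ ∈ cocompact ℂ := by
      exact (((finite_range c).union (finite_singleton 0)).isCompact).compl_mem_cocompact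
    filter_upwards [this] with x hx
    simp only [mem_compl_iff, mem_union, mem_range, mem_singleton_iff, not_or, not_exists] at hx
    exact ⟨fun k hk => hx.1 k hk.symm, hx.2⟩
  have h2 : Tendsto (fun x : ℂ => ∑ k, w k * Real.log ‖1 - c k * x⁻¹‖) (cocompact ℂ) (𝓝 0) := by
    have : (0:ℝ) = ∑ k, w k * Real.log ‖1 - c k * 0‖ := by simp
    rw [this]
    refine tendsto_finsetSum _ fun k _ => Tendsto.const_mul _ (Tendsto.log ?_ (by simp))
    exact (tendsto_const_nhds.sub (tendsto_inv₀_cobounded.const_mul (c k) |>.mono_left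
      (by rw [Metric.cobounded_eq_cocompact]))).norm
  refine h2.congr' ?_
  filter_upwards [h1] with x ⟨hx, hx0⟩
  unfold hh
  have : ∑ k, w k * Real.log ‖x‖ = 0 := by rw [← Finset.sum_mul, hs, zero_mul]
  rw [← sub_zero (∑ k, w k * Real.log ‖x - c k‖), ← this, ← Finset.sum_sub_distrib]
  refine Finset.sum_congr rfl fun k _ => ?_
  rw [← mul_sub, ← Real.log_div (by simpa [sub_eq_zero] using hx k) (by simpa using hx0), ← norm_div]
  congr 3
  field_simp

theorem hh_deriv (x0 : ℂ) (hx : ∀ k, x0 ≠ c k) :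
    ∃ F : ℂ → ℂ, HasStrictDerivAt F (∑ k, (w k : ℂ) / (x0 - c k)) x0 ∧ F x0 = 0 ∧
      ∀ x, (∀ k, x ≠ c k) → (F x).re = hh c w x - hh c w x0 := by
  refine ⟨fun x => ∑ k, (w k : ℂ) * Complex.log ((x - c k) / (x0 - c k)), ?_, ?_, ?_⟩
  · have : ∀ k ∈ Finset.univ, HasStrictDerivAt (fun x => (w k : ℂ) * Complex.log ((x - c k) / (x0 - c k)))
        ((w k : ℂ) / (x0 - c k)) x0 := by
      intro k _
      have hne : x0 - c k ≠ 0 := sub_ne_zero.mpr (hx k)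
      have h1 : HasStrictDerivAt (fun x => (x - c k) / (x0 - c k)) (1 / (x0 - c k)) x0 :=
        HasStrictDerivAt.div_const (c := fun x => x - c k) (by
          have := (hasStrictDerivAt_id x0).sub (hasStrictDerivAt_const x0 (c k))
          rw [sub_zero] at this; exact this) _
      have h2 := (h1.clog (by rw [div_self hne]; simp)).const_mul (w k : ℂ)
      have h3 : (w k : ℂ) * (1 / (x0 - c k) / ((x0 - c k) / (x0 - c k))) = (w k : ℂ) / (x0 - c k) := by
        rw [div_self hne]; ring
      rw [← h3]; exact h2
    exact HasStrictDerivAt.fun_sum this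
  · refine Finset.sum_eq_zero fun k _ => ?_
    rw [div_self (sub_ne_zero.mpr (hx k))]; simp
  · intro x hx'
    simp only [Complex.re_sum, hh, ← Finset.sum_sub_distrib]
    refine Finset.sum_congr rfl fun k _ => ?_
    rw [Complex.re_ofReal_mul, Complex.log_re, norm_div, Real.log_div, mul_sub]
    · simpa [sub_eq_zero] using hx' k
    · simpa [sub_eq_zero] using hx k

theorem half_ball {r : ℝ} : IsPreconnected (Metric.ball (0:ℂ) r ∩ {z | z.re < 0}) :=
  ((convex_ball _ _).inter (convex_halfSpace_re_lt 0)).isPreconnected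

theorem half_ball' {r : ℝ} : IsPreconnected (Metric.ball (0:ℂ) r ∩ {z | 0 < z.re}) :=
  ((convex_ball _ _).inter (convex_halfSpace_re_gt 0)).isPreconnected

theorem half_cl {r : ℝ} {z : ℂ} (hz : z ∈ Metric.ball (0:ℂ) r) (hz0 : z.re = 0) (σ : ℝ) (hσ : σ ≠ 0) :
    z ∈ closure (Metric.ball (0:ℂ) r ∩ {z | 0 < σ * z.re}) := by
  rw [mem_closure_iff_nhds]
  intro U hU
  have hc : Tendsto (fun t : ℝ => z + ((t * σ : ℝ) : ℂ)) (𝓝[>] 0) (𝓝 z) := by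
    have : Continuous (fun t : ℝ => z + ((t * σ : ℝ) : ℂ)) := by fun_prop
    have := this.tendsto 0
    simp only [zero_mul, Complex.ofReal_zero, add_zero] at this
    exact this.mono_left nhdsWithin_le_nhds
  have h1 := hc.eventually (inter_mem hU (Metric.isOpen_ball.mem_nhds hz))
  obtain ⟨t, ht, ht0⟩ := (h1.and self_mem_nhdsWithin).exists
  have ht0 : 0 < t := ht0
  refine ⟨_, ht.1, ht.2, ?_⟩
  simp only [mem_setOf_eq, Complex.add_re, hz0, Complex.ofReal_re, zero_add]
  have : 0 < σ * σ := mul_self_pos.mpr hσ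
  nlinarith

theorem pot_reg_aux {φ : ℂ → ℝ} {F : ℂ → ℂ} {D x0 : ℂ} (hF : HasStrictDerivAt F D x0) (hD : D ≠ 0)
    (hF0 : F x0 = 0) {N : Set ℂ} (hN : N ∈ 𝓝 x0)
    (h1 : ∀ x ∈ N, φ x < φ x0 ↔ (F x).re < 0) (h2 : ∀ x ∈ N, φ x0 < φ x ↔ 0 < (F x).re)
    (U : Set ℂ) (hU : U ∈ 𝓝 x0) : ∃ O ⊆ U, IsOpen O ∧ x0 ∈ O ∧
    IsPreconnected (O ∩ {y | φ y < φ x0}) ∧ IsPreconnected (O ∩ {y | φ x0 < φ y}) ∧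
    ∀ y ∈ O, φ y = φ x0 → y ∈ closure (O ∩ {y | φ y < φ x0}) ∧
      y ∈ closure (O ∩ {y | φ x0 < φ y}) := by
  set e := HasStrictFDerivAt.toOpenPartialHomeomorph F (hF.hasStrictFDerivAt_equiv hD) with he
  have hx0 : x0 ∈ e.source := HasStrictFDerivAt.mem_toOpenPartialHomeomorph_source _
  have heF : ∀ x, e x = F x := fun x => rfl
  have h0 : e x0 = 0 := hF0
  have h0t : (0:ℂ) ∈ e.target := by rw [← h0]; exact e.map_source hx0
  have hs0 : e.symm 0 = x0 := by rw [← h0]; exact e.left_inv hx0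
  have hmem : e.target ∩ e.symm ⁻¹' (U ∩ N) ∈ 𝓝 (0:ℂ) := by
    refine inter_mem (e.open_target.mem_nhds h0t) ?_
    have := e.continuousAt_symm h0t
    apply this
    rw [hs0]
    exact inter_mem hU hN
  obtain ⟨r, hr, hball⟩ := Metric.mem_nhds_iff.mp hmem
  have hbt : Metric.ball 0 r ⊆ e.target := fun z hz => (hball hz).1
  set O := e.source ∩ e ⁻¹' (Metric.ball 0 r) with hO
  have hOo : IsOpen O := e.isOpen_inter_preimage Metric.isOpen_ball
  have hOUN : ∀ x ∈ O, x ∈ U ∧ x ∈ N := by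
    rintro x ⟨hx, hxb⟩
    have := (hball hxb).2
    rw [mem_preimage, e.left_inv hx] at this
    exact this
  have im1 : ∀ P : Set ℂ, ∀ S : Set ℂ, (∀ x ∈ O, x ∈ S ↔ F x ∈ P) →
      O ∩ S = e.symm '' (Metric.ball 0 r ∩ P) := by
    intro P S hPS
    ext x
    constructor
    · rintro ⟨hx, hxS⟩
      exact ⟨e x, ⟨hx.2, (hPS x hx).mp hxS⟩, e.left_inv hx.1⟩
    · rintro ⟨z, ⟨hz, hzP⟩, rfl⟩
      have hzt := hbt hz
      have h3 : e.symm z ∈ O := ⟨e.map_target hzt, by rw [mem_preimage, e.right_inv hzt]; exact hz⟩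
      refine ⟨h3, (hPS _ h3).mpr ?_⟩
      rw [← heF, e.right_inv hzt]; exact hzP
  have i1 := im1 {z | z.re < 0} {y | φ y < φ x0} (fun x hx => h1 x (hOUN x hx).2)
  have i2 := im1 {z | 0 < z.re} {y | φ x0 < φ y} (fun x hx => h2 x (hOUN x hx).2)
  have hcont : ContinuousOn e.symm (Metric.ball 0 r) := e.continuousOn_symm.mono hbt
  refine ⟨O, fun x hx => (hOUN x hx).1, hOo, ⟨hx0, ?_⟩, ?_, ?_, ?_⟩
  · rw [mem_preimage, h0]; exact Metric.mem_ball_self hr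
  · rw [i1]; exact half_ball.image _ (hcont.mono inter_subset_left)
  · rw [i2]; exact half_ball'.image _ (hcont.mono inter_subset_left)
  · intro y hy hyx
    have hre : (e y).re = 0 := by
      have a1 := (h1 y (hOUN y hy).2).not.mp (by linarith)
      have a2 := (h2 y (hOUN y hy).2).not.mp (by linarith)
      rw [heF]; linarith
    have hcy : ContinuousAt e.symm (e y) := e.continuousAt_symm (hbt hy.2)
    have hyy : e.symm (e y) = y := e.left_inv hy.1
    constructor
    · rw [i1, ← hyy]
      have := half_cl hy.2 hre (-1) (by norm_num)
      simp only [neg_mul, one_mul, Left.neg_pos_iff] at this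
      exact mem_closure_image hcy this
    · rw [i2, ← hyy]
      have := half_cl hy.2 hre (1) (by norm_num)
      simp only [one_mul] at this
      exact mem_closure_image hcy this

theorem nhds_avoid (hx : ∀ k, x ≠ c k) : {y | ∀ k, y ≠ c k} ∈ 𝓝 x := by
  have : (range c)ᶜ ∈ 𝓝 x := (finite_range c).isClosed.isOpen_compl.mem_nhds (by
    rintro ⟨k, hk⟩; exact hx k hk.symm)
  refine mem_of_superset this (fun y hy k hk => hy ⟨k, hk.symm⟩)

theorem CfgL.isPot [Nontrivial ι] (h : CfgL c w L) : Pot (pot c w) where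
  cont := pot_cont h.inj
  lo x := by
    have h1 := AA_sum_pos (w := w) (x := x) h.inj
    have h2 : 0 ≤ AA c w x := AA_nonneg
    have h3 : 0 ≤ AA c (-w) x := AA_nonneg
    unfold Zan.pot; rw [le_div_iff₀ h1]; linarith
  hi x := by
    have h1 := AA_sum_pos (w := w) (x := x) h.inj
    have h2 : 0 ≤ AA c w x := AA_nonneg
    have h3 : 0 ≤ AA c (-w) x := AA_nonneg
    unfold Zan.pot; rw [div_le_iff₀ h1]; linarith
  lim := by
    have h1 : Tendsto (fun x => TT (hh c w x)) (cocompact ℂ) (𝓝 0) := by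
      have := (TT_cont.tendsto 0).comp (hh_lim (c := c) h.sum_zero)
      rwa [TT_zero] at this
    refine h1.congr' ?_
    filter_upwards [(finite_range c).isCompact.compl_mem_cocompact] with x hx
    exact (pot_eq fun k hk => hx ⟨k, hk.symm⟩).symm
  finlo := by
    refine (finite_range c).subset fun x hx => ?_
    by_contra hn
    have := TT_mem (hh c w x)
    rw [← pot_eq fun k hk => hn ⟨k, hk.symm⟩, show Zan.pot c w x = -1 from hx] at this
    exact absurd this.1 (lt_irrefl _)
  finhi := by
    refine (finite_range c).subset fun x hx => ?_
    by_contra hn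
    have := TT_mem (hh c w x)
    rw [← pot_eq fun k hk => hn ⟨k, hk.symm⟩, show Zan.pot c w x = 1 from hx] at this
    exact absurd this.2 (lt_irrefl _)
  reg x h1 h2 U hU := by
    have hx : ∀ k, x ≠ c k := by
      rintro k rfl
      rcases lt_or_gt_of_ne (h.w_ne k) with hk | hk
      · rw [pot_hi h.inj hk] at h2; exact lt_irrefl _ h2
      · rw [pot_lo h.inj hk] at h1; exact lt_irrefl _ h1
    obtain ⟨F, hF, hF0, hFre⟩ := hh_deriv (c := c) (w := w) x hx
    have hD : ∑ k, (w k : ℂ) / (x - c k) ≠ 0 := by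
      rw [h.inv hx]
      exact div_ne_zero h.1 (Finset.prod_ne_zero_iff.mpr fun k _ => sub_ne_zero.mpr (hx k))
    refine pot_reg_aux hF hD hF0 (nhds_avoid hx) ?_ ?_ U hU
    · intro y hy
      rw [pot_eq hx, pot_eq hy, TT_lt, hFre y hy, sub_neg]
    · intro y hy
      rw [pot_eq hx, pot_eq hy, TT_lt, hFre y hy, sub_pos]

end pot
end Zan

open Set Filter Topology

namespace Zan

section gr
set_option linter.unusedSectionVars false
variable {ι : Type*} [Fintype ι]

def Gr (c : ι → ℂ) (w : ι → ℝ) : SimpleGraph ι where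
  Adj k l := (0 < w k ∧ w l < 0 ∧ Cross (pot c w) (c k) (c l)) ∨
    (0 < w l ∧ w k < 0 ∧ Cross (pot c w) (c l) (c k))
  symm := ⟨fun _ _ h => h.symm⟩
  loopless := ⟨fun k h => by rcases h with ⟨h1, h2, -⟩ | ⟨h1, h2, -⟩ <;> linarith⟩

variable {c : ι → ℂ} {w : ι → ℝ} {L : ℂ}

theorem pot_eq_lo (hc : Function.Injective c) {x : ℂ} (h : pot c w x = -1) (hw : ∀ k, w k ≠ 0) :
    ∃ k, x = c k ∧ 0 < w k := by
  by_cases hx : ∀ k, x ≠ c k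
  · rw [pot_eq hx] at h
    have := (TT_mem (hh c w x)).1
    linarith
  · push Not at hx
    obtain ⟨k, rfl⟩ := hx
    refine ⟨k, rfl, ?_⟩
    rcases lt_or_gt_of_ne (hw k) with h1 | h1
    · rw [pot_hi hc h1] at h; norm_num at h
    · exact h1

theorem pot_eq_hi (hc : Function.Injective c) {x : ℂ} (h : pot c w x = 1) (hw : ∀ k, w k ≠ 0) :
    ∃ k, x = c k ∧ w k < 0 := by
  have := pot_eq_lo (w := -w) hc (x := x) (by rw [pot_neg]; simp [h]) (by simpa using hw)
  simpa using this

theorem Gr_neg : Gr c (-w) = Gr c w := by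
  ext k l
  have key : ∀ k l, Cross (pot c (-w)) (c k) (c l) ↔ Cross (pot c w) (c l) (c k) := by
    intro k l
    rw [pot_neg]
    constructor
    · intro h; have := h.neg; rwa [neg_neg] at this
    · intro h; exact h.neg
  simp only [Gr, Pi.neg_apply, key, Left.neg_pos_iff, Left.neg_neg_iff]
  tauto

theorem CfgL.gr_conn [Nontrivial ι] (h : CfgL c w L) : (Gr c w).Connected := by
  rw [SimpleGraph.connected_iff_exists_forall_reachable]
  obtain ⟨k0⟩ : Nonempty ι := inferInstance
  refine ⟨k0, fun k => ?_⟩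
  have hval : ∀ k, pot c w (c k) = -1 ∨ pot c w (c k) = 1 := by
    intro k
    rcases lt_or_gt_of_ne (h.w_ne k) with h1 | h1
    · right; exact pot_hi h.inj h1
    · left; exact pot_lo h.inj h1
  have := T3 h.isPot (fun y => ∃ k, c k = y ∧ (Gr c w).Reachable k0 k) (by
    intro y z hy hz hyz
    obtain ⟨k, rfl, hk⟩ := pot_eq_lo h.inj hy h.w_ne
    obtain ⟨l, rfl, hl⟩ := pot_eq_hi h.inj hz h.w_ne
    have hadj : (Gr c w).Adj k l := Or.inl ⟨hk, hl, hyz⟩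
    constructor
    · rintro ⟨k', hk', hr⟩
      rw [h.inj hk'] at hr
      exact ⟨l, rfl, hr.trans hadj.reachable⟩
    · rintro ⟨k', hk', hr⟩
      rw [h.inj hk'] at hr
      exact ⟨k, rfl, hr.trans hadj.symm.reachable⟩) ⟨c k0, hval k0, k0, rfl, SimpleGraph.Reachable.refl _⟩
    (c k) (hval k)
  obtain ⟨k', hk', hr⟩ := this
  rwa [h.inj hk'] at hr

theorem reach_const {G : SimpleGraph ι} {γ : ι → ℝ} (h : ∀ k l, G.Adj k l → γ k = γ l) {k l : ι}
    (hr : G.Reachable k l) : γ k = γ l := by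
  obtain ⟨p⟩ := hr
  induction p with
  | nil => rfl
  | cons hadj _ ih => exact (h _ _ hadj).trans ih

theorem CfgL.gr_bridge [Nontrivial ι] (h : CfgL c w L) {a b : ι} (ha : 0 < w a) (hb : w b < 0)
    (hab : Cross (pot c w) (c a) (c b)) : ¬ ((Gr c w).deleteEdges {s(a, b)}).Reachable a b := by
  intro hr
  obtain ⟨γ, h1, h2⟩ := T4 h.isPot (pot_lo h.inj ha) (pot_hi h.inj hb) hab
  apply h1
  refine reach_const (γ := fun k => γ (c k)) ?_ hr
  intro k l hkl
  rw [SimpleGraph.deleteEdges_adj] at hkl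
  obtain ⟨hadj, hne⟩ := hkl
  simp only [mem_singleton_iff, Sym2.eq_iff, not_or] at hne
  rcases hadj with ⟨h3, h4, h5⟩ | ⟨h3, h4, h5⟩
  · refine h2 _ _ (pot_lo h.inj h3) (pot_hi h.inj h4) h5 ?_
    rintro ⟨h6, h7⟩
    exact hne.1 ⟨h.inj h6, h.inj h7⟩
  · refine (h2 _ _ (pot_lo h.inj h3) (pot_hi h.inj h4) h5 ?_).symm
    rintro ⟨h6, h7⟩
    exact hne.2 ⟨h.inj h7, h.inj h6⟩

theorem CfgL.gr_acyc [Nontrivial ι] (h : CfgL c w L) : (Gr c w).IsAcyclic := by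
  rw [SimpleGraph.isAcyclic_iff_forall_adj_isBridge]
  intro a b hab
  rw [SimpleGraph.isBridge_iff]
  rcases hab with ⟨h3, h4, h5⟩ | ⟨h3, h4, h5⟩
  · exact h.gr_bridge h3 h4 h5
  · have := h.gr_bridge h3 h4 h5
    rw [Sym2.eq_swap]
    exact fun hh => this hh.symm

theorem eq_of_le_acyc {T G : SimpleGraph ι} (hT : T.Connected) (hG : G.IsAcyclic) (hle : T ≤ G) : T = G := by
  refine le_antisymm hle ?_
  intro a b hab
  by_contra hn
  rw [SimpleGraph.isAcyclic_iff_forall_adj_isBridge] at hG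
  have := hG hab
  rw [SimpleGraph.isBridge_iff] at this
  apply this
  refine (hT.preconnected a b).mono ?_
  intro x y hxy
  rw [SimpleGraph.deleteEdges_adj]
  refine ⟨hle hxy, ?_⟩
  simp only [mem_singleton_iff, Sym2.eq_iff, not_or]
  refine ⟨?_, ?_⟩
  · rintro ⟨rfl, rfl⟩; exact hn hxy
  · rintro ⟨rfl, rfl⟩; exact hn hxy.symm

theorem Lo_comp (e : ℂ ≃ₜ ℂ) (φ : ℂ → ℝ) (t : ℝ) (y : ℂ) (hy : φ (e y) < t) :
    e '' Lo (φ ∘ e) t y = Lo φ t (e y) := by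
  unfold Lo
  rw [Homeomorph.image_connectedComponentIn e (by exact hy)]
  congr 1
  ext x
  constructor
  · rintro ⟨z, hz, rfl⟩; exact hz
  · intro hx
    exact ⟨e.symm x, by show φ (e (e.symm x)) < t; rw [e.apply_symm_apply]; exact hx, e.apply_symm_apply x⟩

theorem Cross_comp (e : ℂ ≃ₜ ℂ) (φ : ℂ → ℝ) (y z : ℂ) (hy : φ (e y) < 0) (hz : 0 < φ (e z))
    (h : Cross (φ ∘ e) y z) : Cross φ (e y) (e z) := by
  obtain ⟨x, h1, h2, h3⟩ := h
  refine ⟨e x, h1, ?_, ?_⟩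
  · rw [← Lo_comp e φ 0 y hy, ← e.image_closure]
    exact ⟨x, h2, rfl⟩
  · rw [← Lo_comp e (-φ) 0 z (by simpa using hz), ← e.image_closure]
    exact ⟨x, h3, rfl⟩

theorem AA_aff (a b : ℂ) (x : ℂ) :
    AA (fun k => a * c k + b) w (a * x + b) = (∏ k : ι, ‖a‖ ^ max (w k) 0) * AA c w x := by
  unfold AA
  rw [← Finset.prod_mul_distrib]
  refine Finset.prod_congr rfl fun k _ => ?_
  rw [← Real.mul_rpow (norm_nonneg _) (norm_nonneg _), ← norm_mul]
  congr 2
  ring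

theorem pot_aff (hs : ∑ k, w k = 0) {a : ℂ} (ha : a ≠ 0) (b : ℂ) (x : ℂ) :
    pot (fun k => a * c k + b) w (a * x + b) = pot c w x := by
  have hp : 0 < ‖a‖ := norm_pos_iff.mpr ha
  have h1 : (∏ k : ι, ‖a‖ ^ max (w k) 0) = ∏ k : ι, ‖a‖ ^ max ((-w) k) 0 := by
    rw [← Real.rpow_sum_of_pos hp, ← Real.rpow_sum_of_pos hp]
    congr 1
    rw [← sub_eq_zero, ← Finset.sum_sub_distrib]
    refine Eq.trans ?_ hs
    refine Finset.sum_congr rfl fun k _ => ?_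
    simp only [Pi.neg_apply]
    rcases le_total (w k) 0 with h | h
    · rw [max_eq_right h, max_eq_left (by linarith)]; ring
    · rw [max_eq_left h, max_eq_right (by linarith)]; ring
  have h2 : 0 < ∏ k : ι, ‖a‖ ^ max ((-w) k) 0 := Finset.prod_pos fun k _ => Real.rpow_pos_of_pos hp _
  unfold pot
  rw [AA_aff, AA_aff, h1, ← mul_sub, ← mul_add, mul_div_mul_left _ _ h2.ne']

theorem CfgL.aff (h : CfgL c w L) {a : ℂ} (ha : a ≠ 0) (b : ℂ) : Cfg (fun k => a * c k + b) w := by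
  classical
  refine ⟨a ^ (Fintype.card ι - 1) * L, mul_ne_zero (pow_ne_zero _ ha) h.1, fun k => ?_⟩
  rw [← h.2 k]
  have : ∀ l, (a * c k + b - (a * c l + b)) = a * (c k - c l) := fun l => by ring
  simp only [this, Finset.prod_mul_distrib, Finset.prod_const]
  rw [Finset.card_erase_of_mem (Finset.mem_univ k), Finset.card_univ]
  ring

theorem CfgL.gr_aff [Nontrivial ι] (h : CfgL c w L) {a : ℂ} (ha : a ≠ 0) (b : ℂ) :
    Gr (fun k => a * c k + b) w = Gr c w := by
  have hs := h.sum_zero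
  obtain ⟨L', h'⟩ := h.aff ha b
  symm
  refine eq_of_le_acyc h.gr_conn h'.gr_acyc ?_
  let e : ℂ ≃ₜ ℂ := (Homeomorph.mulLeft₀ a ha).trans (Homeomorph.addRight b)
  have he : ∀ x, e x = a * x + b := fun x => rfl
  have hφ : pot (fun k => a * c k + b) w ∘ e = pot c w := by
    ext x; simp only [Function.comp, he, pot_aff hs ha]
  have key : ∀ k l, 0 < w k → w l < 0 → Cross (pot c w) (c k) (c l) →
      Cross (pot (fun k => a * c k + b) w) (a * c k + b) (a * c l + b) := by
    intro k l h1 h2 h3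
    rw [← hφ] at h3
    refine Cross_comp e _ _ _ ?_ ?_ h3
    · rw [he, pot_aff hs ha, pot_lo h.inj h1]; norm_num
    · rw [he, pot_aff hs ha, pot_hi h.inj h2]; norm_num
  rintro k l (⟨h1, h2, h3⟩ | ⟨h1, h2, h3⟩)
  · exact Or.inl ⟨h1, h2, key k l h1 h2 h3⟩
  · exact Or.inr ⟨h1, h2, key l k h1 h2 h3⟩

theorem hh_curve {γ : ℝ → ℂ} {γ' : ℂ} {t : ℝ} (hγ : HasDerivAt γ γ' t) (hx : ∀ k, γ t ≠ c k) :
    HasDerivAt (fun s => hh c w (γ s)) (γ' * ∑ k, (w k : ℂ) / (γ t - c k)).re t := by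
  obtain ⟨F, h1, h2, h3⟩ := hh_deriv (w := w) (γ t) hx
  have h4 : HasDerivAt (fun s => F (γ s)) ((∑ k, (w k : ℂ) / (γ t - c k)) * γ') t :=
    h1.hasDerivAt.comp t hγ
  have h5 : HasDerivAt (fun s => (F (γ s)).re) ((∑ k, (w k : ℂ) / (γ t - c k)) * γ').re t :=
    Complex.reCLM.hasFDerivAt.comp_hasDerivAt t h4
  rw [mul_comm] at h5
  have h6 : ∀ᶠ s in 𝓝 t, hh c w (γ s) = (F (γ s)).re + hh c w (γ t) := by
    have := hγ.continuousAt.eventually (nhds_avoid (c := c) hx)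
    filter_upwards [this] with s hs
    rw [h3 _ hs]; ring
  exact (h5.add_const _).congr_of_eventuallyEq h6

theorem cross_of_mono {φ : ℂ → ℝ} {γ : ℝ → ℂ} {s0 s1 : ℝ} (hs : s0 < s1) (hφ : Continuous φ)
    (hγ : ContinuousOn γ (Icc s0 s1)) (hm : StrictMonoOn (φ ∘ γ) (Icc s0 s1)) {y z : ℂ}
    (h0 : γ s0 ∈ Lo φ 0 y) (h1 : γ s1 ∈ Lo (-φ) 0 z) : Cross φ y z := by
  have hc : ContinuousOn (φ ∘ γ) (Icc s0 s1) := hφ.comp_continuousOn hγ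
  have a0 : φ (γ s0) < 0 := Lo_lt h0
  have a1 : 0 < φ (γ s1) := by have := Lo_lt h1; simpa using this
  obtain ⟨t, ht, ht0⟩ := intermediate_value_Ioo hs.le hc ⟨a0, a1⟩
  have ht0 : φ (γ t) = 0 := ht0
  have htI : t ∈ Icc s0 s1 := ⟨ht.1.le, ht.2.le⟩
  have m0 : s0 ∈ Icc s0 s1 := ⟨le_rfl, hs.le⟩
  have m1 : s1 ∈ Icc s0 s1 := ⟨hs.le, le_rfl⟩
  refine ⟨γ t, ht0, ?_, ?_⟩
  · have hsub : γ '' Ico s0 t ⊆ Lo φ 0 y := by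
      rw [Lo_eq h0]
      refine IsPreconnected.subset_connectedComponentIn
        (isPreconnected_Ico.image _ (hγ.mono fun x hx => ⟨hx.1, hx.2.le.trans ht.2.le⟩))
        ⟨s0, ⟨le_rfl, ht.1⟩, rfl⟩ ?_
      rintro _ ⟨x, hx, rfl⟩
      show φ (γ x) < 0
      rw [← ht0]
      exact hm ⟨hx.1, hx.2.le.trans ht.2.le⟩ htI hx.2
    refine closure_mono hsub ?_
    refine ContinuousWithinAt.mem_closure_image (f := γ) ((hγ t htI).mono fun x hx => ⟨hx.1, hx.2.le.trans ht.2.le⟩) ?_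
    rw [closure_Ico ht.1.ne]; exact ⟨ht.1.le, le_rfl⟩
  · have hsub : γ '' Ioc t s1 ⊆ Lo (-φ) 0 z := by
      rw [Lo_eq h1]
      refine IsPreconnected.subset_connectedComponentIn
        (isPreconnected_Ioc.image _ (hγ.mono fun x hx => ⟨ht.1.le.trans hx.1.le, hx.2⟩))
        ⟨s1, ⟨ht.2, le_rfl⟩, rfl⟩ ?_
      rintro _ ⟨x, hx, rfl⟩
      show -φ (γ x) < 0
      have := hm htI ⟨ht.1.le.trans hx.1.le, hx.2⟩ hx.1
      simp only [Function.comp, ht0] at this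
      linarith
    refine closure_mono hsub ?_
    refine ContinuousWithinAt.mem_closure_image (f := γ) ((hγ t htI).mono fun x hx => ⟨ht.1.le.trans hx.1.le, hx.2⟩) ?_
    rw [closure_Ioc ht.2.ne]; exact ⟨le_rfl, ht.2.le⟩

end gr

end Zan

open Set Filter Topology

namespace Zan

section pers
set_option linter.unusedSectionVars false
variable {β ι κ : Type*} [Fintype ι] [Fintype κ]

theorem CfgL.neg {c : ι → ℂ} {w : ι → ℝ} {L : ℂ} (h : CfgL c w L) : CfgL c (-w) (-L) := by
  refine ⟨neg_ne_zero.mpr h.1, fun k => ?_⟩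
  rw [← h.2 k]
  simp

theorem Cfg.neg {c : ι → ℂ} {w : ι → ℝ} (h : Cfg c w) : Cfg c (-w) := ⟨_, h.choose_spec.neg⟩

structure Pers (l : Filter β) (u : β → ι → ℂ) (w : β → ι → ℝ) (e : κ → ι) (ub : κ → ℂ) (wb : ι → ℝ) :
    Prop where
  einj : Function.Injective e
  near : ∀ k, Tendsto (fun n => u n (e k)) l (𝓝 (ub k))
  far : ∀ i, i ∉ range e → Tendsto (fun n => u n i) l (Bornology.cobounded ℂ)
  wlim : ∀ i, Tendsto (fun n => w n i) l (𝓝 (wb i))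
  cfg : ∀ᶠ n in l, Cfg (u n) (w n)
  lcfg : Cfg ub (wb ∘ e)

variable {l : Filter β} {u : β → ι → ℂ} {w : β → ι → ℝ} {e : κ → ι} {ub : κ → ℂ} {wb : ι → ℝ}

theorem Pers.neg (h : Pers l u w e ub wb) : Pers l u (fun n => -w n) e ub (-wb) where
  einj := h.einj
  near := h.near
  far := h.far
  wlim i := (h.wlim i).neg
  cfg := h.cfg.mono fun _ hn => hn.neg
  lcfg := h.lcfg.neg

open Classical in
noncomputable def farS (e : κ → ι) : Finset ι := Finset.univ.filter (fun i => i ∉ range e)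

theorem prod_split (he : Function.Injective e) (f : ι → ℝ) :
    ∏ i, f i = (∏ k, f (e k)) * ∏ i ∈ farS e, f i := by
  classical
  rw [← Finset.prod_filter_mul_prod_filter_not Finset.univ (fun i => i ∈ range e)]
  congr 1
  · symm
    refine Finset.prod_nbij e ?_ (he.injOn) ?_ (fun _ _ => rfl)
    · intro k _; simp
    · intro i hi
      simp at hi
      obtain ⟨k, rfl⟩ := hi
      exact ⟨k, by simp, rfl⟩

noncomputable def EE (e : κ → ι) (u : ι → ℂ) (w : ι → ℝ) : ℝ := ∏ i ∈ farS e, ‖u i‖ ^ max (w i) 0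
noncomputable def FF (e : κ → ι) (u : ι → ℂ) (w : ι → ℝ) (x : ℂ) : ℝ :=
  AA (u ∘ e) (w ∘ e) x * ∏ i ∈ farS e, ‖1 - x / u i‖ ^ max (w i) 0

theorem AA_split (he : Function.Injective e) {u : ι → ℂ} {w : ι → ℝ} (hu : ∀ i ∈ farS e, u i ≠ 0) (x : ℂ) :
    AA u w x = EE e u w * FF e u w x := by
  unfold FF EE
  rw [AA, prod_split he]
  rw [mul_left_comm, ← Finset.prod_mul_distrib]
  unfold AA
  congr 1
  refine Finset.prod_congr rfl fun i hi => ?_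
  rw [← Real.mul_rpow (norm_nonneg _) (norm_nonneg _), ← norm_mul, norm_sub_rev]
  congr 2
  have := hu i hi
  field_simp

theorem Pers.far' (h : Pers l u w e ub wb) {i : ι} (hi : i ∈ farS e) :
    Tendsto (fun n => u n i) l (Bornology.cobounded ℂ) := h.far i (by simpa [farS] using hi)

theorem Pers.far_ne (h : Pers l u w e ub wb) : ∀ᶠ n in l, ∀ i ∈ farS e, u n i ≠ 0 := by
  rw [Filter.eventually_all_finset]
  intro i hi
  have := (h.far' hi).eventually (Bornology.isBounded_def.mp (Metric.isBounded_closedBall (x := (0:ℂ)) (r := 1)))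
  filter_upwards [this] with n hn h0
  rw [h0] at hn; simp at hn

theorem FF_lim (h : Pers l u w e ub wb) (x : ℂ) :
    Tendsto (fun p : β × ℂ => FF e (u p.1) (w p.1) p.2) (l ×ˢ 𝓝 x) (𝓝 (AA ub (wb ∘ e) x)) := by
  have hw := h.lcfg.choose_spec.w_ne
  rw [← mul_one (AA ub (wb ∘ e) x)]
  have h2 : (1:ℝ) = ∏ i ∈ farS e, ‖1 - x * 0‖ ^ max (wb i) 0 := by simp
  rw [h2]
  refine Tendsto.mul ?_ ?_
  · unfold AA
    refine tendsto_finsetProd _ fun k _ => ?_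
    have hx : Tendsto (fun p : β × ℂ => ‖p.2 - u p.1 (e k)‖) (l ×ˢ 𝓝 x) (𝓝 ‖x - ub k‖) :=
      (tendsto_snd.sub ((h.near k).comp tendsto_fst)).norm
    have hm : Tendsto (fun p : β × ℂ => max (w p.1 (e k)) 0) (l ×ˢ 𝓝 x) (𝓝 (max (wb (e k)) 0)) :=
      (((h.wlim (e k)).comp tendsto_fst).max tendsto_const_nhds)
    rcases lt_or_gt_of_ne (hw k) with hk | hk
    · have hk : wb (e k) < 0 := hk
      have : ∀ᶠ p in l ×ˢ 𝓝 x, w p.1 (e k) < 0 :=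
        ((h.wlim (e k)).comp tendsto_fst).eventually (gt_mem_nhds hk)
      simp only [Function.comp, max_eq_right hk.le, Real.rpow_zero]
      refine tendsto_const_nhds.congr' ?_
      filter_upwards [this] with p hp
      rw [max_eq_right hp.le, Real.rpow_zero]
    · have hk : 0 < wb (e k) := hk
      refine hx.rpow hm (Or.inr ?_)
      simp [hk]
  · refine tendsto_finsetProd _ fun i hi => ?_
    refine Tendsto.rpow ?_ (((h.wlim i).comp tendsto_fst).max tendsto_const_nhds) (Or.inl (by simp))
    have : Tendsto (fun p : β × ℂ => (u p.1 i)⁻¹) (l ×ˢ 𝓝 x) (𝓝 0) :=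
      tendsto_inv₀_cobounded.comp ((h.far' hi).comp tendsto_fst)
    simp only [div_eq_mul_inv]
    exact (tendsto_const_nhds.sub (tendsto_snd.mul this)).norm

theorem ev_compact {K : Set ℂ} (hK : IsCompact K) {P : β → ℂ → Prop}
    (h : ∀ x ∈ K, ∀ᶠ p : β × ℂ in l ×ˢ 𝓝 x, P p.1 p.2) : ∀ᶠ n in l, ∀ x ∈ K, P n x := by
  have := hK.mem_prod_nhdsSet_of_forall (l := l) (s := {p : β × ℂ | P p.1 p.2}) h
  obtain ⟨s, hs, t, ht, hst⟩ := mem_prod_iff.mp this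
  filter_upwards [hs] with n hn x hx
  have : (n, x) ∈ s ×ˢ t := ⟨hn, subset_of_mem_nhdsSet ht hx⟩
  exact hst this

theorem exists_pos_w [Nontrivial κ] {c : κ → ℂ} {w : κ → ℝ} (h : Cfg c w) : ∃ k, 0 < w k := by
  obtain ⟨L, h⟩ := h
  by_contra hh
  push Not at hh
  have h1 : ∑ k, w k < ∑ k : κ, (0:ℝ) :=
    Finset.sum_lt_sum_of_nonempty Finset.univ_nonempty fun k _ => lt_of_le_of_ne (hh k) (h.w_ne k)
  rw [h.sum_zero] at h1
  simp at h1

theorem EE_pos {u : ι → ℂ} {w : ι → ℝ} (hu : ∀ i ∈ farS e, u i ≠ 0) : 0 < EE e u w :=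
  Finset.prod_pos fun i hi => Real.rpow_pos_of_pos (norm_pos_iff.mpr (hu i hi)) _

theorem sphere_meet {S : Set ℂ} (hS : IsPreconnected S) (hb : ¬ Bornology.IsBounded S) {x : ℂ} (hx : x ∈ S)
    {r : ℝ} (hr : ‖x‖ < r) : ∃ y ∈ S, ‖y‖ = r := by
  have : ∃ y ∈ S, y ∉ Metric.ball (0:ℂ) r := by
    by_contra hh
    push Not at hh
    exact hb (Metric.isBounded_ball.subset hh)
  obtain ⟨y, hy, hy'⟩ := this
  obtain ⟨z, hz, hz'⟩ := front_meet hS Metric.isOpen_ball hx (by simpa using hr) hy hy'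
  refine ⟨z, hz, ?_⟩
  have := Metric.frontier_ball_subset_sphere hz'
  simpa using this

theorem kap_aux [Nontrivial ι] [Nontrivial κ] (h : Pers l u w e ub wb) {δ : ℝ} (hδ : 1 < δ) :
    ∀ᶠ n in l, EE e (u n) (w n) < δ * EE e (u n) (-w n) := by
  obtain ⟨k0, hk0⟩ := exists_pos_w h.lcfg
  obtain ⟨L, hL⟩ := h.lcfg
  have hpot := hL.isPot
  have hε : 0 < (δ - 1) / (δ + 1) := div_pos (by linarith) (by linarith)
  have h1 : ∀ᶠ x in cocompact ℂ, -((δ - 1) / (δ + 1)) < pot ub (wb ∘ e) x :=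
    hpot.lim.eventually (lt_mem_nhds (by linarith))
  rw [← Metric.cobounded_eq_cocompact] at h1
  obtain ⟨r0, -, hr0⟩ := (Metric.hasBasis_cobounded_compl_closedBall (0:ℂ)).mem_iff.mp h1
  set r := max r0 ‖ub k0‖ + 1 with hr
  have hsph : ∀ x ∈ Metric.sphere (0:ℂ) r, AA ub (-(wb ∘ e)) x < δ * AA ub (wb ∘ e) x := by
    intro x hx
    have hx : ‖x‖ = r := by simpa using hx
    have h2 : -((δ - 1) / (δ + 1)) < pot ub (wb ∘ e) x := by
      have : x ∈ (Metric.closedBall (0:ℂ) r0)ᶜ := by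
        simp only [mem_compl_iff, Metric.mem_closedBall, dist_zero_right, not_le, hx, hr]
        have := le_max_left r0 ‖ub k0‖
        linarith
      exact hr0 this
    have h3 := AA_sum_pos (w := wb ∘ e) (x := x) hL.inj
    unfold pot at h2
    rw [← neg_div, div_lt_div_iff₀ (by linarith) h3] at h2
    linarith
  have h2 : ∀ᶠ n in l, ∀ x ∈ Metric.sphere (0:ℂ) r,
      FF e (u n) (-w n) x < δ * FF e (u n) (w n) x := by
    refine ev_compact (isCompact_sphere _ _) (P := fun n x => FF e (u n) (-w n) x < δ * FF e (u n) (w n) x) ?_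
    intro x hx
    exact (FF_lim h.neg x).eventually_lt ((FF_lim h x).const_mul δ) (hsph x hx)
  have h3 : ∀ᶠ n in l, u n (e k0) ∈ Metric.ball (0:ℂ) r :=
    (h.near k0).eventually (Metric.isOpen_ball.mem_nhds (by
      simp only [Metric.mem_ball, dist_zero_right, hr]
      have := le_max_right r0 ‖ub k0‖
      linarith))
  have h4 : ∀ᶠ n in l, 0 < w n (e k0) := (h.wlim (e k0)).eventually (lt_mem_nhds hk0)
  filter_upwards [h2, h3, h4, h.cfg, h.far_ne] with n h2 h3 h4 ⟨Ln, h5⟩ h6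
  by_contra hcon
  push Not at hcon
  have hlo := pot_lo h5.inj h4
  obtain ⟨y, hy, hyr⟩ := sphere_meet Lo_pre (T5 h5.isPot hlo) (mem_Lo (by rw [hlo]; norm_num))
    (by simpa using h3)
  have hneg := Lo_lt hy
  have h7 := h2 y (by simpa using hyr)
  have h8 := AA_sum_pos (w := w n) (x := y) h5.inj
  unfold pot at hneg
  rw [div_neg_iff] at hneg
  have h9 : AA (u n) (w n) y < AA (u n) (-w n) y := by
    rcases hneg with hneg | hneg <;> linarith
  rw [AA_split h.einj h6, AA_split h.einj h6] at h9
  have e1 : 0 < EE e (u n) (-w n) := EE_pos h6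
  have e2 : 0 ≤ FF e (u n) (w n) y := by
    refine mul_nonneg AA_nonneg (Finset.prod_nonneg fun i _ => Real.rpow_nonneg (norm_nonneg _) _)
  have e3 := mul_le_mul_of_nonneg_right hcon e2
  have e4 := mul_lt_mul_of_pos_left h7 e1
  nlinarith

theorem kap_lim [Nontrivial ι] [Nontrivial κ] (h : Pers l u w e ub wb) :
    Tendsto (fun n => EE e (u n) (w n) / EE e (u n) (-w n)) l (𝓝 1) := by
  rw [tendsto_order]
  constructor
  · intro a ha
    rcases le_or_gt a 0 with h0 | h0
    · filter_upwards [h.far_ne] with n hn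
      exact lt_of_le_of_lt h0 (div_pos (EE_pos hn) (EE_pos hn))
    · have := kap_aux h.neg (δ := a⁻¹) ((one_lt_inv₀ h0).mpr ha)
      filter_upwards [h.far_ne, this] with n hn h1
      rw [neg_neg] at h1
      rw [lt_div_iff₀ (EE_pos hn)]
      rw [inv_mul_eq_div, lt_div_iff₀ h0] at h1
      linarith
  · intro a ha
    filter_upwards [h.far_ne, kap_aux h ha] with n hn h1
    rwa [div_lt_iff₀ (EE_pos hn)]

theorem pot_lim [Nontrivial ι] [Nontrivial κ] (h : Pers l u w e ub wb) (x : ℂ) :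
    Tendsto (fun p : β × ℂ => pot (u p.1) (w p.1) p.2) (l ×ˢ 𝓝 x) (𝓝 (pot ub (wb ∘ e) x)) := by
  have hinj := h.lcfg.choose_spec.inj
  have hk : Tendsto (fun p : β × ℂ => EE e (u p.1) (w p.1) / EE e (u p.1) (-w p.1)) (l ×ˢ 𝓝 x) (𝓝 1) :=
    (kap_lim h).comp tendsto_fst
  have h1 := hk.mul (FF_lim h x)
  rw [one_mul] at h1
  have h2 := FF_lim h.neg x
  have h3 := (h1.sub h2).div (h1.add h2) (AA_sum_pos (w := wb ∘ e) (x := x) hinj).ne'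
  refine h3.congr' ?_
  have h4 : ∀ᶠ p : β × ℂ in l ×ˢ 𝓝 x, ∀ i ∈ farS e, u p.1 i ≠ 0 := tendsto_fst.eventually h.far_ne
  filter_upwards [h4] with p hp
  unfold pot
  have e1 : 0 < EE e (u p.1) (-w p.1) := EE_pos hp
  rw [AA_split h.einj hp, AA_split h.einj hp]
  simp only [Pi.sub_apply, Pi.add_apply, Pi.div_apply]
  rw [← mul_div_mul_left _ _ e1.ne']
  congr 1
  · field_simp
  · field_simp

theorem Lo_pers [Nontrivial ι] [Nontrivial κ] (h : Pers l u w e ub wb) {k : κ} {z : ℂ}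
    (hz : z ∈ Lo (pot ub (wb ∘ e)) 0 (ub k)) : ∀ᶠ n in l, z ∈ Lo (pot (u n) (w n)) 0 (u n (e k)) := by
  obtain ⟨L, hL⟩ := h.lcfg
  have hpot := hL.isPot
  have hk : pot ub (wb ∘ e) (ub k) < 0 := Lo_pos hz
  have hconn : IsConnected (Lo (pot ub (wb ∘ e)) 0 (ub k)) := ⟨⟨z, hz⟩, Lo_pre⟩
  have hpath := ((Lo_open hpot).isConnected_iff_isPathConnected.mp hconn).joinedIn _ (mem_Lo hk) _ hz
  obtain ⟨γ, hγ⟩ := hpath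
  obtain ⟨ρ, hρ, hball⟩ := Metric.isOpen_iff.mp (isOpen_lt hpot.cont continuous_const) (ub k) hk
  set K : Set ℂ := range γ ∪ Metric.closedBall (ub k) (ρ / 2) with hKdef
  have hK : IsCompact K := (isCompact_range γ.continuous).union (isCompact_closedBall _ _)
  have hKpre : IsPreconnected K := by
    refine IsPreconnected.union (ub k) ⟨0, by simp⟩ (by simp; positivity)
      (isPreconnected_range γ.continuous) (convex_closedBall _ _).isPreconnected
  have hKlt : ∀ x ∈ K, pot ub (wb ∘ e) x < 0 := by
    rintro x (⟨t, rfl⟩ | hx)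
    · exact Lo_lt (hγ t)
    · exact hball (Metric.closedBall_subset_ball (by linarith) hx)
  have h1 : ∀ᶠ n in l, ∀ x ∈ K, pot (u n) (w n) x < 0 :=
    ev_compact hK (P := fun n x => pot (u n) (w n) x < 0) fun x hx =>
      (pot_lim h x).eventually (gt_mem_nhds (hKlt x hx))
  have h2 : ∀ᶠ n in l, u n (e k) ∈ Metric.closedBall (ub k) (ρ / 2) :=
    (h.near k).eventually (Metric.closedBall_mem_nhds _ (by positivity))
  filter_upwards [h1, h2] with n h1 h2
  exact hKpre.subset_connectedComponentIn (Or.inr h2) h1 (Or.inl ⟨1, by simp⟩)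

theorem S_lim (h : Pers l u w e ub wb) {x : ℂ} (hx : ∀ k, x ≠ ub k) :
    Tendsto (fun p : β × ℂ => ∑ i, (w p.1 i : ℂ) / (p.2 - u p.1 i)) (l ×ˢ 𝓝 x)
      (𝓝 (∑ k, ((wb ∘ e) k : ℂ) / (x - ub k))) := by
  classical
  have hsplit : ∀ f : ι → ℂ, ∑ i, f i = (∑ k, f (e k)) + ∑ i ∈ farS e, f i := by
    intro f
    rw [← Finset.sum_filter_add_sum_filter_not Finset.univ (fun i => i ∈ range e)]
    congr 1
    · symm
      refine Finset.sum_nbij e ?_ (h.einj.injOn) ?_ (fun _ _ => rfl)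
      · intro k _; simp
      · intro i hi
        simp at hi
        obtain ⟨k, rfl⟩ := hi
        exact ⟨k, by simp, rfl⟩
  simp only [hsplit]
  rw [← add_zero (∑ k, ((wb ∘ e) k : ℂ) / (x - ub k))]
  have hw : ∀ i, Tendsto (fun p : β × ℂ => (w p.1 i : ℂ)) (l ×ˢ 𝓝 x) (𝓝 (wb i : ℂ)) := fun i =>
    (Complex.continuous_ofReal.tendsto _).comp ((h.wlim i).comp tendsto_fst)
  refine Tendsto.add ?_ ?_
  · refine tendsto_finsetSum _ fun k _ => ?_
    exact (hw (e k)).div (tendsto_snd.sub ((h.near k).comp tendsto_fst)) (sub_ne_zero.mpr (hx k))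
  · rw [← Finset.sum_const_zero (s := farS e)]
    refine tendsto_finsetSum _ fun i hi => ?_
    rw [← mul_zero (wb i : ℂ)]
    simp only [div_eq_mul_inv]
    refine (hw i).mul ?_
    refine tendsto_inv₀_cobounded.comp ?_
    rw [← tendsto_norm_atTop_iff_cobounded]
    have h1 : Tendsto (fun p : β × ℂ => ‖u p.1 i‖) (l ×ˢ 𝓝 x) atTop :=
      tendsto_norm_cobounded_atTop.comp ((h.far' hi).comp tendsto_fst)
    have h2 : Tendsto (fun p : β × ℂ => -‖p.2‖) (l ×ˢ 𝓝 x) (𝓝 (-‖x‖)) := tendsto_snd.norm.neg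
    refine tendsto_atTop_mono (fun p => ?_) (h1.atTop_add h2)
    have := norm_sub_norm_le (u p.1 i) p.2
    rw [norm_sub_rev] at this
    linarith

theorem avoid_lim (h : Pers l u w e ub wb) {x : ℂ} (hx : ∀ k, x ≠ ub k) :
    ∀ᶠ p : β × ℂ in l ×ˢ 𝓝 x, ∀ i, p.2 ≠ u p.1 i := by
  rw [eventually_all]
  intro i
  by_cases hi : i ∈ range e
  · obtain ⟨k, rfl⟩ := hi
    have := (tendsto_snd (f := l) (g := 𝓝 x)).sub ((h.near k).comp tendsto_fst)
    filter_upwards [this.eventually_ne (sub_ne_zero.mpr (hx k))] with p hp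
    exact sub_ne_zero.mp hp
  · have h1 := ((h.far i hi).comp (tendsto_fst (f := l) (g := 𝓝 x))).eventually
      (Bornology.isBounded_def.mp (Metric.isBounded_ball (x := x) (r := 1)))
    have h2 := (tendsto_snd (f := l) (g := 𝓝 x)).eventually (Metric.ball_mem_nhds x one_pos)
    filter_upwards [h1, h2] with p h1 h2 h3
    rw [h3] at h2
    exact h1 h2

theorem pot_line_mono {c : ι → ℂ} {w : ι → ℝ} {x0 v : ℂ} {s0 s1 : ℝ}
    (ha : ∀ t ∈ Icc s0 s1, ∀ k, x0 + t * v ≠ c k)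
    (hp : ∀ t ∈ Ioo s0 s1, 0 < (v * ∑ k, (w k : ℂ) / (x0 + t * v - c k)).re) :
    StrictMonoOn (pot c w ∘ fun t : ℝ => x0 + t * v) (Icc s0 s1) := by
  have hd : ∀ t ∈ Icc s0 s1, HasDerivAt (fun t : ℝ => hh c w (x0 + t * v))
      (v * ∑ k, (w k : ℂ) / (x0 + t * v - c k)).re t := by
    intro t ht
    have hγ : HasDerivAt (fun t : ℝ => x0 + t * v) v t := by
      have := ((Complex.ofRealCLM.hasDerivAt (x := t)).mul_const v).const_add x0
      simpa using this
    exact hh_curve hγ (ha t ht)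
  have hm : StrictMonoOn (fun t : ℝ => hh c w (x0 + t * v)) (Icc s0 s1) := by
    refine strictMonoOn_of_deriv_pos (convex_Icc _ _) (fun t ht => (hd t ht).continuousAt.continuousWithinAt) ?_
    intro t ht
    rw [interior_Icc] at ht
    rw [(hd t ⟨ht.1.le, ht.2.le⟩).deriv]
    exact hp t ht
  intro s hs t ht hst
  simp only [Function.comp]
  rw [pot_eq (ha s hs), pot_eq (ha t ht), TT_lt]
  exact hm hs ht hst

theorem Cross_pers [Nontrivial ι] [Nontrivial κ] (h : Pers l u w e ub wb) {a b : κ}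
    (hab : Cross (pot ub (wb ∘ e)) (ub a) (ub b)) :
    ∀ᶠ n in l, Cross (pot (u n) (w n)) (u n (e a)) (u n (e b)) := by
  obtain ⟨L, hL⟩ := h.lcfg
  have hpot := hL.isPot
  obtain ⟨x0, hx0, hxa, hxb⟩ := hab
  have hav : ∀ k, x0 ≠ ub k := by
    rintro k rfl
    rcases lt_or_gt_of_ne (hL.w_ne k) with h1 | h1
    · rw [pot_hi hL.inj h1] at hx0; norm_num at hx0
    · rw [pot_lo hL.inj h1] at hx0; norm_num at hx0
  set f := ∑ k, ((wb ∘ e) k : ℂ) / (x0 - ub k) with hf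
  have hf0 : f ≠ 0 := by
    rw [hf, hL.inv hav]
    exact div_ne_zero hL.1 (Finset.prod_ne_zero_iff.mpr fun k _ => sub_ne_zero.mpr (hav k))
  set v := f⁻¹ with hv
  have hvf : (v * f).re = 1 := by rw [hv, inv_mul_cancel₀ hf0]; simp
  obtain ⟨O1, hO1, hxO1, hs1, -⟩ := Lo_loc hpot (by norm_num) (by norm_num) hx0 hxa
  obtain ⟨O2, hO2, hxO2, hs2, -⟩ := Lo_loc hpot.neg (by norm_num) (by norm_num) (by simp [hx0]) hxb
  have c1 : ContinuousAt (fun y => (v * ∑ k, ((wb ∘ e) k : ℂ) / (y - ub k)).re) x0 := by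
    refine Complex.continuous_re.continuousAt.comp (ContinuousAt.mul continuousAt_const ?_)
    exact tendsto_finsetSum _ fun k _ => ContinuousAt.div continuousAt_const
      (continuousAt_id.sub continuousAt_const) (sub_ne_zero.mpr (hav k))
  have n1 : ∀ᶠ y in 𝓝 x0, 0 < (v * ∑ k, ((wb ∘ e) k : ℂ) / (y - ub k)).re :=
    c1.eventually (lt_mem_nhds (by show 0 < (v * f).re; rw [hvf]; norm_num))
  have n2 : ∀ᶠ p : β × ℂ in l ×ˢ 𝓝 x0, 0 < (v * ∑ i, (w p.1 i : ℂ) / (p.2 - u p.1 i)).re := by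
    have := (Complex.continuous_re.tendsto _).comp ((S_lim h hav).const_mul v)
    exact this.eventually (lt_mem_nhds (by show 0 < (v * f).re; rw [hvf]; norm_num))
  obtain ⟨A, hA, N, hN, hAN⟩ := mem_prod_iff.mp (n2.and (avoid_lim h hav))
  have hAN' : ∀ n ∈ A, ∀ y ∈ N, 0 < (v * ∑ i, (w n i : ℂ) / (y - u n i)).re ∧ ∀ i, y ≠ u n i := by
    intro n hn y hy
    have h1 : (n, y) ∈ A ×ˢ N := ⟨hn, hy⟩
    have h2 := hAN h1
    exact h2
  have hNN : N ∩ ({y | ∀ k, y ≠ ub k} ∩ ({y | 0 < (v * ∑ k, ((wb ∘ e) k : ℂ) / (y - ub k)).re} ∩ (O1 ∩ O2))) ∈ 𝓝 x0 :=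
    inter_mem hN (inter_mem (nhds_avoid hav) (inter_mem n1
      (inter_mem (hO1.mem_nhds hxO1) (hO2.mem_nhds hxO2))))
  have hline : Continuous fun t : ℝ => x0 + t * v := by fun_prop
  have : ∀ᶠ t : ℝ in 𝓝 0, x0 + t * v ∈ N ∩ ({y | ∀ k, y ≠ ub k} ∩
      ({y | 0 < (v * ∑ k, ((wb ∘ e) k : ℂ) / (y - ub k)).re} ∩ (O1 ∩ O2))) :=
    (hline.tendsto 0).eventually (by
      have h0 : x0 + ((0:ℝ):ℂ) * v = x0 := by simp
      rw [h0]; exact hNN)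
  obtain ⟨ε0, hε0, hε⟩ := Metric.mem_nhds_iff.mp this
  set ε := ε0 / 2 with hεd
  have hεp : 0 < ε := by positivity
  have hI : ∀ t ∈ Icc (-ε) ε, x0 + t * v ∈ N ∩ ({y | ∀ k, y ≠ ub k} ∩
      ({y | 0 < (v * ∑ k, ((wb ∘ e) k : ℂ) / (y - ub k)).re} ∩ (O1 ∩ O2))) := by
    intro t ht
    refine hε ?_
    simp only [Metric.mem_ball, dist_zero_right, Real.norm_eq_abs]
    rw [abs_lt]
    constructor <;> linarith [ht.1, ht.2]
  have hm := pot_line_mono (c := ub) (w := wb ∘ e) (x0 := x0) (v := v) (s0 := -ε) (s1 := ε)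
    (fun t ht => (hI t ht).2.1) (fun t ht => (hI t ⟨ht.1.le, ht.2.le⟩).2.2.1)
  have m0 : (-ε) ∈ Icc (-ε) ε := ⟨le_rfl, by linarith⟩
  have m1 : ε ∈ Icc (-ε) ε := ⟨by linarith, le_rfl⟩
  have mm : (0:ℝ) ∈ Icc (-ε) ε := ⟨by linarith, by linarith⟩
  have l0 := hm m0 mm (by linarith)
  have l1 := hm mm m1 (by linarith)
  simp only [Function.comp_apply, Complex.ofReal_zero, zero_mul, add_zero, hx0] at l0 l1
  have p0 := Lo_pers h (hs1 ⟨(hI _ m0).2.2.2.1, l0⟩)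
  have p1 := Lo_pers h.neg (k := b) (z := x0 + (ε:ℝ) * v) (by
    have := hs2 ⟨(hI _ m1).2.2.2.2, by show -pot ub (wb ∘ e) _ < 0; linarith⟩
    rw [← pot_neg] at this
    exact this)
  filter_upwards [p0, p1, hA, h.cfg] with n p0 p1 hn ⟨Ln, hLn⟩
  have key : ∀ t ∈ Icc (-ε) ε, 0 < (v * ∑ i, (w n i : ℂ) / (x0 + t * v - u n i)).re ∧
      ∀ i, x0 + t * v ≠ u n i := by
    intro t ht
    exact hAN' n hn _ (hI t ht).1
  refine cross_of_mono (γ := fun t : ℝ => x0 + t * v) (by linarith : -ε < ε) (pot_cont hLn.inj)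
    hline.continuousOn ?_ p0 (by rw [← pot_neg]; exact p1)
  exact pot_line_mono (fun t ht => (key t ht).2) (fun t ht => (key t ⟨ht.1.le, ht.2.le⟩).1)

theorem Gr_pers [Nontrivial ι] [Nontrivial κ] (h : Pers l u w e ub wb) :
    ∀ᶠ n in l, ∀ a b, (Gr ub (wb ∘ e)).Adj a b → (Gr (u n) (w n)).Adj (e a) (e b) := by
  have key : ∀ a b, 0 < wb (e a) → wb (e b) < 0 → Cross (pot ub (wb ∘ e)) (ub a) (ub b) →
      ∀ᶠ n in l, 0 < w n (e a) ∧ w n (e b) < 0 ∧ Cross (pot (u n) (w n)) (u n (e a)) (u n (e b)) := by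
    intro a b h1 h2 h3
    exact ((h.wlim (e a)).eventually (lt_mem_nhds h1)).and
      (((h.wlim (e b)).eventually (gt_mem_nhds h2)).and (Cross_pers h h3))
  rw [eventually_all]; intro a
  rw [eventually_all]; intro b
  by_cases hab : (Gr ub (wb ∘ e)).Adj a b
  · rcases hab with ⟨h1, h2, h3⟩ | ⟨h1, h2, h3⟩
    · filter_upwards [key a b h1 h2 h3] with n hn _
      exact Or.inl hn
    · filter_upwards [key b a h1 h2 h3] with n hn _
      exact Or.inr hn
  · exact Eventually.of_forall fun n hh => absurd hh hab

end pers

end Zan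

open Set Filter Topology

namespace Zan

section etale
set_option linter.unusedSectionVars false
variable {ι : Type*} [Fintype ι]

open Polynomial in
theorem vander {c : ι → ℂ} (hc : Function.Injective c) {M : ℕ} (hM : M ≤ Fintype.card ι) (z : Fin M → ℂ) :
    ∃ x : ι → ℂ, ∀ j : Fin M, ∑ k, c k ^ (j:ℕ) * x k = z j := by
  classical
  refine ⟨fun k => ∑ i : Fin M, z i * (Lagrange.basis Finset.univ c k).coeff i, fun j => ?_⟩
  have h1 : ∀ m : ℕ, m < Fintype.card ι → ∑ k, C (c k ^ m) * Lagrange.basis Finset.univ c k = X ^ m := by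
    intro m hm
    have := Lagrange.eq_interpolate (s := Finset.univ) (v := c) (f := (X ^ m : ℂ[X])) hc.injOn
      (by rw [degree_X_pow, Finset.card_univ]; exact_mod_cast hm)
    rw [Lagrange.interpolate_apply] at this
    simpa using this.symm
  have h2 := h1 j (lt_of_lt_of_le j.2 hM)
  calc ∑ k, c k ^ (j:ℕ) * ∑ i : Fin M, z i * (Lagrange.basis Finset.univ c k).coeff i
      = ∑ i : Fin M, z i * ∑ k, c k ^ (j:ℕ) * (Lagrange.basis Finset.univ c k).coeff i := by
        simp only [Finset.mul_sum]
        rw [Finset.sum_comm]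
        refine Finset.sum_congr rfl fun i _ => Finset.sum_congr rfl fun k _ => by ring
    _ = ∑ i : Fin M, z i * (if (i:ℕ) = j then 1 else 0) := by
        refine Finset.sum_congr rfl fun i _ => ?_
        have := congrArg (fun P => coeff P (i:ℕ)) h2
        simp only [finsetSum_coeff, coeff_C_mul, coeff_X_pow] at this
        rw [this]
    _ = z j := by
        rw [Finset.sum_eq_single j]
        · simp
        · intro i _ hij
          have : (i:ℕ) ≠ j := fun h => hij (Fin.ext h)
          simp [this]
        · simp

noncomputable def Psi (M : ℕ) (p : (ι → ℂ) × (ι → ℂ)) : (Fin M → ℂ) × (ι → ℂ) :=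
  (fun j => ∑ k, p.2 k * p.1 k ^ ((j:ℕ) + 1), p.2)

theorem etale {c0 w0 : ι → ℂ} (hc : Function.Injective c0) (hw : ∀ k, w0 k ≠ 0) {M : ℕ}
    (hM : M ≤ Fintype.card ι) {N : Set (ι → ℂ)} (hN : N ∈ 𝓝 c0) :
    ∀ᶠ p : (Fin M → ℂ) × (ι → ℂ) in 𝓝 (Psi M (c0, w0)),
      ∃ c ∈ N, ∀ j : Fin M, ∑ k, p.2 k * c k ^ ((j:ℕ) + 1) = p.1 j := by
  let πc : ι → ((ι → ℂ) × (ι → ℂ) →L[ℂ] ℂ) := fun k =>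
    (ContinuousLinearMap.proj k).comp (ContinuousLinearMap.fst ℂ (ι → ℂ) (ι → ℂ))
  let πw : ι → ((ι → ℂ) × (ι → ℂ) →L[ℂ] ℂ) := fun k =>
    (ContinuousLinearMap.proj k).comp (ContinuousLinearMap.snd ℂ (ι → ℂ) (ι → ℂ))
  let D1 : Fin M → ((ι → ℂ) × (ι → ℂ) →L[ℂ] ℂ) := fun j =>
    ∑ k, (w0 k • (((j:ℕ) + 1 : ℂ) * c0 k ^ (j:ℕ)) • πc k + c0 k ^ ((j:ℕ) + 1) • πw k)
  let D : (ι → ℂ) × (ι → ℂ) →L[ℂ] (Fin M → ℂ) × (ι → ℂ) :=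
    (ContinuousLinearMap.pi D1).prod (ContinuousLinearMap.snd ℂ (ι → ℂ) (ι → ℂ))
  have hD : HasStrictFDerivAt (Psi M) D (c0, w0) := by
    refine HasStrictFDerivAt.prodMk ?_ (ContinuousLinearMap.snd ℂ (ι → ℂ) (ι → ℂ)).hasStrictFDerivAt
    rw [hasStrictFDerivAt_pi]
    intro j
    refine HasStrictFDerivAt.fun_sum fun k _ => ?_
    have h1 : HasStrictFDerivAt (fun p : (ι → ℂ) × (ι → ℂ) => p.1 k) (πc k) (c0, w0) :=
      (πc k).hasStrictFDerivAt
    have h2 : HasStrictFDerivAt (fun p : (ι → ℂ) × (ι → ℂ) => p.2 k) (πw k) (c0, w0) :=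
      (πw k).hasStrictFDerivAt
    have h3 := h2.mul (h1.pow ((j:ℕ) + 1))
    refine h3.congr_fderiv ?_
    refine ContinuousLinearMap.ext fun v => ?_
    simp
  have hsurj : D.range = ⊤ := by
    rw [LinearMap.range_eq_top]
    rintro ⟨y, η⟩
    obtain ⟨x, hx⟩ := vander hc hM (fun j => (y j - ∑ k, c0 k ^ ((j:ℕ) + 1) * η k) / ((j:ℕ) + 1 : ℂ))
    refine ⟨(fun k => x k / w0 k, η), ?_⟩
    refine Prod.ext ?_ rfl
    funext j
    have hj : ((j:ℕ) + 1 : ℂ) ≠ 0 := Nat.cast_add_one_ne_zero (j:ℕ)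
    have := hx j
    rw [eq_div_iff hj] at this
    simp only [D, D1, πc, πw, ContinuousLinearMap.coe_coe, ContinuousLinearMap.prod_apply,
      ContinuousLinearMap.pi_apply, _root_.sum_apply, _root_.add_apply,
      _root_.smul_apply, ContinuousLinearMap.comp_apply, ContinuousLinearMap.proj_apply,
      ContinuousLinearMap.coe_fst', ContinuousLinearMap.coe_snd', smul_eq_mul, Finset.sum_add_distrib]
    rw [← eq_sub_iff_add_eq, ← this, Finset.sum_mul]
    refine Finset.sum_congr rfl fun k _ => ?_
    have := hw k
    field_simp
  have hmap := hD.map_nhds_eq_of_surj hsurj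
  have : Psi M '' (N ×ˢ univ) ∈ 𝓝 (Psi M (c0, w0)) := by
    rw [← hmap]
    exact image_mem_map (prod_mem_nhds hN univ_mem)
  filter_upwards [this] with p hp
  obtain ⟨⟨c, w⟩, ⟨hcN, -⟩, rfl⟩ := hp
  exact ⟨c, hcN, fun j => rfl⟩

theorem inj_nhds {c0 : ι → ℂ} (hc : Function.Injective c0) : {c : ι → ℂ | Function.Injective c} ∈ 𝓝 c0 := by
  have : ∀ᶠ c : ι → ℂ in 𝓝 c0, ∀ k l, k ≠ l → c k ≠ c l := by
    rw [eventually_all]; intro k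
    rw [eventually_all]; intro l
    by_cases hkl : k = l
    · exact Eventually.of_forall fun c h => absurd hkl h
    · have h1 : Tendsto (fun c : ι → ℂ => c k - c l) (𝓝 c0) (𝓝 (c0 k - c0 l)) :=
        ((continuous_apply k).sub (continuous_apply l)).tendsto c0
      filter_upwards [h1.eventually_ne (sub_ne_zero.mpr fun h => hkl (hc h))] with c hc' _
      exact sub_ne_zero.mp hc'
  filter_upwards [this] with c h k l hkl
  by_contra hne
  exact h k l hne hkl

theorem open_step [Nontrivial ι] {c0 : ι → ℂ} {w0 : ι → ℝ} (h : Cfg c0 w0) :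
    ∀ᶠ w in 𝓝 w0, ∑ k, w k = 0 → ∃ c, Cfg c w ∧ Gr c0 w0 ≤ Gr c w := by
  have hL := h.choose_spec
  set l : Filter ((ι → ℂ) × (ι → ℝ)) := 𝓝 (c0, w0) ⊓ 𝓟 {p | Cfg p.1 p.2} with hl
  have hP : Pers l Prod.fst Prod.snd (id : ι → ι) c0 w0 :=
    { einj := Function.injective_id
      near := fun k => (((continuous_apply k).comp continuous_fst).tendsto (c0, w0)).mono_left inf_le_left
      far := fun i hi => absurd (mem_range_self (f := id) i) hi
      wlim := fun k => (((continuous_apply k).comp continuous_snd).tendsto (c0, w0)).mono_left inf_le_left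
      cfg := mem_inf_of_right (mem_principal_self _)
      lcfg := h }
  have hG := Gr_pers hP
  rw [hl, eventually_inf_principal, nhds_prod_eq] at hG
  obtain ⟨N, hN, W, hW, hNW⟩ := mem_prod_iff.mp hG
  have het := etale (c0 := c0) (w0 := fun k => (w0 k : ℂ)) hL.inj
    (fun k => by exact_mod_cast hL.w_ne k) (M := Fintype.card ι - 1) (Nat.sub_le _ _)
    (inter_mem hN (inj_nhds hL.inj))
  have hcont : Tendsto (fun w : ι → ℝ => ((Psi (Fintype.card ι - 1) (c0, fun k => (w0 k : ℂ))).1,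
      fun k => (w k : ℂ))) (𝓝 w0) (𝓝 (Psi (Fintype.card ι - 1) (c0, fun k => (w0 k : ℂ)))) := by
    have : Continuous (fun w : ι → ℝ => ((Psi (Fintype.card ι - 1) (c0, fun k => (w0 k : ℂ))).1,
      fun k => (w k : ℂ))) := by fun_prop
    exact this.tendsto w0
  have hne : ∀ᶠ w : ι → ℝ in 𝓝 w0, ∀ k, w k ≠ 0 := by
    rw [eventually_all]; intro k
    exact ((continuous_apply k).tendsto w0).eventually_ne (hL.w_ne k)
  filter_upwards [hcont.eventually het, hW, hne] with w ⟨c, ⟨hcN, hci⟩, hc⟩ hwW hwne hs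
  have hcfg : Cfg c w := by
    refine Cfg.of_pow hci hwne fun j hj => ?_
    rcases j with _ | j
    · simp only [pow_zero, mul_one]; exact_mod_cast hs
    · have := hc ⟨j, by omega⟩
      simp only [Psi] at this
      rw [this]
      exact hL.pow hj
  refine ⟨c, hcfg, ?_⟩
  have h1 : (c, w) ∈ N ×ˢ W := ⟨hcN, hwW⟩
  have h2 := hNW h1
  intro a b hab
  exact h2 hcfg a b hab

end etale

end Zan

open Set Filter Topology

namespace Zan

section clus
set_option linter.unusedSectionVars false
variable {β ι κ : Type*} [Fintype ι] [Fintype κ]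
variable {l : Filter β} {u : β → ι → ℂ} {w : β → ι → ℝ} {e : κ → ι} {ub : κ → ℂ} {wb : ι → ℝ}

theorem clus_pers [NeBot l] (einj : Function.Injective e)
    (near : ∀ k, Tendsto (fun n => u n (e k)) l (𝓝 (ub k)))
    (far : ∀ i, i ∉ range e → Tendsto (fun n => u n i) l (Bornology.cobounded ℂ))
    (wlim : ∀ i, Tendsto (fun n => w n i) l (𝓝 (wb i)))
    (cfg : ∀ᶠ n in l, Cfg (u n) (w n)) (hwb : ∀ i, wb i ≠ 0) (k0 : κ)
    (hk0 : ∀ k, k ≠ k0 → ub k ≠ ub k0) : Pers l u w e ub wb := by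
  classical
  refine ⟨einj, near, far, wlim, cfg, ?_⟩
  have hsplit : ∀ f : ι → ℂ, ∏ i, f i = (∏ k, f (e k)) * ∏ i ∈ farS e, f i := by
    intro f
    rw [← Finset.prod_filter_mul_prod_filter_not Finset.univ (fun i => i ∈ range e)]
    congr 1
    · symm
      refine Finset.prod_nbij e ?_ (einj.injOn) ?_ (fun _ _ => rfl)
      · intro k _; simp
      · intro i hi
        simp at hi
        obtain ⟨k, rfl⟩ := hi
        exact ⟨k, by simp, rfl⟩
  have herase : ∀ {γ : Type _} [Fintype γ] (k : γ) (f : γ → ℂ),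
      ∏ i ∈ Finset.univ.erase k, f i = ∏ i, if i = k then 1 else f i := by
    intro γ _ k f
    rw [← Finset.mul_prod_erase Finset.univ (fun i => if i = k then 1 else f i) (Finset.mem_univ k)]
    rw [if_pos rfl, one_mul]
    refine Finset.prod_congr rfl fun i hi => ?_
    rw [if_neg (Finset.ne_of_mem_erase hi)]
  have herase2 : ∀ {γ : Type _} [Fintype γ] (k : γ) (f : γ → ℂ),
      ∏ i ∈ Finset.univ.erase k, f i = ∏ i, if i = k then 1 else f i := by
    intro γ _ k f
    rw [← Finset.mul_prod_erase Finset.univ (fun i => if i = k then 1 else f i) (Finset.mem_univ k)]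
    rw [if_pos rfl, one_mul]
    refine Finset.prod_congr rfl fun i hi => ?_
    rw [if_neg (Finset.ne_of_mem_erase hi)]
  have hmemfar : ∀ i ∈ farS e, i ∉ range e := by
    intro i hi; unfold farS at hi; simpa using hi
  let G : κ → β → ℂ := fun k n => ((w n (e k) : ℂ) * ∏ i ∈ Finset.univ.erase (e k), (u n (e k) - u n i)) /
    ∏ i ∈ farS e, (- u n i)
  have hGlim : ∀ k, Tendsto (G k) l (𝓝 ((wb (e k) : ℂ) * ∏ i ∈ Finset.univ.erase k, (ub k - ub i))) := by
    intro k
    have h1 : ∀ᶠ n in l, ((w n (e k) : ℂ) * ∏ i, if i = k then 1 else (u n (e k) - u n (e i))) *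
        ∏ i ∈ farS e, (1 - u n (e k) * (u n i)⁻¹) = G k n := by
      have hne : ∀ᶠ n in l, ∀ i ∈ farS e, u n i ≠ 0 := by
        rw [Filter.eventually_all_finset]
        intro i hi
        have := (far i (hmemfar i hi)).eventually
          (Bornology.isBounded_def.mp (Bornology.isBounded_singleton (x := (0:ℂ))))
        filter_upwards [this] with n hn h0
        exact hn h0
      filter_upwards [hne] with n hn
      simp only [G]
      rw [herase (e k), hsplit, mul_div_assoc, mul_div_assoc, ← Finset.prod_div_distrib, mul_assoc]
      congr 2
      · refine Finset.prod_congr rfl fun i _ => ?_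
        by_cases hik : i = k
        · simp [hik]
        · rw [if_neg hik, if_neg (fun h => hik (einj h))]
      · refine Finset.prod_congr rfl fun i hi => ?_
        rw [if_neg (fun h => hmemfar i hi ⟨k, h.symm⟩)]
        have := hn i hi
        field_simp
        ring
    refine Tendsto.congr' h1 ?_
    rw [herase2 k]
    have h2 : Tendsto (fun n => ∏ i ∈ farS e, (1 - u n (e k) * (u n i)⁻¹)) l (𝓝 1) := by
      rw [← Finset.prod_const_one (s := farS e)]
      refine tendsto_finsetProd _ fun i hi => ?_
      have h3 := (near k).mul (tendsto_inv₀_cobounded.comp (far i (hmemfar i hi)))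
      have h4 := h3.const_sub 1
      simpa using h4
    rw [← mul_one ((wb (e k) : ℂ) * _)]
    refine Tendsto.mul (Tendsto.mul ?_ ?_) h2
    · exact (Complex.continuous_ofReal.tendsto _).comp (wlim (e k))
    · refine tendsto_finsetProd _ fun i hi => ?_
      by_cases hik : i = k
      · simp [hik]
      · simp only [if_neg hik]; exact (near k).sub (near i)
  have hGeq : ∀ k, G k =ᶠ[l] G k0 := by
    intro k
    filter_upwards [cfg] with n ⟨L, hL⟩
    simp only [G]
    congr 1
    have := (hL.2 (e k)).trans (hL.2 (e k0)).symm
    convert this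
  refine ⟨(wb (e k0) : ℂ) * ∏ i ∈ Finset.univ.erase k0, (ub k0 - ub i), ?_, fun k => ?_⟩
  · refine mul_ne_zero (by exact_mod_cast hwb _) (Finset.prod_ne_zero_iff.mpr fun i hi => ?_)
    exact sub_ne_zero.mpr (hk0 i (Finset.ne_of_mem_erase hi)).symm
  · have := tendsto_nhds_unique ((hGlim k).congr' (hGeq k)) (hGlim k0)
    convert this
    rfl

theorem ultra_lim (U : Ultrafilter β) (f : β → ℂ) :
    (∃ z, Tendsto f U (𝓝 z)) ∨ Tendsto f U (Bornology.cobounded ℂ) := by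
  by_cases h : ∃ r : ℝ, ∀ᶠ n in U, f n ∈ Metric.closedBall (0:ℂ) r
  · left
    obtain ⟨r, hr⟩ := h
    have := (isCompact_closedBall (0:ℂ) r).ultrafilter_le_nhds (U.map f) (by
      rw [le_principal_iff]; exact hr)
    obtain ⟨z, -, hz⟩ := this
    exact ⟨z, hz⟩
  · right
    push Not at h
    rw [← tendsto_norm_atTop_iff_cobounded, tendsto_atTop]
    intro r
    filter_upwards [h r] with n hn
    simp at hn
    exact hn.le

theorem reach_set {V : Type*} {G : SimpleGraph V} {S : Set V} (h : ∀ x y, G.Adj x y → (x ∈ S ↔ y ∈ S)) {x y : V}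
    (hxy : G.Reachable x y) : x ∈ S ↔ y ∈ S := by
  obtain ⟨p⟩ := hxy
  induction p with
  | nil => rfl
  | cons hadj _ ih => exact (h _ _ hadj).trans ih

theorem cluster (U : Ultrafilter β) [Nontrivial ι] {c : β → ι → ℂ} {T : SimpleGraph ι} (hT : T.Connected)
    (wlim : ∀ i, Tendsto (fun n => w n i) U (𝓝 (wb i))) (hwb : ∀ i, wb i ≠ 0)
    (cfg : ∀ᶠ n in U, Cfg (c n) (w n) ∧ Gr (c n) (w n) = T) (k : ι) :
    (∃ cb, Cfg cb wb ∧ T ≤ Gr cb wb) ∨ ∃ B : Finset ι, k ∈ B ∧ B ≠ Finset.univ ∧ ∃ D : β → ℂ,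
      (∃ m, m ≠ k ∧ D = fun n => c n m - c n k) ∧ (∀ i, i ∈ B ↔ (fun n => c n i - c n k) =O[U] D) ∧
      (∀ i ∈ B, ∀ m, m ≠ i → D =O[U] (fun n => c n m - c n i)) ∧ ∑ i ∈ B, wb i = 0 ∧
      (∀ S : Set ι, (∀ x ∈ B, ∀ y ∈ B, T.Adj x y → (x ∈ S ↔ y ∈ S)) → ∀ x ∈ B, ∀ y ∈ B, (x ∈ S ↔ y ∈ S)) := by
  classical
  obtain ⟨m0, hm0k, hm0⟩ : ∃ m, m ≠ k ∧ ∀ᶠ n in U, ∀ i, i ≠ k → ‖c n m - c n k‖ ≤ ‖c n i - c n k‖ := by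
    have : ∀ᶠ n in U, ∃ m : {m // m ≠ k}, ∀ i, i ≠ k → ‖c n m - c n k‖ ≤ ‖c n i - c n k‖ := by
      refine Eventually.of_forall fun n => ?_
      obtain ⟨k', hk'⟩ := exists_ne k
      have : Nonempty {m // m ≠ k} := ⟨⟨k', hk'⟩⟩
      obtain ⟨m, hm⟩ := Finite.exists_min (fun m : {m // m ≠ k} => ‖c n m - c n k‖)
      exact ⟨m, fun i hi => hm ⟨i, hi⟩⟩
    rw [Ultrafilter.eventually_exists_iff] at this
    obtain ⟨m, hm⟩ := this
    exact ⟨m, m.2, hm⟩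
  set D : β → ℂ := fun n => c n m0 - c n k with hDdef
  have hD : ∀ᶠ n in U, D n ≠ 0 := by
    filter_upwards [cfg] with n hn
    exact sub_ne_zero.mpr fun h => hm0k (hn.1.choose_spec.inj h)
  set u : β → ι → ℂ := fun n i => (D n)⁻¹ * c n i + (-(D n)⁻¹ * c n k) with hu
  have hudiv : ∀ n i, u n i = (c n i - c n k) / D n := by intro n i; simp only [hu]; ring
  have hudiff : ∀ n i j, u n i - u n j = (c n i - c n j) / D n := by intro n i j; simp only [hu]; ring
  have hucfg : ∀ᶠ n in U, Cfg (u n) (w n) ∧ Gr (u n) (w n) = T := by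
    filter_upwards [cfg, hD] with n hn hDn
    have hL := hn.1.choose_spec
    exact ⟨hL.aff (inv_ne_zero hDn) _, (hL.gr_aff (inv_ne_zero hDn) _).trans hn.2⟩
  have huk : ∀ n, u n k = 0 := by intro n; rw [hudiv]; simp
  have hum : ∀ᶠ n in U, u n m0 = 1 := by
    filter_upwards [hD] with n hn
    rw [hudiv]; exact div_self hn
  have hge : ∀ i, i ≠ k → ∀ᶠ n in U, 1 ≤ ‖u n i‖ := by
    intro i hi
    filter_upwards [hm0, hD] with n h1 h2
    rw [hudiv, norm_div, one_le_div (norm_pos_iff.mpr h2)]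
    exact h1 i hi
  let Bp : ι → Prop := fun i => ∃ z, Tendsto (fun n => u n i) U (𝓝 z)
  have hfar : ∀ i, ¬ Bp i → Tendsto (fun n => u n i) U (Bornology.cobounded ℂ) := fun i hi =>
    (ultra_lim U (fun n => u n i)).resolve_left hi
  let z : ι → ℂ := fun i => if h : Bp i then h.choose else 0
  have hz : ∀ i, Bp i → Tendsto (fun n => u n i) U (𝓝 (z i)) := by
    intro i hi
    simp only [z, dif_pos hi]; exact hi.choose_spec
  have hBk : Bp k := ⟨0, by simp only [huk]; exact tendsto_const_nhds⟩
  have hBm : Bp m0 := ⟨1, Tendsto.congr' (by filter_upwards [hum] with n hn; exact hn.symm) tendsto_const_nhds⟩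
  have hzk : z k = 0 := tendsto_nhds_unique (hz k hBk) (by simp only [huk]; exact tendsto_const_nhds)
  have hzne : ∀ i, Bp i → i ≠ k → z i ≠ z k := by
    intro i hi hik h0
    rw [hzk] at h0
    have := ge_of_tendsto (hz i hi).norm (hge i hik)
    rw [h0] at this
    norm_num at this
  have hucfg1 : ∀ᶠ n in U, Cfg (u n) (w n) := hucfg.mono fun n hn => hn.1
  by_cases hall : ∀ i, Bp i
  · left
    have hP : Pers (U : Filter β) u w (id : ι → ι) z wb := clus_pers Function.injective_id
      (fun i => hz i (hall i)) (fun i hi => absurd (mem_range_self (f := id) i) hi) wlim hucfg1 hwb k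
      (fun i hi => hzne i (hall i) hi)
    have hc : Cfg z wb := hP.lcfg
    refine ⟨z, hc, ?_⟩
    have hle : Gr z wb ≤ T := by
      obtain ⟨n, h1, h2⟩ := ((Gr_pers hP).and hucfg).exists
      rw [← h2.2]
      intro a b hab
      exact h1 a b hab
    have hac : T.IsAcyclic := by
      obtain ⟨n, h2⟩ := hucfg.exists
      rw [← h2.2]; exact h2.1.choose_spec.gr_acyc
    exact (eq_of_le_acyc hc.choose_spec.gr_conn hac hle).ge
  · right
    let B : Finset ι := Finset.univ.filter Bp
    have hB : ∀ i, i ∈ B ↔ Bp i := by intro i; simp [B]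
    have : Nontrivial {i // i ∈ B} := ⟨⟨k, (hB k).mpr hBk⟩, ⟨m0, (hB m0).mpr hBm⟩, fun h => hm0k (congrArg Subtype.val h).symm⟩
    have hP : Pers (U : Filter β) u w (Subtype.val : {i // i ∈ B} → ι) (fun i => z i) wb :=
      clus_pers Subtype.val_injective (fun i => hz i ((hB i).mp i.2))
        (fun i hi => hfar i (fun h => hi (by simpa using (hB i).mpr h))) wlim hucfg1 hwb ⟨k, (hB k).mpr hBk⟩
        (fun i hi => hzne i ((hB i).mp i.2) (fun h => hi (Subtype.ext h)))
    have hL := hP.lcfg.choose_spec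
    refine ⟨B, (hB k).mpr hBk, ?_, D, ⟨m0, hm0k, rfl⟩, ?_, ?_, ?_, ?_⟩
    · intro h
      exact hall fun i => (hB i).mp (h ▸ Finset.mem_univ i)
    · intro i
      rw [hB]
      constructor
      · intro hi
        refine Asymptotics.isBigO_of_div_tendsto_nhds (hD.mono fun n hn h => absurd h hn) (z i) ?_
        refine (hz i hi).congr fun n => ?_
        rw [hudiv]; rfl
      · intro hO
        by_contra hi
        obtain ⟨C, hC⟩ := hO.bound
        have h1 := (tendsto_norm_cobounded_atTop.comp (hfar i hi)).eventually_gt_atTop C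
        obtain ⟨n, h1, h2, h3⟩ := (h1.and (hC.and hD)).exists
        simp only [Function.comp, hudiv, norm_div] at h1
        rw [lt_div_iff₀ (norm_pos_iff.mpr h3)] at h1
        linarith
    · intro i hi m hmi
      have hne : ∀ᶠ n in U, c n m - c n i ≠ 0 := by
        filter_upwards [cfg] with n hn
        exact sub_ne_zero.mpr fun h => hmi (hn.1.choose_spec.inj h)
      have heq : ∀ n, (u n m - u n i)⁻¹ = D n / (c n m - c n i) := by
        intro n; rw [hudiff, inv_div]
      have hi' := (hB i).mp hi
      by_cases hm : Bp m
      · refine Asymptotics.isBigO_of_div_tendsto_nhds (hne.mono fun n hn h => absurd h hn) (z m - z i)⁻¹ ?_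
        refine (((hz m hm).sub (hz i hi')).inv₀ ?_).congr heq
        refine sub_ne_zero.mpr fun h => hmi ?_
        have := hL.inj (show (fun i : {i // i ∈ B} => z i) ⟨m, (hB m).mpr hm⟩ = (fun i : {i // i ∈ B} => z i) ⟨i, hi⟩ from h)
        exact congrArg Subtype.val this
      · refine Asymptotics.isBigO_of_div_tendsto_nhds (hne.mono fun n hn h => absurd h hn) 0 ?_
        refine Tendsto.congr heq ?_
        refine tendsto_inv₀_cobounded.comp ?_
        rw [← tendsto_norm_atTop_iff_cobounded]
        have h1 : Tendsto (fun n => ‖u n m‖) U atTop := tendsto_norm_cobounded_atTop.comp (hfar m hm)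
        refine tendsto_atTop_mono (fun n => ?_) (h1.atTop_add (hz i hi').norm.neg)
        have := norm_sub_norm_le (u n m) (u n i)
        linarith
    · have := hL.sum_zero
      rw [← this, ← Finset.sum_coe_sort B]; rfl
    · intro S hS x hx y hy
      have := hL.gr_conn.preconnected ⟨x, hx⟩ ⟨y, hy⟩
      refine reach_set (S := {i : {i // i ∈ B} | (i : ι) ∈ S}) ?_ this
      intro a b hab
      obtain ⟨n, h1, h2⟩ := ((Gr_pers hP).and hucfg).exists
      have h3 := h1 a b hab
      rw [h2.2] at h3
      exact hS a a.2 b b.2 h3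

theorem closed_step (U : Ultrafilter β) [Nontrivial ι] {c : β → ι → ℂ} {T : SimpleGraph ι} (hT : T.IsTree)
    (wlim : ∀ i, Tendsto (fun n => w n i) U (𝓝 (wb i))) (hwb : ∀ i, wb i ≠ 0)
    (cfg : ∀ᶠ n in U, Cfg (c n) (w n) ∧ Gr (c n) (w n) = T)
    (hcut : ∀ (S : Finset ι) (a b : ι), T.Adj a b → a ∈ S → b ∉ S →
      (∀ x y, T.Adj x y → x ∈ S → y ∉ S → x = a ∧ y = b) → ∑ i ∈ S, wb i ≠ 0) :
    ∃ cb, Cfg cb wb ∧ T ≤ Gr cb wb := by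
  classical
  by_contra hno
  have hcl := fun k => (cluster U hT.connected wlim hwb cfg k).resolve_left hno
  choose B hkB hBne D hD0 hD1 hD2 hB0 hBS using hcl
  have hsub : ∀ k i, i ∈ B k → B i = B k := by
    intro k i hi
    by_cases hik : i = k
    · rw [hik]
    have e1 : D k =O[U] D i := by
      obtain ⟨m, hm, hDm⟩ := hD0 i
      rw [hDm]
      exact hD2 k i hi m hm
    have e2 : D i =O[U] D k := by
      refine (hD2 i i (hkB i) k (Ne.symm hik)).trans ?_
      have := (hD1 k i).mp hi
      rw [← Asymptotics.isBigO_neg_left]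
      simpa using this
    ext j
    rw [hD1, hD1]
    have h3 := (hD1 k i).mp hi
    constructor
    · intro h
      have := (h.trans e2).add h3
      simpa using this
    · intro h
      have := (h.sub h3).trans e1
      simpa using this
  obtain ⟨k⟩ : Nonempty ι := inferInstance
  obtain ⟨a, b, hab, ha, hb⟩ : ∃ a b, T.Adj a b ∧ a ∈ B k ∧ b ∉ B k := by
    by_contra hcon
    push Not at hcon
    apply hBne k
    ext y
    simp only [Finset.mem_univ, iff_true]
    have := reach_set (S := (B k : Set ι)) (fun x y hxy => ⟨fun h => hcon x y hxy h, fun h => hcon y x hxy.symm h⟩)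
      (hT.connected.preconnected k y)
    exact this.mp (hkB k)
  have hbr := (SimpleGraph.isAcyclic_iff_forall_adj_isBridge.mp hT.isAcyclic) hab
  rw [SimpleGraph.isBridge_iff] at hbr
  let S : Finset ι := Finset.univ.filter fun x => (T \ SimpleGraph.fromEdgeSet {s(a, b)}).Reachable a x
  have hS : ∀ x, x ∈ S ↔ (T \ SimpleGraph.fromEdgeSet {s(a, b)}).Reachable a x := by intro x; simp [S]
  have hbS : b ∉ S := fun h => hbr ((hS b).mp h)
  have haS : a ∈ S := (hS a).mpr (SimpleGraph.Reachable.refl _)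
  have hstep : ∀ x y, T.Adj x y → x ∈ S → y ∉ S → x = a ∧ y = b := by
    intro x y hxy hx hy
    by_cases he : s(x, y) = s(a, b)
    · rw [Sym2.eq_iff] at he
      rcases he with h | h
      · exact h
      · rw [h.1] at hx; exact absurd hx hbS
    · exfalso
      apply hy
      rw [hS] at hx ⊢
      refine hx.trans (SimpleGraph.Adj.reachable ?_)
      rw [SimpleGraph.sdiff_adj]
      refine ⟨hxy, ?_⟩
      rw [SimpleGraph.fromEdgeSet_adj]
      exact fun h => he h.1
  refine hcut S a b hab haS hbS hstep ?_
  have hsat : ∀ j, ∀ x ∈ B j, ∀ y ∈ B j, (x ∈ S ↔ y ∈ S) := by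
    intro j
    refine hBS j (S : Set ι) fun x hx y hy hxy => ?_
    have key : ∀ x y, x ∈ B j → y ∈ B j → T.Adj x y → x ∈ S → y ∈ S := by
      intro x y hx hy hxy hxS
      by_contra hyS
      obtain ⟨rfl, rfl⟩ := hstep x y hxy hxS hyS
      apply hb
      rw [← hsub k x ha, hsub j x hx]; exact hy
    exact ⟨key x y hx hy hxy, key y x hy hx hxy.symm⟩
  rw [← Finset.sum_fiberwise_of_maps_to (t := S.image B) (g := B) (fun i hi => Finset.mem_image_of_mem _ hi)]
  refine Finset.sum_eq_zero fun b' hb' => ?_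
  obtain ⟨j, hj, rfl⟩ := Finset.mem_image.mp hb'
  rw [← hB0 j]
  congr 1
  ext i
  simp only [Finset.mem_filter]
  constructor
  · rintro ⟨-, h⟩
    rw [← h]; exact hkB i
  · intro h
    exact ⟨(hsat j i h j (hkB j)).mpr hj, hsub j i h⟩

end clus

end Zan

open Set Filter Topology

namespace Zan

section flow
set_option linter.unusedSectionVars false
variable {ι : Type*} [Fintype ι]

structure Flow (T : SimpleGraph ι) (ε : ι → ℝ) (t : ι → ι → ℝ) : Prop where
  sgn : ∀ k, ε k = 1 ∨ ε k = -1
  alt : ∀ k l, T.Adj k l → ε l = - ε k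
  symm : ∀ k l, t k l = t l k
  pos : ∀ k l, T.Adj k l → 0 < t k l
  zero : ∀ k l, ¬ T.Adj k l → t k l = 0

def W (ε : ι → ℝ) (t : ι → ι → ℝ) (k : ι) : ℝ := ε k * ∑ l, t k l

def Good (T : SimpleGraph ι) (ε : ι → ℝ) (t : ι → ι → ℝ) : Prop :=
  ∃ c, Cfg c (W ε t) ∧ T ≤ Gr c (W ε t)

variable {T : SimpleGraph ι} {ε : ι → ℝ} {t : ι → ι → ℝ}

theorem Flow.anti (h : Flow T ε t) (k l : ι) : ε k * t k l = -(ε l * t l k) := by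
  by_cases hkl : T.Adj k l
  · rw [h.alt k l hkl, h.symm k l]; ring
  · rw [h.zero k l hkl, h.zero l k (fun h' => hkl h'.symm)]; simp

theorem Flow.anti_sum (h : Flow T ε t) (S : Finset ι) : ∑ k ∈ S, ∑ l ∈ S, ε k * t k l = 0 := by
  have h1 : ∑ k ∈ S, ∑ l ∈ S, ε k * t k l = - ∑ k ∈ S, ∑ l ∈ S, ε k * t k l := by
    conv_lhs => rw [Finset.sum_comm]
    rw [← Finset.sum_neg_distrib]
    refine Finset.sum_congr rfl fun k _ => ?_
    rw [← Finset.sum_neg_distrib]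
    exact Finset.sum_congr rfl fun l _ => h.anti l k
  linarith

theorem Flow.sum (h : Flow T ε t) : ∑ k, W ε t k = 0 := by
  simp only [W, Finset.mul_sum]
  exact h.anti_sum Finset.univ

theorem Flow.eps_ne (h : Flow T ε t) (k : ι) : ε k ≠ 0 := by
  rcases h.sgn k with h | h <;> rw [h] <;> norm_num

theorem Flow.nonneg (h : Flow T ε t) (k l : ι) : 0 ≤ t k l := by
  by_cases hkl : T.Adj k l
  · exact (h.pos k l hkl).le
  · rw [h.zero k l hkl]

theorem Flow.sum_pos [Nontrivial ι] (h : Flow T ε t) (hT : T.Connected) (k : ι) : 0 < ∑ l, t k l := by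
  obtain ⟨l, hl⟩ := hT.preconnected.exists_adj_of_nontrivial k
  exact Finset.sum_pos' (fun l _ => h.nonneg k l) ⟨l, Finset.mem_univ _, h.pos k l hl⟩

theorem Flow.w_ne [Nontrivial ι] (h : Flow T ε t) (hT : T.Connected) (k : ι) : W ε t k ≠ 0 :=
  mul_ne_zero (h.eps_ne k) (h.sum_pos hT k).ne'

theorem Flow.cut (h : Flow T ε t) (S : Finset ι) (a b : ι) (hab : T.Adj a b) (ha : a ∈ S) (hb : b ∉ S)
    (hS : ∀ x y, T.Adj x y → x ∈ S → y ∉ S → x = a ∧ y = b) : ∑ i ∈ S, W ε t i ≠ 0 := by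
  classical
  have h1 : ∑ i ∈ S, W ε t i = ε a * t a b := by
    simp only [W, Finset.mul_sum]
    have h2 : ∀ k, ∑ l, ε k * t k l = ∑ l ∈ S, ε k * t k l + ∑ l ∈ Sᶜ, ε k * t k l := fun k =>
      (Finset.sum_add_sum_compl S _).symm
    simp only [h2]
    rw [Finset.sum_add_distrib, h.anti_sum, zero_add]
    rw [Finset.sum_eq_single_of_mem a ha, Finset.sum_eq_single_of_mem b (by simpa using hb)]
    · intro l hl hlb
      rw [h.zero a l fun hh => hlb (hS a l hh ha (by simpa using hl)).2, mul_zero]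
    · intro k hk hka
      refine Finset.sum_eq_zero fun l hl => ?_
      rw [h.zero k l fun hh => hka (hS k l hh hk (by simpa using hl)).1, mul_zero]
  rw [h1]
  exact mul_ne_zero (h.eps_ne a) (h.pos a b hab).ne'

theorem Flow.mix {t1 : ι → ι → ℝ} (h0 : Flow T ε t) (h1 : Flow T ε t1) {s : ℝ} (hs : s ∈ Icc (0:ℝ) 1) :
    Flow T ε (fun k l => (1 - s) * t k l + s * t1 k l) where
  sgn := h0.sgn
  alt := h0.alt
  symm k l := by rw [h0.symm k l, h1.symm k l]
  pos k l hkl := by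
    have a := h0.pos k l hkl
    have b := h1.pos k l hkl
    rcases eq_or_lt_of_le hs.1 with h | h
    · rw [← h]; simpa using a
    · have := mul_nonneg (sub_nonneg.mpr hs.2) a.le
      have := mul_pos h b
      linarith
  zero k l hkl := by rw [h0.zero k l hkl, h1.zero k l hkl]; ring

theorem claimA [Nontrivial ι] (hT : T.IsTree) {t1 : ι → ι → ℝ} (h0 : Flow T ε t) (h1 : Flow T ε t1)
    (hG : Good T ε t) : Good T ε t1 := by
  classical
  let p : ℝ → ι → ι → ℝ := fun s k l => (1 - s) * t k l + s * t1 k l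
  have hp : ∀ s ∈ Icc (0:ℝ) 1, Flow T ε (p s) := fun s hs => h0.mix h1 hs
  let I : Set ℝ := {s | Good T ε (p s)}
  have hcont : Continuous fun s => W ε (p s) := by
    refine continuous_pi fun k => ?_
    simp only [W, p]; fun_prop
  have hp0 : p 0 = t := by funext k l; simp [p]
  have hp1 : p 1 = t1 := by funext k l; simp [p]
  have hclosed : IsClosed (I ∩ Icc 0 1) := by
    rw [isClosed_iff_ultrafilter]
    intro x U hU hm
    have hx : x ∈ Icc (0:ℝ) 1 := isClosed_iff_ultrafilter.mp isClosed_Icc x U hU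
      (Filter.mem_of_superset hm inter_subset_right)
    refine ⟨?_, hx⟩
    have hI : ∀ᶠ s in (U : Filter ℝ), s ∈ I ∩ Icc 0 1 := hm
    let c : ℝ → ι → ℂ := fun s => if h : Good T ε (p s) then h.choose else 0
    have hc : ∀ s, Good T ε (p s) → Cfg (c s) (W ε (p s)) ∧ T ≤ Gr (c s) (W ε (p s)) := by
      intro s hs
      simp only [c, dif_pos hs]; exact hs.choose_spec
    refine closed_step U (c := c) (w := fun s => W ε (p s)) hT ?_ ((hp x hx).w_ne hT.connected) ?_ (hp x hx).cut
    · intro i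
      exact ((((continuous_apply i).comp hcont).tendsto x).mono_left hU)
    · filter_upwards [hI] with s hs
      have := hc s hs.1
      exact ⟨this.1, (eq_of_le_acyc hT.connected this.1.choose_spec.gr_acyc this.2).symm⟩
  have hsub : Icc (0:ℝ) 1 ⊆ I := by
    refine hclosed.Icc_subset_of_forall_exists_gt (show Good T ε (p 0) by rw [hp0]; exact hG) ?_
    rintro x ⟨⟨c, hc, hTc⟩, hx⟩ y hy
    have h3 := (hcont.tendsto x).eventually (open_step hc)
    have h4 : ∀ᶠ s in 𝓝[>] x, s ∈ Ioc x (min y 1) := Ioc_mem_nhdsGT (lt_min hy hx.2)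
    obtain ⟨s, h5, h6⟩ := ((h3.filter_mono nhdsWithin_le_nhds).and h4).exists
    have hs1 : s ≤ 1 := h6.2.trans (min_le_right _ _)
    obtain ⟨c', hc', hle⟩ := h5 (hp s ⟨hx.1.trans h6.1.le, hs1⟩).sum
    exact ⟨s, ⟨c', hc', hTc.trans hle⟩, h6.1, h6.2.trans (min_le_left _ _)⟩
  have := hsub (right_mem_Icc.mpr zero_le_one)
  change Good T ε (p 1) at this
  rwa [hp1] at this

end flow

end Zan

open Set Filter Topology

namespace Zan

section corner
set_option linter.unusedSectionVars false
variable {ι : Type*} [Fintype ι] {c : ι → ℂ} {w : ι → ℝ} {L : ℂ}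

theorem eta_lim : Tendsto (fun y : ℂ => ∏ k, (1 - c k * y⁻¹)⁻¹) (Bornology.cobounded ℂ) (𝓝 1) := by
  rw [← Finset.prod_const_one (s := (Finset.univ : Finset ι))]
  refine tendsto_finsetProd _ fun k _ => ?_
  have h1 := (tendsto_inv₀_cobounded (α := ℂ)).const_mul (c k)
  have h2 := (h1.const_sub 1).inv₀ (by simp)
  simpa using h2

theorem CfgL.far_eq [Nonempty ι] (h : CfgL c w L) {y : ℂ} (hy : ∀ k, y ≠ c k) (h0 : y ≠ 0) :
    y * ∑ k, (w k : ℂ) / (y - c k) = L / y ^ (Fintype.card ι - 1) * ∏ k, (1 - c k * y⁻¹)⁻¹ := by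
  rw [h.inv hy]
  have h1 : ∏ k, (y - c k) = y ^ (Fintype.card ι) * ∏ k, (1 - c k * y⁻¹) := by
    rw [← Finset.card_univ, ← Finset.prod_const, ← Finset.prod_mul_distrib]
    refine Finset.prod_congr rfl fun k _ => ?_
    field_simp
  have h2 : y ^ (Fintype.card ι) = y ^ (Fintype.card ι - 1) * y := by
    rw [← pow_succ, Nat.sub_add_cancel Fintype.card_pos]
  have h3 : ∏ k, (1 - c k * y⁻¹) ≠ 0 := by
    refine Finset.prod_ne_zero_iff.mpr fun k _ h => hy k ?_
    have : c k * y⁻¹ = 1 := (sub_eq_zero.mp h).symm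
    field_simp at this
    exact this.symm
  rw [h1, h2, Finset.prod_inv_distrib]
  field_simp

theorem CfgL.eta [Nonempty ι] (h : CfgL c w L) : ∃ r1 : ℝ, 0 < r1 ∧ ∀ y : ℂ, r1 ≤ ‖y‖ → (∀ k, y ≠ c k) ∧ y ≠ 0 ∧
    ‖y * ∑ k, (w k : ℂ) / (y - c k) - L / y ^ (Fintype.card ι - 1)‖ ≤ 1 / 10 * ‖L / y ^ (Fintype.card ι - 1)‖ := by
  have h1 := (eta_lim (c := c)).eventually (Metric.ball_mem_nhds 1 (show (0:ℝ) < 1 / 10 by norm_num))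
  have h2 : ∀ᶠ y : ℂ in Bornology.cobounded ℂ, ∀ k, y ≠ c k := by
    rw [eventually_all]; intro k
    exact Bornology.isBounded_def.mp (Bornology.isBounded_singleton (x := c k))
  obtain ⟨r, -, hr⟩ := hasBasis_cobounded_norm.mem_iff.mp (h1.and h2)
  refine ⟨max r 1, by positivity, fun y hy => ?_⟩
  obtain ⟨h3, h4⟩ := hr (show y ∈ {x | r ≤ ‖x‖} from (le_max_left _ _).trans hy)
  have h0 : y ≠ 0 := by
    rw [← norm_pos_iff]; exact lt_of_lt_of_le one_pos ((le_max_right _ _).trans hy)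
  refine ⟨h4, h0, ?_⟩
  rw [h.far_eq h4 h0]
  rw [dist_eq_norm] at h3
  calc _ = ‖L / y ^ (Fintype.card ι - 1) * (∏ k, (1 - c k * y⁻¹)⁻¹ - 1)‖ := by ring_nf
    _ = ‖L / y ^ (Fintype.card ι - 1)‖ * ‖∏ k, (1 - c k * y⁻¹)⁻¹ - 1‖ := norm_mul _ _
    _ ≤ _ := by
      rw [mul_comm]
      exact mul_le_mul_of_nonneg_right h3.le (norm_nonneg _)

theorem CfgL.sector [Nontrivial ι] (h : CfgL c w L) : ∃ r1 : ℝ, 0 < r1 ∧ ∀ x : ℂ, r1 ≤ ‖x‖ →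
    (L / x ^ (Fintype.card ι - 1)).re ≤ - (1 / 2) * ‖L / x ^ (Fintype.card ι - 1)‖ → 0 < pot c w x := by
  obtain ⟨r1, hr0, hr⟩ := h.eta
  refine ⟨r1, hr0, fun x hx hA => ?_⟩
  set M := Fintype.card ι - 1
  obtain ⟨hxc, hx0, -⟩ := hr x hx
  rw [pot_eq hxc, ← TT_zero, TT_lt]
  have hbig : ∀ ρ : ℝ, 1 ≤ ρ → r1 ≤ ‖(ρ:ℂ) * x‖ := by
    intro ρ hρ
    rw [norm_mul, Complex.norm_real, Real.norm_of_nonneg (by linarith)]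
    nlinarith [norm_nonneg x]
  have hder : ∀ ρ : ℝ, 1 ≤ ρ → HasDerivAt (fun s : ℝ => hh c w ((s:ℂ) * x))
      (x * ∑ k, (w k : ℂ) / ((ρ:ℂ) * x - c k)).re ρ := by
    intro ρ hρ
    have h1 : HasDerivAt (fun s : ℝ => (s:ℂ) * x) x ρ := by
      simpa using (Complex.ofRealCLM.hasDerivAt (x := ρ)).mul_const x
    exact hh_curve h1 (hr _ (hbig ρ hρ)).1
  have hneg : ∀ ρ : ℝ, 1 ≤ ρ → (x * ∑ k, (w k : ℂ) / ((ρ:ℂ) * x - c k)).re < 0 := by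
    intro ρ hρ
    have hρ0 : 0 < ρ := by linarith
    obtain ⟨-, -, h2⟩ := hr _ (hbig ρ hρ)
    set S := ∑ k, (w k : ℂ) / ((ρ:ℂ) * x - c k)
    have h3 : L / ((ρ:ℂ) * x) ^ M = ((ρ ^ M)⁻¹ : ℝ) * (L / x ^ M) := by
      push_cast
      rw [mul_pow]; field_simp
    have h4 : (L / ((ρ:ℂ) * x) ^ M).re ≤ - (1 / 2) * ‖L / ((ρ:ℂ) * x) ^ M‖ := by
      rw [h3, Complex.re_ofReal_mul, norm_mul, Complex.norm_real, Real.norm_of_nonneg (by positivity)]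
      have : 0 ≤ (ρ ^ M)⁻¹ := by positivity
      nlinarith
    have h5 : 0 < ‖L / ((ρ:ℂ) * x) ^ M‖ := norm_pos_iff.mpr (div_ne_zero h.1 (pow_ne_zero _
      (mul_ne_zero (by exact_mod_cast hρ0.ne') hx0)))
    have h6 := (Complex.abs_re_le_norm _).trans h2
    rw [Complex.sub_re] at h6
    have h7 := (abs_le.mp h6).2
    have h8 : ((ρ:ℂ) * x * S).re = ρ * (x * S).re := by rw [mul_assoc, Complex.re_ofReal_mul]
    rw [h8] at h7
    have : ρ * (x * S).re < 0 := by nlinarith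
    exact (pos_iff_neg_of_mul_neg this).mp hρ0
  have hanti : StrictAntiOn (fun s : ℝ => hh c w ((s:ℂ) * x)) (Ici 1) := by
    refine strictAntiOn_of_deriv_neg (convex_Ici 1) (fun ρ hρ => (hder ρ hρ).continuousAt.continuousWithinAt) ?_
    intro ρ hρ
    rw [interior_Ici] at hρ
    rw [(hder ρ hρ.le).deriv]; exact hneg ρ hρ.le
  have hlim : Tendsto (fun s : ℝ => hh c w ((s:ℂ) * x)) atTop (𝓝 0) := by
    refine (hh_lim (c := c) h.sum_zero).comp ?_
    rw [← Metric.cobounded_eq_cocompact, ← tendsto_norm_atTop_iff_cobounded]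
    have : Tendsto (fun s : ℝ => |s| * ‖x‖) atTop atTop :=
      tendsto_abs_atTop_atTop.atTop_mul_const (norm_pos_iff.mpr hx0)
    refine this.congr fun s => ?_
    rw [norm_mul, Complex.norm_real]; rfl
  have h1 := hanti (show (1:ℝ) ∈ Ici 1 by norm_num) (show (2:ℝ) ∈ Ici 1 by norm_num) one_lt_two
  have h2 : 0 ≤ hh c w (((2:ℝ):ℂ) * x) := by
    refine le_of_tendsto hlim ?_
    filter_upwards [eventually_ge_atTop (2:ℝ)] with ρ hρ
    exact hanti.antitoneOn (show (2:ℝ) ∈ Ici 1 by norm_num) (show (1:ℝ) ≤ ρ by linarith) hρ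
  simp only [Complex.ofReal_one, one_mul] at h1
  linarith

theorem CfgL.corner [Nontrivial ι] (h : CfgL c w L) {b : ι} (hb : w b < 0) (r0 : ℝ) :
    ∃ x : ℂ, r0 ≤ ‖x‖ ∧ x ∈ Lo (-(pot c w)) 0 (c b) ∧
      ∃ A : ℝ, 0 < A ∧ L / x ^ (Fintype.card ι - 1) = -(A:ℂ) := by
  obtain ⟨r1, hr1, hη⟩ := h.eta
  obtain ⟨r2, hr2, hs⟩ := h.sector
  obtain ⟨r3, hr3, hs'⟩ := h.neg.sector
  have hM0 : Fintype.card ι - 1 ≠ 0 := by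
    have := Fintype.one_lt_card (α := ι); omega
  set M := Fintype.card ι - 1 with hM
  have hP := h.isPot.neg
  set r := max (max r0 r1) (max r2 r3) + ‖c b‖ + 1 with hr
  have hnb := norm_nonneg (c b)
  have q0 : r0 ≤ r := by have := (le_max_left r0 r1).trans (le_max_left _ (max r2 r3)); linarith
  have q1 : r1 ≤ r := by have := (le_max_right r0 r1).trans (le_max_left _ (max r2 r3)); linarith
  have q2 : r2 ≤ r := by have := (le_max_left r2 r3).trans (le_max_right (max r0 r1) _); linarith
  have q3 : r3 ≤ r := by have := (le_max_right r2 r3).trans (le_max_right (max r0 r1) _); linarith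
  have hrb : ‖c b‖ < r := by
    have := (le_max_right r0 r1).trans (le_max_left _ (max r2 r3)); linarith
  have hpb : (-(pot c w)) (c b) = -1 := by
    rw [Pi.neg_apply, pot_hi h.inj hb]
  set V := Lo (-(pot c w)) 0 (c b) with hV
  obtain ⟨y0, hy0, hy0r⟩ := sphere_meet (Lo_pre (φ := -(pot c w)) (t := 0) (y := c b)) (T5 hP hpb)
    (mem_Lo (by rw [hpb]; norm_num)) hrb
  have hK : IsCompact (closure V ∩ Metric.sphere (0:ℂ) r) := (isCompact_sphere _ _).inter_left isClosed_closure
  obtain ⟨x1, ⟨hx1, hx1r⟩, hmax⟩ := hK.exists_isMaxOn ⟨y0, subset_closure hy0, by simpa using hy0r⟩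
    (pot_cont h.inj (w := w)).continuousOn
  have hx1r : ‖x1‖ = r := by simpa using hx1r
  have hpy0 : 0 < pot c w y0 := by have := Lo_lt hy0; simpa using this
  have hp1 : 0 < pot c w x1 := hpy0.trans_le (hmax ⟨subset_closure hy0, by simpa using hy0r⟩)
  have hx1V : x1 ∈ V := Lo_cl_lt hx1 (by simpa using hp1)
  obtain ⟨hxc, hx0, hη1⟩ := hη x1 (by rw [hx1r]; exact q1)
  set A := L / x1 ^ M with hA
  set S := ∑ k, (w k : ℂ) / (x1 - c k) with hS
  have hAne : A ≠ 0 := div_ne_zero h.1 (pow_ne_zero _ hx0)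
  have hApos := norm_pos_iff.mpr hAne
  have hcurve : ∀ θ : ℝ, HasDerivAt (fun s : ℝ => x1 * Complex.exp (s * Complex.I))
      (x1 * (Complex.exp (θ * Complex.I) * Complex.I)) θ := by
    intro θ
    have h1 : HasDerivAt (fun s : ℝ => (s:ℂ) * Complex.I) Complex.I θ := by
      simpa using (Complex.ofRealCLM.hasDerivAt (x := θ)).mul_const Complex.I
    exact (h1.cexp).const_mul x1
  have hcc : Continuous (fun s : ℝ => x1 * Complex.exp (s * Complex.I)) := by fun_prop
  have him : (x1 * S).im = 0 := by
    have h1 := hh_curve (w := w) (c := c) (hcurve 0) (by simpa using hxc)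
    have h2 : IsLocalMax (fun s : ℝ => hh c w (x1 * Complex.exp (s * Complex.I))) 0 := by
      have h3 : ∀ᶠ s : ℝ in 𝓝 0, x1 * Complex.exp (s * Complex.I) ∈ V := by
        refine hcc.continuousAt.eventually ((Lo_open hP).mem_nhds ?_)
        simpa using hx1V
      have h4 : ∀ᶠ s : ℝ in 𝓝 0, ∀ k, x1 * Complex.exp (s * Complex.I) ≠ c k := by
        refine hcc.continuousAt.eventually (nhds_avoid ?_)
        simpa using hxc
      filter_upwards [h3, h4] with s h3 h4
      have h5 : pot c w (x1 * Complex.exp (s * Complex.I)) ≤ pot c w x1 :=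
        hmax ⟨subset_closure h3, by simp [Complex.norm_exp_ofReal_mul_I, hx1r]⟩
      rw [pot_eq h4, pot_eq hxc] at h5
      have h6 := not_lt.mpr h5
      rw [TT_lt, not_lt] at h6
      simpa using h6
    have h3 := h2.hasDerivAt_eq_zero h1
    simp only [Complex.ofReal_zero, zero_mul, Complex.exp_zero, one_mul, mul_one] at h3
    have h4 : (x1 * Complex.I * S).re = -(x1 * S).im := by
      rw [mul_right_comm, Complex.mul_I_re]
    rw [h4] at h3
    linarith
  have hIm : |A.im| ≤ 1 / 10 * ‖A‖ := by
    have h1 := (Complex.abs_im_le_norm _).trans hη1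
    rw [Complex.sub_im, him, zero_sub, abs_neg] at h1
    exact h1
  have hRe : 1 / 2 * ‖A‖ ≤ |A.re| := by
    have := Complex.norm_le_abs_re_add_abs_im A
    linarith
  have hRn : A.re < 0 := by
    by_contra hcon
    push Not at hcon
    rw [abs_of_nonneg hcon] at hRe
    have h1 := hs' x1 (by rw [hx1r]; exact q3) (by
      rw [neg_div, Complex.neg_re, norm_neg]; change -A.re ≤ - (1 / 2) * ‖A‖; linarith)
    rw [pot_neg] at h1
    have : 0 < - pot c w x1 := h1
    linarith
  rw [abs_of_neg hRn] at hRe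
  set φ := (-A).arg with hφ
  have hpolar : A = -((‖A‖ : ℂ) * Complex.exp (φ * Complex.I)) := by
    have := Complex.norm_mul_exp_arg_mul_I (-A)
    rw [norm_neg] at this
    rw [this, neg_neg]
  have hMc : (M:ℂ) ≠ 0 := by exact_mod_cast hM0
  let γ : ℝ → ℂ := fun s => x1 * Complex.exp (((s * (φ / M) : ℝ) : ℂ) * Complex.I)
  have hγc : Continuous γ := hcc.comp (by fun_prop : Continuous fun s : ℝ => s * (φ / M))
  have hγA : ∀ s : ℝ, L / γ s ^ M = -((‖A‖ : ℂ) * Complex.exp (((1 - s) * φ : ℝ) * Complex.I)) := by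
    intro s
    have h1 : L / γ s ^ M = A * Complex.exp (-((s * φ : ℝ) * Complex.I)) := by
      simp only [γ]
      rw [mul_pow, ← Complex.exp_nat_mul, ← div_div, div_eq_mul_inv _ (Complex.exp _), ← Complex.exp_neg]
      congr 2
      push_cast
      field_simp
    rw [h1, hpolar, neg_mul, mul_assoc, ← Complex.exp_add]
    simp only [norm_neg, norm_mul, Complex.norm_real, norm_norm, Complex.norm_exp_ofReal_mul_I, mul_one]
    congr 3
    push_cast; ring
  have hγn : ∀ s, ‖γ s‖ = r := by
    intro s; simp only [γ]; rw [norm_mul, Complex.norm_exp_ofReal_mul_I, mul_one, hx1r]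
  have hre : ∀ θ : ℝ, (-((‖A‖ : ℂ) * Complex.exp (θ * Complex.I))).re = -(‖A‖ * Real.cos θ) := by
    intro θ
    rw [Complex.neg_re, Complex.re_ofReal_mul, Complex.exp_ofReal_mul_I_re]
  have hγpos : ∀ s ∈ Icc (0:ℝ) 1, 0 < pot c w (γ s) := by
    intro s hs01
    refine hs _ (by rw [hγn]; exact q2) ?_
    rw [hγA, hre, norm_neg, norm_mul, Complex.norm_exp_ofReal_mul_I, Complex.norm_real, norm_norm, mul_one]
    have h1 : A.re = -(‖A‖ * Real.cos φ) := by rw [← hre, ← hpolar]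
    have h2 : Real.cos φ ≤ Real.cos ((1 - s) * φ) := by
      rw [← Real.cos_abs φ, ← Real.cos_abs ((1 - s) * φ)]
      refine Real.cos_le_cos_of_nonneg_of_le_pi (abs_nonneg _) (Complex.abs_arg_le_pi _) ?_
      rw [abs_mul, abs_of_nonneg (by linarith [hs01.2])]
      have := abs_nonneg φ
      nlinarith [hs01.1]
    nlinarith
  refine ⟨γ 1, by rw [hγn]; exact q0, ?_, ‖A‖, hApos, ?_⟩
  · rw [hV, Lo_eq hx1V]
    have h1 : IsPreconnected (γ '' Icc 0 1) := isPreconnected_Icc.image _ hγc.continuousOn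
    refine h1.subset_connectedComponentIn ⟨0, by norm_num, by simp [γ]⟩ ?_ ⟨1, by norm_num, rfl⟩
    rintro _ ⟨s, hs01, rfl⟩
    have := hγpos s hs01
    simpa using this
  · rw [hγA]; simp

end corner

end Zan

open Set Filter Topology

namespace Zan

section glue
set_option linter.unusedSectionVars false
variable {ι : Type*} [Fintype ι] [DecidableEq ι]

def gl {γ : Type*} (a : ι) (z : γ) (u : {x : ι // x ≠ a} → γ) : ι → γ :=
  fun x => if h : x = a then z else u ⟨x, h⟩

theorem gl_a {γ : Type*} (a : ι) (z : γ) (u : {x : ι // x ≠ a} → γ) : gl a z u a = z := by simp [gl]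

theorem gl_sub {γ : Type*} (a : ι) (z : γ) (u : {x : ι // x ≠ a} → γ) (x : {x : ι // x ≠ a}) :
    gl a z u x = u x := by simp [gl, x.2]

theorem prod_gl (a : ι) (f : ι → ℂ) : ∏ x, f x = f a * ∏ x : {x : ι // x ≠ a}, f x :=
  Fintype.prod_eq_mul_prod_subtype_ne f a

theorem sum_gl (a : ι) (f : ι → ℂ) : ∑ x, f x = f a + ∑ x : {x : ι // x ≠ a}, f x :=
  Fintype.sum_eq_add_sum_subtype_ne f a

theorem card_gl (a : ι) : Fintype.card ι = Fintype.card {x : ι // x ≠ a} + 1 := by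
  have := Fintype.card_subtype_compl (fun x : ι => x = a)
  rw [Fintype.card_subtype_eq] at this
  have h2 : 0 < Fintype.card ι := Fintype.card_pos_iff.mpr ⟨a⟩
  have h3 : Fintype.card {x : ι // x ≠ a} = Fintype.card {x : ι // ¬ x = a} := rfl
  omega

theorem fac_nhds {κ : Type*} [Fintype κ] (c : κ → ℂ) : ∃ N ∈ 𝓝 c, ∃ δ : ℝ, 0 < δ ∧ ∀ u ∈ N, ∀ z1 z2 : ℂ,
    ‖z1‖ < δ → ‖z2‖ < δ → (∀ k, 1 - u k * z2 ≠ 0) ∧ 0 < (∏ k, ((1 - u k * z1) / (1 - u k * z2))).re := by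
  have h1 : ContinuousAt (fun p : (κ → ℂ) × ℂ × ℂ => ∏ k, ((1 - p.1 k * p.2.1) / (1 - p.1 k * p.2.2))) (c, 0, 0) := by
    refine tendsto_finsetProd _ fun k _ => ?_
    refine ContinuousAt.div ?_ ?_ (by simp)
    · fun_prop
    · fun_prop
  have h2 : ∀ᶠ p : (κ → ℂ) × ℂ × ℂ in 𝓝 (c, 0, 0),
      0 < (∏ k, ((1 - p.1 k * p.2.1) / (1 - p.1 k * p.2.2))).re := by
    have h3 : ContinuousAt (fun p : (κ → ℂ) × ℂ × ℂ =>
      (∏ k, ((1 - p.1 k * p.2.1) / (1 - p.1 k * p.2.2))).re) (c, 0, 0) :=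
      Complex.continuous_re.continuousAt.comp h1
    refine h3.eventually (lt_mem_nhds ?_)
    simp
  have h4 : ∀ᶠ p : (κ → ℂ) × ℂ × ℂ in 𝓝 (c, 0, 0), ∀ k, 1 - p.1 k * p.2.2 ≠ 0 := by
    rw [eventually_all]; intro k
    have : ContinuousAt (fun p : (κ → ℂ) × ℂ × ℂ => 1 - p.1 k * p.2.2) (c, 0, 0) := by fun_prop
    exact this.eventually_ne (by simp)
  have h5 := h4.and h2
  rw [nhds_prod_eq] at h5
  obtain ⟨N, hN, Z, hZ, hNZ⟩ := mem_prod_iff.mp h5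
  rw [nhds_prod_eq] at hZ
  obtain ⟨Z1, hZ1, Z2, hZ2, hZZ⟩ := mem_prod_iff.mp hZ
  obtain ⟨δ1, hδ1, hb1⟩ := Metric.mem_nhds_iff.mp hZ1
  obtain ⟨δ2, hδ2, hb2⟩ := Metric.mem_nhds_iff.mp hZ2
  refine ⟨N, hN, min δ1 δ2, lt_min hδ1 hδ2, fun u hu z1 z2 hz1 hz2 => ?_⟩
  have : (u, z1, z2) ∈ N ×ˢ Z := ⟨hu, hZZ ⟨hb1 (by simpa using hz1.trans_le (min_le_left _ _)),
    hb2 (by simpa using hz2.trans_le (min_le_right _ _))⟩⟩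
  exact hNZ this

/-- the new edge -/
theorem new_edge [Nontrivial ι] {a : ι} {b : {x : ι // x ≠ a}} {R x2 : ℂ} {u : {x : ι // x ≠ a} → ℂ} {w : ι → ℝ} {T δ : ℝ}
    (h : Cfg (gl a R u) w) (ha : 0 < w a) (hb : w b < 0) (hT : 1 < T) (hR : R = T * x2) (hδ : 0 < δ)
    (hx2 : ‖x2⁻¹‖ < δ) (hx20 : x2 ≠ 0)
    (hfac : ∀ z1 z2 : ℂ, ‖z1‖ < δ → ‖z2‖ < δ → (∀ k, 1 - u k * z2 ≠ 0) ∧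
      0 < (∏ k, ((1 - u k * z1) / (1 - u k * z2))).re)
    (hlo : x2 ∈ Lo (-(pot (gl a R u) w)) 0 (u b)) : (Gr (gl a R u) w).Adj a b := by
  obtain ⟨Λ, hΛ⟩ := h
  set c := gl a R u with hc
  have hca : c a = R := gl_a _ _ _
  have hcs : ∀ k : {x : ι // x ≠ a}, c k = u k := fun k => gl_sub _ _ _ k
  have hT0 : (T:ℂ) ≠ 0 := by exact_mod_cast (by linarith : T ≠ 0)
  have hR0 : R ≠ 0 := by rw [hR]; exact mul_ne_zero hT0 hx20
  have hRδ : ‖R⁻¹‖ < δ := by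
    rw [hR, mul_inv, norm_mul, norm_inv, Complex.norm_real, Real.norm_of_nonneg (by linarith)]
    have : T⁻¹ ≤ 1 := inv_le_one_of_one_le₀ hT.le
    have := norm_nonneg x2⁻¹
    nlinarith
  have hΛv : Λ = w a * ∏ k, (R - u k) := by
    rw [← hΛ.2 a]
    congr 1
    have h1 := prod_gl a (fun x => if x = a then 1 else c a - c x)
    rw [if_pos rfl, one_mul] at h1
    have h2 : ∏ k : {x : ι // x ≠ a}, (if (k : ι) = a then 1 else c a - c k) = ∏ k, (R - u k) := by
      refine Finset.prod_congr rfl fun k _ => ?_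
      rw [if_neg k.2, hca, hcs]
    rw [← h2, ← h1, ← Finset.mul_prod_erase Finset.univ (fun x => if x = a then 1 else c a - c x) (Finset.mem_univ a),
      if_pos rfl, one_mul]
    refine Finset.prod_congr (by ext; simp) fun x hx => ?_
    have : x ≠ a := by simpa using hx
    rw [if_neg this]
  let γ : ℝ → ℂ := fun t => R + t * (-R)
  have hτ : ∀ t : ℝ, t ≤ 1 - T⁻¹ → 0 < 1 - t ∧ ‖(γ t)⁻¹‖ < δ ∧ γ t = ((1 - t : ℝ) : ℂ) * R ∧ γ t ≠ 0 := by
    intro t ht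
    have hTi : 0 < T⁻¹ := by positivity
    have h1 : 0 < 1 - t := by linarith
    have h2 : γ t = ((1 - t : ℝ) : ℂ) * R := by simp only [γ]; push_cast; ring
    refine ⟨h1, ?_, h2, ?_⟩
    · rw [h2, hR, ← mul_assoc, ← Complex.ofReal_mul, mul_inv, norm_mul, norm_inv, Complex.norm_real]
      have h3 : 1 ≤ (1 - t) * T := by
        have : T⁻¹ * T = 1 := inv_mul_cancel₀ (by linarith)
        nlinarith
      rw [Real.norm_of_nonneg (by linarith)]
      have : ((1 - t) * T)⁻¹ ≤ 1 := inv_le_one_of_one_le₀ h3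
      have := norm_nonneg x2⁻¹
      nlinarith
    · rw [h2]; exact mul_ne_zero (by exact_mod_cast h1.ne') hR0
  have hav : ∀ t : ℝ, 0 < t → t ≤ 1 - T⁻¹ → ∀ k, γ t ≠ c k := by
    intro t ht0 ht k
    obtain ⟨h1, h2, h3, h4⟩ := hτ t ht
    by_cases hk : k = a
    · rw [hk, hca]
      intro h5
      simp only [γ] at h5
      have : (t:ℂ) * (-R) = 0 := by linear_combination h5
      rcases mul_eq_zero.mp this with h6 | h6
      · exact ht0.ne' (by exact_mod_cast h6)
      · exact hR0 (neg_eq_zero.mp h6)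
    · intro h5
      have h6 := (hfac 0 (γ t)⁻¹ (by simpa using hδ) h2).1 ⟨k, hk⟩
      apply h6
      have h7 := hcs ⟨k, hk⟩
      rw [← h7, ← h5, mul_inv_cancel₀ h4, sub_self]
  have hder : ∀ t : ℝ, 0 < t → t ≤ 1 - T⁻¹ → 0 < (-R * ∑ k, (w k : ℂ) / (γ t - c k)).re := by
    intro t ht0 ht
    obtain ⟨h1, h2, h3, h4⟩ := hτ t ht
    rw [hΛ.inv (hav t ht0 ht), prod_gl a, hca]
    simp only [hcs]
    set N := (Finset.univ : Finset {x : ι // x ≠ a}).card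
    have h5 : ∏ k, (R - u k) = R ^ N * ∏ k, (1 - u k * R⁻¹) := by
      rw [show R ^ N = ∏ _k : {x : ι // x ≠ a}, R by rw [Finset.prod_const], ← Finset.prod_mul_distrib]
      refine Finset.prod_congr rfl fun k _ => ?_
      field_simp
    have h6 : ∏ k, (γ t - u k) = γ t ^ N * ∏ k, (1 - u k * (γ t)⁻¹) := by
      rw [show γ t ^ N = ∏ _k : {x : ι // x ≠ a}, γ t by rw [Finset.prod_const], ← Finset.prod_mul_distrib]
      refine Finset.prod_congr rfl fun k _ => ?_
      field_simp
    obtain ⟨h7, h8⟩ := hfac R⁻¹ (γ t)⁻¹ hRδ h2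
    have h9 : ∏ k, (1 - u k * (γ t)⁻¹) ≠ 0 := Finset.prod_ne_zero_iff.mpr fun k _ => h7 k
    have h10 : -R * (Λ / ((γ t - R) * ∏ k, (γ t - u k))) =
        ((w a / (t * (1 - t) ^ N) : ℝ) : ℂ) * ∏ k, ((1 - u k * R⁻¹) / (1 - u k * (γ t)⁻¹)) := by
      rw [Finset.prod_div_distrib, hΛv, h6, h5]
      have h11 : γ t - R = -((t:ℂ) * R) := by simp only [γ]; ring
      rw [h11]
      have h12 : γ t ^ N = ((1 - t : ℝ) : ℂ) ^ N * R ^ N := by rw [h3, mul_pow]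
      rw [h12]
      have h13 : (t:ℂ) ≠ 0 := by exact_mod_cast ht0.ne'
      have h14 : ((1 - t : ℝ) : ℂ) ≠ 0 := by exact_mod_cast h1.ne'
      generalize (∏ k, (1 - u k * (γ t)⁻¹)) = P1 at *
      generalize (∏ k, (1 - u k * R⁻¹)) = P2 at *
      push_cast at h14 ⊢
      field_simp
    rw [h10, Complex.re_ofReal_mul]
    exact mul_pos (by positivity) h8
  have hlo1 : ∀ᶠ t : ℝ in 𝓝[>] 0, γ t ∈ Lo (pot c w) 0 (c a) := by
    have h1 : c a ∈ Lo (pot c w) 0 (c a) := mem_Lo (by rw [pot_lo hΛ.inj ha]; norm_num)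
    have h2 : ContinuousAt γ 0 := by simp only [γ]; fun_prop
    refine (h2.eventually ((Lo_open hΛ.isPot).mem_nhds ?_)).filter_mono nhdsWithin_le_nhds
    have : γ 0 = c a := by rw [hca]; simp [γ]
    rw [this]; exact h1
  have hs1 : 0 < 1 - T⁻¹ := by
    have : T⁻¹ < 1 := inv_lt_one_of_one_lt₀ hT
    linarith
  have h3 : ∀ᶠ t : ℝ in 𝓝[>] 0, t ∈ Ioo 0 (1 - T⁻¹) := Ioo_mem_nhdsGT hs1
  obtain ⟨s0, hs0, hs0'⟩ := (hlo1.and h3).exists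
  refine Or.inl ⟨ha, hb, ?_⟩
  have hmono : StrictMonoOn (pot c w ∘ γ) (Icc s0 (1 - T⁻¹)) := pot_line_mono
    (fun t ht => hav t (hs0'.1.trans_le ht.1) ht.2) (fun t ht => hder t (hs0'.1.trans ht.1) ht.2.le)
  refine cross_of_mono (γ := γ) hs0'.2 (pot_cont hΛ.inj) ?_ hmono hs0 ?_
  · have : Continuous γ := by simp only [γ]; fun_prop
    exact this.continuousOn
  · rw [hcs]
    have : γ (1 - T⁻¹) = x2 := by
      simp only [γ]; rw [hR]; push_cast; field_simp; ring
    rw [this]; exact hlo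

theorem glue {a : ι} [Nontrivial {x : ι // x ≠ a}] {b : {x : ι // x ≠ a}} {c' : {x : ι // x ≠ a} → ℂ}
    {w' : {x : ι // x ≠ a} → ℝ} (h : Cfg c' w') (hb : w' b < 0) :
    ∃ s : ℝ, 0 < s ∧ ∃ c : ι → ℂ, Cfg c (gl a s (fun k => w' k - if k = b then s else 0)) ∧
      (∀ x y, (Gr c' w').Adj x y → (Gr c (gl a s (fun k => w' k - if k = b then s else 0))).Adj x y) ∧
      (Gr c (gl a s (fun k => w' k - if k = b then s else 0))).Adj a b := by
  obtain ⟨L, hL⟩ := h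
  have : Nontrivial ι := ⟨a, b, b.2.symm⟩
  have hcard1 := Fintype.one_lt_card (α := {x : ι // x ≠ a})
  have hcard := card_gl a
  obtain ⟨N1, hN1, δ, hδ, hfac⟩ := fac_nhds c'
  obtain ⟨x2, hx2r, hx2, A, hA, hLA⟩ := hL.corner hb (δ⁻¹ + 1)
  set M := Fintype.card {x : ι // x ≠ a} - 1 with hM
  have hx20 : x2 ≠ 0 := by
    rw [← norm_pos_iff]; have : 0 < δ⁻¹ := by positivity
    linarith
  have hx2δ : ‖x2⁻¹‖ < δ := by
    rw [norm_inv]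
    exact inv_lt_of_inv_lt₀ hδ (by linarith)
  let s : ℝ → ℝ := fun T => A / T ^ M
  let wT : ℝ → {x : ι // x ≠ a} → ℝ := fun T k => w' k - if k = b then s T else 0
  have hM0 : M ≠ 0 := by omega
  have hslim : Tendsto s atTop (𝓝 0) := tendsto_const_nhds.div_atTop (tendsto_pow_atTop hM0)
  have hwT : ∀ k, Tendsto (fun T => wT T k) atTop (𝓝 (w' k)) := by
    intro k
    simp only [wT]
    by_cases hk : k = b
    · simp only [if_pos hk]; simpa using hslim.const_sub (w' k)
    · simp only [if_neg hk, sub_zero]; exact tendsto_const_nhds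
  have hRlim : Tendsto (fun T : ℝ => (T:ℂ) * x2) atTop (Bornology.cobounded ℂ) := by
    rw [← tendsto_norm_atTop_iff_cobounded]
    have : Tendsto (fun s : ℝ => |s| * ‖x2‖) atTop atTop :=
      tendsto_abs_atTop_atTop.atTop_mul_const (norm_pos_iff.mpr hx20)
    refine this.congr fun s => ?_
    rw [norm_mul, Complex.norm_real]; rfl
  set l : Filter (({x : ι // x ≠ a} → ℂ) × ℝ) := (𝓝 c' ×ˢ atTop) ⊓
    𝓟 {p | Cfg (gl a ((p.2:ℂ) * x2) p.1) (gl a (s p.2) (wT p.2))} with hl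
  have hP : Pers l (fun p => gl a ((p.2:ℂ) * x2) p.1) (fun p => gl a (s p.2) (wT p.2))
      (Subtype.val : {x : ι // x ≠ a} → ι) c' (gl a 0 w') :=
    { einj := Subtype.val_injective
      near := fun k => by
        simp only [gl_sub]
        exact (((continuous_apply k).tendsto c').comp tendsto_fst).mono_left inf_le_left
      far := fun i hi => by
        have : i = a := by by_contra h; exact hi ⟨⟨i, h⟩, rfl⟩
        subst this
        simp only [gl_a]
        exact (hRlim.comp tendsto_snd).mono_left inf_le_left
      wlim := fun i => by
        by_cases hi : i = a
        · subst hi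
          simp only [gl_a]
          exact (hslim.comp tendsto_snd).mono_left inf_le_left
        · have h1 := fun z (v : {x : ι // x ≠ a} → ℝ) => gl_sub a z v ⟨i, hi⟩
          simp only at h1
          simp only [h1]
          exact ((hwT ⟨i, hi⟩).comp tendsto_snd).mono_left inf_le_left
      cfg := mem_inf_of_right (mem_principal_self _)
      lcfg := by
        have : gl a 0 w' ∘ (Subtype.val : {x : ι // x ≠ a} → ι) = w' := by
          funext k; exact gl_sub _ _ _ k
        rw [this]; exact ⟨L, hL⟩ }
  have hwbe : gl a 0 w' ∘ (Subtype.val : {x : ι // x ≠ a} → ι) = w' := by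
    funext k; exact gl_sub _ _ _ k
  have hG := Gr_pers hP
  rw [hwbe] at hG
  have hlo := Lo_pers hP.neg (k := b) (z := x2) (by
    have : (-gl a 0 w') ∘ (Subtype.val : {x : ι // x ≠ a} → ι) = -w' := by
      funext k; exact congrArg Neg.neg (gl_sub a 0 w' k)
    rw [this, pot_neg]; exact hx2)
  have hboth := hG.and hlo
  rw [hl, eventually_inf_principal] at hboth
  obtain ⟨N2, hN2, Z, hZ, hNZ⟩ := mem_prod_iff.mp hboth
  have het := etale (c0 := c') (w0 := fun k => (w' k : ℂ)) hL.inj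
    (fun k => by exact_mod_cast hL.w_ne k) (M := M) (Nat.sub_le _ _)
    (inter_mem (inter_mem hN1 hN2) (inj_nhds hL.inj))
  have hsR : ∀ T : ℝ, T ≠ 0 → ∀ j, j + 1 ≤ M → -(s T : ℂ) * ((T:ℂ) * x2) ^ (j + 1) =
      L * (((T:ℂ) * x2)⁻¹) ^ (M - (j + 1)) := by
    intro T hT j hj
    have h1 : L = -(A:ℂ) * x2 ^ M := by
      rw [← hLA]; field_simp
    have hTc : (T:ℂ) ≠ 0 := by exact_mod_cast hT
    have h2 : ((T:ℂ) * x2) ^ M = ((T:ℂ) * x2) ^ (M - (j + 1)) * ((T:ℂ) * x2) ^ (j + 1) := by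
      rw [← pow_add]; congr 1; omega
    have h3 : (s T : ℂ) * (T:ℂ) ^ M = A := by
      simp only [s]; push_cast; field_simp
    rw [inv_pow, ← div_eq_mul_inv, eq_div_iff (pow_ne_zero _ (mul_ne_zero hTc hx20)), mul_assoc,
      mul_comm (_ ^ (j + 1)), ← h2, h1, ← h3, mul_pow]
    ring
  have hconv : Tendsto (fun T : ℝ => ((fun j : Fin M => -(s T : ℂ) * ((T:ℂ) * x2) ^ ((j:ℕ) + 1)),
      fun k => (wT T k : ℂ))) atTop (𝓝 (Psi M (c', fun k => (w' k : ℂ)))) := by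
    refine Tendsto.prodMk_nhds ?_ ?_
    · rw [tendsto_pi_nhds]
      intro j
      have hval : ∑ k, (w' k : ℂ) * c' k ^ ((j:ℕ) + 1) = L * 0 ^ (M - ((j:ℕ) + 1)) := by
        have hj := j.2
        by_cases hjM : (j:ℕ) + 1 = M
        · rw [hL.pow_top (by omega), hjM]; simp
        · rw [hL.pow (by omega), zero_pow (by omega), mul_zero]
      change Tendsto _ _ (𝓝 (∑ k, (w' k : ℂ) * c' k ^ ((j:ℕ) + 1)))
      rw [hval]
      refine Tendsto.congr' ?_ (((tendsto_inv₀_cobounded.comp hRlim).pow (M - ((j:ℕ) + 1))).const_mul L)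
      filter_upwards [eventually_gt_atTop 0] with T hT
      exact (hsR T hT.ne' j j.2).symm
    · rw [tendsto_pi_nhds]
      intro k
      exact (Complex.continuous_ofReal.tendsto _).comp (hwT k)
  obtain ⟨T, ⟨⟨u, ⟨⟨huN1, huN2⟩, hui⟩, hu⟩, hTZ⟩, hT1⟩ :=
    (((hconv.eventually het).and hZ).and (eventually_gt_atTop (1:ℝ))).exists
  have hs0 : 0 < s T := by simp only [s]; have : 0 < T := by linarith
                           positivity
  have hT0 : T ≠ 0 := by linarith
  have hTc : (T:ℂ) ≠ 0 := by exact_mod_cast hT0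
  have hRδ : ‖((T:ℂ) * x2)⁻¹‖ < δ := by
    rw [mul_inv, norm_mul, norm_inv, Complex.norm_real, Real.norm_of_nonneg (by linarith)]
    have : T⁻¹ ≤ 1 := inv_le_one_of_one_le₀ hT1.le
    have := norm_nonneg x2⁻¹
    nlinarith
  have huR : ∀ k, u k ≠ (T:ℂ) * x2 := by
    intro k hk
    apply (hfac u huN1 0 ((T:ℂ) * x2)⁻¹ (by simpa using hδ) hRδ).1 k
    rw [hk, mul_inv_cancel₀ (mul_ne_zero hTc hx20), sub_self]
  have hwb : ∀ k, wT T k ≠ 0 := by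
    intro k
    simp only [wT]
    by_cases hk : k = b
    · rw [if_pos hk, hk]; linarith
    · rw [if_neg hk, sub_zero]; exact hL.w_ne k
  have hcfg : Cfg (gl a ((T:ℂ) * x2) u) (gl a (s T) (wT T)) := by
    refine Cfg.of_pow ?_ ?_ ?_
    · intro x y hxy
      by_cases hx : x = a <;> by_cases hy : y = a
      · rw [hx, hy]
      · exfalso
        have h1 := gl_sub a ((T:ℂ) * x2) u ⟨y, hy⟩
        rw [hx, gl_a] at hxy
        exact huR ⟨y, hy⟩ (h1.symm.trans hxy.symm)
      · exfalso
        have h1 := gl_sub a ((T:ℂ) * x2) u ⟨x, hx⟩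
        rw [hy, gl_a] at hxy
        exact huR ⟨x, hx⟩ (h1.symm.trans hxy)
      · have h1 := gl_sub a ((T:ℂ) * x2) u ⟨x, hx⟩
        have h2 := gl_sub a ((T:ℂ) * x2) u ⟨y, hy⟩
        have := hui (h1.symm.trans (hxy.trans h2))
        exact congrArg Subtype.val this
    · intro x
      by_cases hx : x = a
      · rw [hx, gl_a]; exact hs0.ne'
      · have h1 := gl_sub a (s T) (wT T) ⟨x, hx⟩
        rw [h1]; exact hwb _
    · intro j hj
      rw [sum_gl a]
      simp only [gl_a, gl_sub]
      rcases j with _ | j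
      · simp only [pow_zero, mul_one]
        have h1 : ∑ k, wT T k = -s T := by
          simp only [wT]
          rw [Finset.sum_sub_distrib, hL.sum_zero]; simp
        have h2 : ∑ k, (wT T k : ℂ) = ((∑ k, wT T k : ℝ) : ℂ) := by push_cast; rfl
        rw [h2, h1]; push_cast; ring
      · have h1 := hu ⟨j, by omega⟩
        simp only at h1
        rw [h1]; ring
  have hmem : (u, T) ∈ N2 ×ˢ Z := ⟨huN2, hTZ⟩
  obtain ⟨hGr, hLo⟩ := hNZ hmem hcfg
  refine ⟨s T, hs0, gl a ((T:ℂ) * x2) u, hcfg, fun x y hxy => hGr x y hxy, ?_⟩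
  refine new_edge (T := T) (δ := δ) (x2 := x2) hcfg (by rw [gl_a]; exact hs0) ?_ hT1 rfl hδ hx2δ hx20
    (hfac u huN1) ?_
  · rw [gl_sub, if_pos rfl]; linarith
  · have h1 := hLo
    simp only at h1
    rw [pot_neg, gl_sub] at h1
    exact h1

end glue

end Zan

open Set Filter Topology

namespace Zan

section claimB
set_option linter.unusedSectionVars false
universe uu

theorem W_neg {ι : Type*} [Fintype ι] (ε : ι → ℝ) (t : ι → ι → ℝ) : W (-ε) t = - W ε t := by
  funext k; simp [W]

theorem Good.neg {ι : Type*} [Fintype ι] {T : SimpleGraph ι} {ε : ι → ℝ} {t : ι → ι → ℝ}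
    (h : Good T ε t) : Good T (-ε) t := by
  obtain ⟨c, h1, h2⟩ := h
  refine ⟨c, ?_, ?_⟩
  · rw [W_neg]; exact h1.neg
  · rw [W_neg, Gr_neg]; exact h2

theorem Flow.neg {ι : Type*} [Fintype ι] {T : SimpleGraph ι} {ε : ι → ℝ} {t : ι → ι → ℝ}
    (h : Flow T ε t) : Flow T (-ε) t where
  sgn k := by rcases h.sgn k with h | h <;> simp [h]
  alt k l hkl := by simp [h.alt k l hkl]
  symm := h.symm
  pos := h.pos
  zero := h.zero

theorem good_two {ι : Type uu} [Fintype ι] [Nontrivial ι] (T : SimpleGraph ι) (ε : ι → ℝ) (t : ι → ι → ℝ)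
    (hc : Fintype.card ι = 2) (hT : T.IsTree) (h : Flow T ε t) : Good T ε t := by
  classical
  obtain ⟨a, b, hab, huniv⟩ := Finset.card_eq_two.mp (Finset.card_univ.trans hc)
  have hall : ∀ x, x = a ∨ x = b := fun x => by
    have : x ∈ (Finset.univ : Finset ι) := Finset.mem_univ x
    rw [huniv] at this; simpa using this
  have hsum := h.sum
  rw [huniv, Finset.sum_pair hab] at hsum
  have hcfg : CfgL (fun x => if x = a then (0:ℂ) else 1) (W ε t) (-(W ε t a : ℂ)) := by
    refine ⟨neg_ne_zero.mpr (by exact_mod_cast h.w_ne hT.connected a), fun k => ?_⟩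
    rcases hall k with rfl | rfl
    · have : (Finset.univ : Finset ι).erase k = {b} := by
        rw [huniv]; ext x; simp only [Finset.mem_erase, Finset.mem_insert, Finset.mem_singleton]
        constructor
        · tauto
        · rintro rfl; exact ⟨hab.symm, Or.inr rfl⟩
      rw [this]; simp [hab.symm]
    · have : (Finset.univ : Finset ι).erase k = {a} := by
        rw [huniv]; ext x; simp only [Finset.mem_erase, Finset.mem_insert, Finset.mem_singleton]
        constructor
        · tauto
        · rintro rfl; exact ⟨hab, Or.inl rfl⟩
      rw [this]
      have h1 : W ε t k = - W ε t a := by linarith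
      simp [hab.symm, h1]
  refine ⟨_, ⟨_, hcfg⟩, ?_⟩
  intro k l hkl
  obtain ⟨m, hm⟩ := hcfg.gr_conn.preconnected.exists_adj_of_nontrivial k
  have h1 := hm.ne
  have h2 := hkl.ne
  have : m = l := by
    rcases hall k with rfl | rfl <;> rcases hall l with rfl | rfl <;> rcases hall m with rfl | rfl <;> tauto
  rwa [← this]

theorem good_step {ι : Type uu} [Fintype ι] [DecidableEq ι] [Nontrivial ι] (T : SimpleGraph ι) (ε : ι → ℝ) (t : ι → ι → ℝ)
    (hT : T.IsTree) (h : Flow T ε t) (a b : ι) (hab : T.Adj a b) (hleaf : ∀ y, T.Adj a y → y = b)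
    [Nontrivial {x : ι // x ≠ a}] (hεb : ε b = -1)
    (hG : Good (T.comap (Subtype.val : {x : ι // x ≠ a} → ι)) (ε ∘ Subtype.val) (fun k l => t k l))
    (hF : Flow (T.comap (Subtype.val : {x : ι // x ≠ a} → ι)) (ε ∘ Subtype.val) (fun k l => t k l))
    (hT' : (T.comap (Subtype.val : {x : ι // x ≠ a} → ι)).Connected) :
    Good T ε t := by
  obtain ⟨c', hc', hle⟩ := hG
  let b' : {x : ι // x ≠ a} := ⟨b, hab.ne'⟩
  have hb : W (ε ∘ Subtype.val) (fun k l : {x : ι // x ≠ a} => t k l) b' < 0 := by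
    have := hF.sum_pos hT' b'
    simp only [W, Function.comp, b', hεb] at this ⊢
    linarith
  obtain ⟨s, hs, c, hc, hE, hE'⟩ := glue hc' hb
  have hεa : ε a = 1 := by have := h.alt b a hab.symm; rw [this, hεb]; norm_num
  let t2 : ι → ι → ℝ := fun x y => if x = a then (if y = b then s else 0) else
    if y = a then (if x = b then s else 0) else t x y
  have hba := hab.ne'
  have hF2 : Flow T ε t2 := by
    refine ⟨h.sgn, h.alt, ?_, ?_, ?_⟩
    · intro k l
      simp only [t2]
      by_cases hk : k = a <;> by_cases hl : l = a
      · subst hk; subst hl; simp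
      · simp [hk, hl]
      · simp [hk, hl]
      · simp [hk, hl, h.symm k l]
    · intro k l hkl
      simp only [t2]
      by_cases hk : k = a
      · subst hk; simp [hleaf l hkl, hs]
      · by_cases hl : l = a
        · subst hl; simp [hk, hleaf k hkl.symm, hs, hba]
        · simp [hk, hl, h.pos k l hkl]
    · intro k l hkl
      simp only [t2]
      by_cases hk : k = a
      · subst hk
        have : l ≠ b := by rintro rfl; exact hkl hab
        simp [this]
      · by_cases hl : l = a
        · subst hl
          have : k ≠ b := by rintro rfl; exact hkl hab.symm
          simp [hk, this]
        · simp [hk, hl, h.zero k l hkl]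
  have hW : gl a s (fun k => W (ε ∘ Subtype.val) (fun k l : {x : ι // x ≠ a} => t k l) k - if k = b' then s else 0)
      = W ε t2 := by
    funext x
    by_cases hx : x = a
    · subst hx
      rw [gl_a]
      simp [W, t2, hεa]
    · have h1 := fun u : {x : ι // x ≠ a} → ℝ => gl_sub a s u ⟨x, hx⟩
      simp only at h1
      rw [h1]
      simp only [W, Function.comp]
      rw [Fintype.sum_eq_add_sum_subtype_ne (t2 x) a]
      have h2 : ∀ y : {x : ι // x ≠ a}, t2 x y = t x y := fun y => by simp [t2, hx, y.2]
      have h3 : t2 x a = if x = b then s else 0 := by simp [t2, hx]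
      simp only [h2, h3]
      have h4 : ((⟨x, hx⟩ : {x : ι // x ≠ a}) = b') ↔ x = b := by simp [b', Subtype.ext_iff]
      simp only [h4]
      by_cases hxb : x = b
      · subst hxb; simp [hεb]; ring
      · simp [hxb]
  rw [hW] at hc hE hE'
  have hG2 : Good T ε t2 := by
    refine ⟨c, hc, ?_⟩
    intro x y hxy
    by_cases hx : x = a
    · subst hx; rw [hleaf y hxy]; exact hE'
    · by_cases hy : y = a
      · subst hy; rw [hleaf x hxy.symm]; exact hE'.symm
      · exact hE ⟨x, hx⟩ ⟨y, hy⟩ (hle (show T.Adj x y from hxy))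
  exact claimA hT hF2 h hG2

theorem good_all (n : ℕ) : ∀ (ι : Type uu) [Fintype ι] [Nontrivial ι] (T : SimpleGraph ι) (ε : ι → ℝ)
    (t : ι → ι → ℝ), Fintype.card ι = n + 2 → T.IsTree → Flow T ε t → Good T ε t := by
  induction n with
  | zero => intro ι _ _ T ε t hc hT h; exact good_two T ε t hc hT h
  | succ n ih =>
    intro ι _ _ T ε t hc hT h
    classical
    obtain ⟨a, ha⟩ := hT.exists_vert_degree_one_of_nontrivial
    obtain ⟨b, hab, hleaf⟩ := SimpleGraph.degree_eq_one_iff_existsUnique_adj.mp ha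
    have hcon := hT.connected.induce_compl_singleton_of_degree_eq_one ha
    have hcon' : (T.comap (Subtype.val : {x : ι // x ≠ a} → ι)).Connected := hcon
    have hac : (T.comap (Subtype.val : {x : ι // x ≠ a} → ι)).IsAcyclic :=
      hT.isAcyclic.comap (SimpleGraph.Embedding.comap (Function.Embedding.subtype _) T).toHom
        Subtype.val_injective
    have hcard := card_gl a
    have hc2 : Fintype.card {x : ι // x ≠ a} = n + 2 := by omega
    have : Nontrivial {x : ι // x ≠ a} := Fintype.one_lt_card_iff_nontrivial.mp (by omega)
    have hF : ∀ ε : ι → ℝ, Flow T ε t →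
        Flow (T.comap (Subtype.val : {x : ι // x ≠ a} → ι)) (ε ∘ Subtype.val) (fun k l => t k l) :=
      fun ε h => ⟨fun k => h.sgn k, fun k l hkl => h.alt k l hkl, fun k l => h.symm k l,
        fun k l hkl => h.pos k l hkl, fun k l hkl => h.zero k l hkl⟩
    have key : ∀ ε : ι → ℝ, Flow T ε t → ε b = -1 → Good T ε t := fun ε h hb =>
      good_step T ε t hT h a b hab hleaf hb (ih _ _ _ _ hc2 ⟨hcon', hac⟩ (hF ε h)) (hF ε h) hcon'
    rcases h.sgn b with hb | hb
    · have := (key (-ε) h.neg (by simp [hb])).neg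
      rwa [neg_neg] at this
    · exact key ε h hb

end claimB
end Zan

open Set Filter Topology

namespace Zan

section comb
set_option linter.unusedSectionVars false
variable {I J : Type*} [Fintype I] [Fintype J]

structure IsFl (α : I → ℝ) (β : J → ℝ) (m : I → J → ℝ) : Prop where
  nonneg : ∀ i j, 0 ≤ m i j
  row : ∀ i, ∑ j, m i j = α i
  col : ∀ j, ∑ i, m i j = β j

def Ind (m : I → J → ℝ) : Prop := ∀ x : I → J → ℝ, (∀ i j, m i j = 0 → x i j = 0) →
  (∀ i, ∑ j, x i j = 0) → (∀ j, ∑ i, x i j = 0) → ∀ i j, x i j = 0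

open Classical in
noncomputable def sup (m : I → J → ℝ) : Finset (I × J) := Finset.univ.filter (fun e => m e.1 e.2 ≠ 0)

theorem mem_sup {m : I → J → ℝ} {e : I × J} : e ∈ sup m ↔ m e.1 e.2 ≠ 0 := by
  classical
  simp [sup]

variable {α : I → ℝ} {β : J → ℝ} {m : I → J → ℝ}

theorem ex_ind (k : ℕ) : ∀ m : I → J → ℝ, (sup m).card ≤ k → IsFl α β m → ∃ m', IsFl α β m' ∧ Ind m' := by
  classical
  induction k with
  | zero =>
    intro m hk h
    refine ⟨m, h, fun x hx _ _ i j => hx i j ?_⟩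
    by_contra hne
    have : (i, j) ∈ sup m := mem_sup.mpr hne
    rw [Finset.card_eq_zero.mp (Nat.le_zero.mp hk)] at this
    simp at this
  | succ k ih =>
    intro m hk h
    by_cases hI : Ind m
    · exact ⟨m, h, hI⟩
    simp only [Ind] at hI
    push Not at hI
    obtain ⟨x, hx, hr, hc, i0, j0, h0⟩ := hI
    have hneg : ∃ e : I × J, x e.1 e.2 < 0 := by
      by_contra hn
      push Not at hn
      exact h0 ((Finset.sum_eq_zero_iff_of_nonneg (fun j _ => hn (i0, j))).mp (hr i0) j0 (Finset.mem_univ _))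
    obtain ⟨e, he, hmin⟩ := Finset.exists_min_image (Finset.univ.filter (fun e : I × J => x e.1 e.2 < 0))
      (fun e => m e.1 e.2 / (- x e.1 e.2)) (by
        obtain ⟨e, he⟩ := hneg; exact ⟨e, by simpa using he⟩)
    have hxe : x e.1 e.2 < 0 := by simpa using he
    set lam := m e.1 e.2 / (- x e.1 e.2) with hlam
    have hlam0 : 0 ≤ lam := div_nonneg (h.nonneg _ _) (by linarith)
    refine ih (fun i j => m i j + lam * x i j) ?_ ⟨?_, ?_, ?_⟩
    · have hss : sup (fun i j => m i j + lam * x i j) ⊂ sup m := by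
        rw [Finset.ssubset_iff_of_subset]
        · refine ⟨e, mem_sup.mpr fun h1 => hxe.ne (hx _ _ h1), fun h1 => mem_sup.mp h1 ?_⟩
          rw [hlam]; field_simp [hxe.ne]; ring
        · intro e' he'
          rw [mem_sup] at he' ⊢
          intro h1
          exact he' (by simp [h1, hx _ _ h1])
      have := Finset.card_lt_card hss
      omega
    · intro i j
      rcases lt_or_ge (x i j) 0 with h1 | h1
      · have := hmin (i, j) (by simpa using h1)
        rw [le_div_iff₀ (by simpa using h1)] at this
        simp only at this
        linarith
      · have := mul_nonneg hlam0 h1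
        have := h.nonneg i j
        linarith
    · intro i; rw [Finset.sum_add_distrib, ← Finset.mul_sum, hr, h.row]; simp
    · intro j; rw [Finset.sum_add_distrib, ← Finset.mul_sum, hc, h.col]; simp

theorem signed (x : I → J → ℝ) (a : I → ℝ) (b : J → ℝ) :
    ∑ i, a i * ∑ j, x i j - ∑ j, b j * ∑ i, x i j = ∑ i, ∑ j, x i j * (a i - b j) := by
  simp only [Finset.mul_sum, mul_sub, Finset.sum_sub_distrib]
  rw [Finset.sum_comm (f := fun j i => b j * x i j)]
  simp only [mul_comm]

def mg (x : I → J → ℝ) : I ⊕ J → ℝ := Sum.elim (fun i => ∑ j, x i j) (fun j => ∑ i, x i j)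

def sg : I ⊕ J → ℝ := Sum.elim (fun _ => 1) (fun _ => -1)

theorem signed' (x : I → J → ℝ) (a : I ⊕ J → ℝ) (h : ∀ i j, x i j ≠ 0 → a (.inl i) = a (.inr j)) :
    ∑ v, a v * (sg v * mg x v) = 0 := by
  have h1 := signed x (fun i => a (.inl i)) (fun j => a (.inr j))
  rw [Fintype.sum_sum_type]
  have h2 : ∑ i, ∑ j, x i j * (a (.inl i) - a (.inr j)) = 0 :=
    Finset.sum_eq_zero fun i _ => Finset.sum_eq_zero fun j _ => by
      by_cases hx : x i j = 0
      · rw [hx, zero_mul]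
      · rw [h i j hx, sub_self, mul_zero]
  rw [h2] at h1
  simp only [sg, mg, Sum.elim_inl, Sum.elim_inr]
  simp only [one_mul, neg_mul, mul_neg, Finset.sum_neg_distrib]
  linarith

theorem rank_le (hI : Ind m) (K : Finset (I ⊕ J))
    (hK : ∀ x : I → J → ℝ, (∀ i j, m i j = 0 → x i j = 0) → (∀ v ∈ K, mg x v = 0) → ∀ v, mg x v = 0) :
    (sup m).card ≤ K.card := by
  classical
  let ext : ((sup m) → ℝ) → I → J → ℝ := fun f i j => if h : (i, j) ∈ sup m then f ⟨(i, j), h⟩ else 0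
  let φ : ((sup m) → ℝ) →ₗ[ℝ] (K → ℝ) :=
    { toFun := fun f v => mg (ext f) v
      map_add' := fun f g => by
        have : ext (f + g) = fun i j => ext f i j + ext g i j := by
          funext i j; simp only [ext]; split <;> simp
        funext ⟨v, hv⟩
        rcases v with i | j <;> simp [this, mg, Finset.sum_add_distrib]
      map_smul' := fun r f => by
        have : ext (r • f) = fun i j => r * ext f i j := by
          funext i j; simp only [ext]; split <;> simp
        funext ⟨v, hv⟩
        rcases v with i | j <;> simp [this, mg, Finset.mul_sum] }
  have hinj : Function.Injective φ := by
    rw [injective_iff_map_eq_zero]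
    intro f hf
    have h0 : ∀ i j, m i j = 0 → ext f i j = 0 := fun i j h => by
      have : (i, j) ∉ sup m := fun h' => mem_sup.mp h' h
      simp [ext, this]
    have h1 := hK (ext f) h0 (fun v hv => congrFun hf ⟨v, hv⟩)
    have h2 := hI (ext f) h0 (fun i => h1 (.inl i)) (fun j => h1 (.inr j))
    funext ⟨⟨i, j⟩, he⟩
    have := h2 i j
    simpa [ext, he] using this
  have := LinearMap.finrank_le_finrank_of_injective hinj
  simpa using this

def tt (m : I → J → ℝ) : I ⊕ J → I ⊕ J → ℝ :=
  Sum.elim (fun i => Sum.elim (fun _ => 0) (fun j => m i j)) (fun j => Sum.elim (fun i => m i j) (fun _ => 0))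

theorem tt_symm (u v : I ⊕ J) : tt m u v = tt m v u := by
  rcases u with i | j <;> rcases v with i' | j' <;> rfl

def Bg (m : I → J → ℝ) : SimpleGraph (I ⊕ J) where
  Adj u v := 0 < tt m u v
  symm := ⟨fun u v h => by rw [tt_symm]; exact h⟩
  loopless := ⟨fun u h => by rcases u with i | j <;> simp [tt] at h⟩

theorem Bg_flow (h : IsFl α β m) : Flow (Bg m) sg (tt m) where
  sgn k := by rcases k with i | j <;> simp [sg]
  alt k l hkl := by
    rcases k with i | j <;> rcases l with i' | j' <;> simp [Bg, tt, sg] at hkl ⊢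
  symm := tt_symm
  pos k l h := h
  zero k l hkl := by
    have h2 : ¬ 0 < tt m k l := hkl
    have h3 : 0 ≤ tt m k l := by
      rcases k with i | j <;> rcases l with i' | j' <;> simp [tt, h.nonneg]
    linarith

theorem Bg_W (h : IsFl α β m) : W sg (tt m) = Sum.elim α (fun j => - β j) := by
  funext v
  rcases v with i | j
  · simp [W, tt, sg, h.row]
  · simp [W, tt, sg, h.col]

theorem Bg_edges : (Bg m).edgeSet.ncard ≤ (sup m).card := by
  classical
  have : (Bg m).edgeSet ⊆ ((sup m).image (fun e => s(Sum.inl e.1, Sum.inr e.2)) : Finset (Sym2 (I ⊕ J))) := by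
    intro e
    induction e using Sym2.ind with
    | _ u v =>
    intro huv
    have huv' : 0 < tt m u v := huv
    simp only [Finset.coe_image, Set.mem_image, Finset.mem_coe]
    rcases u with i | j <;> rcases v with i' | j' <;> simp only [tt, Sum.elim_inl, Sum.elim_inr, lt_irrefl] at huv'
    · exact ⟨(i, j'), mem_sup.mpr huv'.ne', rfl⟩
    · exact ⟨(i', j), mem_sup.mpr huv'.ne', Sym2.eq_swap⟩
  exact (Set.ncard_le_ncard this (Finset.finite_toSet _)).trans (by rw [Set.ncard_coe_finset]; exact Finset.card_image_le)

theorem sg_ne (v : I ⊕ J) : (sg v : ℝ) ≠ 0 := by rcases v with i | j <;> simp [sg]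

theorem Bg_tree (hI : Ind m) (hc : (Bg m).Connected) : (Bg m).IsTree := by
  classical
  obtain ⟨v0⟩ := hc.nonempty
  rw [SimpleGraph.isTree_iff_connected_and_card]
  refine ⟨hc, ?_⟩
  have h1 := hc.card_vert_le_card_edgeSet_add_one
  have h2 := Bg_edges (m := m)
  have h3 := rank_le hI (Finset.univ.erase v0) (by
    intro x _ hK v
    by_cases hv : v = v0
    · subst hv
      have := signed' x (fun _ => 1) (fun _ _ _ => rfl)
      rw [Finset.sum_eq_single v (fun w _ hw => by rw [hK w (by simp [hw])]; simp) (by simp)] at this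
      simpa [sg_ne] using this
    · exact hK v (by simp [hv]))
  rw [Finset.card_erase_of_mem (Finset.mem_univ _), Finset.card_univ, ← Nat.card_eq_fintype_card] at h3
  have h4 : (Bg m).edgeSet.ncard = Nat.card (Bg m).edgeSet := rfl
  have : 0 < Nat.card (I ⊕ J) := by rw [Nat.card_eq_fintype_card]; exact Fintype.card_pos_iff.mpr ⟨v0⟩
  omega

/-- separated by a 0/1 function -/
structure Spl (m : I → J → ℝ) (a : I ⊕ J → Prop) : Prop where
  cl : ∀ i j, m i j ≠ 0 → (a (.inl i) ↔ a (.inr j))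

theorem Spl.not {a : I ⊕ J → Prop} (h : Spl m a) : Spl m (fun v => ¬ a v) :=
  ⟨fun i j hij => not_congr (h.cl i j hij)⟩

theorem Spl.root {a : I ⊕ J → Prop} (h : Spl m a) {x : I → J → ℝ} (hx : ∀ i j, m i j = 0 → x i j = 0)
    {v0 : I ⊕ J} (h0 : a v0) (hz : ∀ v, a v → v ≠ v0 → mg x v = 0) : mg x v0 = 0 := by
  classical
  have := signed' x (fun v => if a v then 1 else 0) (fun i j hij => by
    have := h.cl i j (fun h' => hij (hx i j h'))
    simp [this])
  rw [Finset.sum_eq_single v0 (fun w _ hw => by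
    by_cases ha : a w
    · rw [hz w ha hw]; simp
    · simp [ha]) (by simp)] at this
  simpa [sg_ne, h0] using this

theorem Spl.rank {a : I ⊕ J → Prop} (h : Spl m a) (hI : Ind m) {v0 v1 : I ⊕ J} (h0 : a v0) (h1 : ¬ a v1) :
    (sup m).card + 2 ≤ Fintype.card (I ⊕ J) := by
  classical
  have h01 : v0 ≠ v1 := by rintro rfl; exact h1 h0
  have h3 := rank_le hI ((Finset.univ.erase v0).erase v1) (by
    intro x hx hK v
    by_cases hv : v = v0
    · subst hv
      exact h.root hx h0 fun w hw hwv => hK w (by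
        have : w ≠ v1 := by rintro rfl; exact h1 hw
        simp [hwv, this])
    · by_cases hv1 : v = v1
      · subst hv1
        exact h.not.root hx h1 fun w hw hwv => hK w (by
          have : w ≠ v0 := by rintro rfl; exact hw h0
          simp [hwv, this])
      · exact hK v (by simp [hv, hv1]))
  rw [Finset.card_erase_of_mem (by simp [h01.symm]), Finset.card_erase_of_mem (Finset.mem_univ _), Finset.card_univ] at h3
  have : 1 < Fintype.card (I ⊕ J) := Fintype.one_lt_card_iff.mpr ⟨v0, v1, h01⟩
  omega

end comb
end Zan

open Set Filter Topology

namespace Zan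

section comb2
set_option linter.unusedSectionVars false
variable {I J : Type*} [Fintype I] [Fintype J]
variable {α : I → ℝ} {β : J → ℝ} {m : I → J → ℝ}

theorem stitch {a : I ⊕ J → Prop} (h : Spl m a) (hI : Ind m) (hm : IsFl α β m) {i1 i2 : I} {j1 j2 : J}
    (ha1 : a (.inl i1)) (ha2 : ¬ a (.inl i2)) (h1 : m i1 j1 ≠ 0) (hlt : m i1 j1 < m i2 j2) :
    ∃ m', IsFl α β m' ∧ Ind m' ∧ (sup m).card < (sup m').card := by
  classical
  have hs : 0 < m i1 j1 := lt_of_le_of_ne (hm.nonneg _ _) h1.symm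
  have hb1 : a (.inr j1) := (h.cl i1 j1 h1).mp ha1
  have hb2 : ¬ a (.inr j2) := fun h' => ha2 ((h.cl i2 j2 (by linarith)).mpr h')
  have hi : i1 ≠ i2 := by rintro rfl; exact ha2 ha1
  have hj : j1 ≠ j2 := by rintro rfl; exact hb2 hb1
  have h12 : m i1 j2 = 0 := by
    by_contra h'; exact hb2 ((h.cl _ _ h').mp ha1)
  have h21 : m i2 j1 = 0 := by
    by_contra h'; exact ha2 ((h.cl _ _ h').mpr hb1)
  obtain ⟨r, hr⟩ : ∃ r : I → ℝ, r = fun i => (if i = i1 then 1 else 0) - (if i = i2 then 1 else 0) := ⟨_, rfl⟩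
  obtain ⟨k, hk⟩ : ∃ k : J → ℝ, k = fun j => (if j = j2 then 1 else 0) - (if j = j1 then 1 else 0) := ⟨_, rfl⟩
  have hr1 : r i1 = 1 := by simp [hr, hi]
  have hr2 : r i2 = -1 := by simp [hr, hi.symm]
  have hr0 : ∀ i, i ≠ i1 → i ≠ i2 → r i = 0 := fun i h1 h2 => by simp [hr, h1, h2]
  have hk1 : k j1 = -1 := by simp [hk, hj]
  have hk2 : k j2 = 1 := by simp [hk, hj.symm]
  have hk0 : ∀ j, j ≠ j1 → j ≠ j2 → k j = 0 := fun j h1 h2 => by simp [hk, h1, h2]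
  have hrs : ∑ i, r i = 0 := by simp [hr]
  have hks : ∑ j, k j = 0 := by simp [hk]
  have hrow : ∀ z : ℝ, ∀ i, ∑ j, z * (r i * k j) = 0 := fun z i => by
    rw [← Finset.mul_sum, ← Finset.mul_sum, hks]; simp
  have hcol : ∀ z : ℝ, ∀ j, ∑ i, z * (r i * k j) = 0 := fun z j => by
    rw [← Finset.mul_sum, ← Finset.sum_mul, hrs]; simp
  -- case principle
  have hcase : ∀ (p : I → J → Prop), p i1 j1 → p i1 j2 → p i2 j1 → p i2 j2 →
      (∀ i j, r i * k j = 0 → p i j) → ∀ i j, p i j := by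
    intro p q1 q2 q3 q4 q5 i j
    by_cases e1 : i = i1
    · subst e1
      by_cases e3 : j = j1
      · subst e3; exact q1
      · by_cases e4 : j = j2
        · subst e4; exact q2
        · exact q5 _ _ (by rw [hk0 j e3 e4, mul_zero])
    · by_cases e2 : i = i2
      · subst e2
        by_cases e3 : j = j1
        · subst e3; exact q3
        · by_cases e4 : j = j2
          · subst e4; exact q4
          · exact q5 _ _ (by rw [hk0 j e3 e4, mul_zero])
      · exact q5 _ _ (by rw [hr0 i e1 e2, zero_mul])
  refine ⟨fun i j => m i j + m i1 j1 * (r i * k j), ⟨?_, ?_, ?_⟩, ?_, ?_⟩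
  · apply hcase
    · rw [hr1, hk1]; linarith
    · rw [hr1, hk2, h12]; linarith
    · rw [hr2, hk1, h21]; linarith
    · rw [hr2, hk2]; linarith
    · intro i j hz; rw [hz, mul_zero, add_zero]; exact hm.nonneg i j
  · intro i; rw [Finset.sum_add_distrib, hrow, hm.row, add_zero]
  · intro j; rw [Finset.sum_add_distrib, hcol, hm.col, add_zero]
  · intro x hx hxr hxc
    let x' : I → J → ℝ := fun i j => x i j - x i1 j2 * (r i * k j)
    have hx'r : ∀ i, ∑ j, x' i j = 0 := fun i => by
      simp only [x']; rw [Finset.sum_sub_distrib, hrow, hxr, sub_zero]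
    have hx'c : ∀ j, ∑ i, x' i j = 0 := fun j => by
      simp only [x']; rw [Finset.sum_sub_distrib, hcol, hxc, sub_zero]
    have hx12 : x' i1 j2 = 0 := by simp [x', hr1, hk2]
    have hsupp : ∀ i j, m i j = 0 → (i = i2 ∧ j = j1) ∨ x' i j = 0 := by
      apply hcase
      · intro h'; exact absurd h' h1
      · intro _; exact Or.inr hx12
      · intro _; exact Or.inl ⟨rfl, rfl⟩
      · intro h'; linarith
      · intro i j hz hmij
        right
        simp only [x']
        rw [hz, mul_zero, sub_zero]
        exact hx i j (by simp only; rw [hz, hmij]; simp)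
    have hsg := signed x' (fun i => if a (.inl i) then 1 else 0) (fun j => if a (.inr j) then 1 else 0)
    simp only [hx'r, hx'c, mul_zero, Finset.sum_const_zero, sub_zero] at hsg
    have hterm : ∀ i j, ¬ (i = i2 ∧ j = j1) →
        x' i j * ((if a (.inl i) then 1 else 0) - (if a (.inr j) then 1 else 0)) = 0 := by
      intro i j hij
      by_cases hmij : m i j = 0
      · rw [((hsupp i j hmij).resolve_left hij), zero_mul]
      · simp [h.cl i j hmij]
    rw [Finset.sum_eq_single i2 (fun i _ hi => Finset.sum_eq_zero fun j _ => hterm i j (by tauto)) (by simp),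
      Finset.sum_eq_single j1 (fun j _ hj => hterm i2 j (by tauto)) (by simp)] at hsg
    simp only [ha2, hb1, if_true, if_false] at hsg
    have hx'0 := hI x' (fun i j hmij => by
      rcases hsupp i j hmij with ⟨rfl, rfl⟩ | h'
      · linarith
      · exact h') hx'r hx'c
    have h11 := hx i1 j1 (by simp only; rw [hr1, hk1]; ring)
    have h3 := hx'0 i1 j1
    simp only [x'] at h3 hx'0
    rw [h11, hr1, hk1] at h3
    have h4 : x i1 j2 = 0 := by linarith
    intro i j
    have := hx'0 i j
    rw [h4] at this; linarith
  · have hsub : insert (i1, j2) (insert (i2, j1) ((sup m).erase (i1, j1))) ⊆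
        sup (fun i j => m i j + m i1 j1 * (r i * k j)) := by
      intro e he
      rw [Finset.mem_insert, Finset.mem_insert, Finset.mem_erase] at he
      rw [mem_sup]
      rcases he with rfl | rfl | ⟨he1, he2⟩
      · simp only; rw [h12, hr1, hk2]; linarith
      · simp only; rw [h21, hr2, hk1]; linarith
      · obtain ⟨i, j⟩ := e
        replace he2 := mem_sup.mp he2
        simp only at he2 ⊢
        revert he1 he2
        revert i j
        apply hcase
        · intro h' _; exact absurd rfl h'
        · intro _ h'; exact absurd h12 h'
        · intro _ h'; exact absurd h21 h'
        · intro _ _ h'; rw [hr2, hk2] at h'; linarith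
        · intro i j hz _ h'; rw [hz]; simpa using h'
    have h3 := Finset.card_le_card hsub
    have m12 : (i1, j2) ∉ sup m := fun h' => mem_sup.mp h' h12
    have m21 : (i2, j1) ∉ sup m := fun h' => mem_sup.mp h' h21
    have m11 : (i1, j1) ∈ sup m := mem_sup.mpr h1
    rw [Finset.card_insert_of_notMem (by simp [m12, hi]), Finset.card_insert_of_notMem (by simp [m21]),
      Finset.card_erase_of_mem m11] at h3
    have := Finset.card_pos.mpr ⟨_, m11⟩
    omega

end comb2

theorem comb_main {I J : Type*} [Fintype I] [Fintype J] (n d : ℕ) (hn : 1 ≤ n) (α : I → ℕ) (β : J → ℕ)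
    (hα : ∀ i, 0 < α i) (hβ : ∀ j, 0 < β j) (hαs : ∑ i, α i = n) (hβs : ∑ j, β j = n)
    (hd : d = Nat.gcd (Finset.univ.gcd α) (Finset.univ.gcd β))
    (hN : Fintype.card (I ⊕ J) ≤ n / d + 1) :
    ∃ m : I → J → ℝ, IsFl (fun i => (α i : ℝ)) (fun j => (β j : ℝ)) m ∧ (Bg m).IsTree := by
  classical
  have hnR : (n : ℝ) ≠ 0 := by positivity
  have hαR : ∑ i, (α i : ℝ) = n := by exact_mod_cast hαs
  have hβR : ∑ j, (β j : ℝ) = n := by exact_mod_cast hβs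
  have h0 : IsFl (fun i => (α i : ℝ)) (fun j => (β j : ℝ)) (fun i j => α i * β j / n) := by
    refine ⟨fun i j => by positivity, fun i => ?_, fun j => ?_⟩
    · rw [← Finset.sum_div, ← Finset.mul_sum, hβR]; field_simp
    · rw [← Finset.sum_div, ← Finset.sum_mul, hαR]; field_simp
  obtain ⟨m0, hm0, hI0⟩ := ex_ind _ _ le_rfl h0
  let S : Set ℕ := {k | ∃ m : I → J → ℝ, IsFl (fun i => (α i : ℝ)) (fun j => (β j : ℝ)) m ∧ Ind m ∧ (sup m).card = k}
  have hSne : S.Nonempty := ⟨_, m0, hm0, hI0, rfl⟩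
  have hSb : BddAbove S := ⟨Fintype.card (I × J), by
    rintro k ⟨m, -, -, rfl⟩; exact Finset.card_le_univ _⟩
  obtain ⟨m, hm, hI, hk⟩ := Nat.sSup_mem hSne hSb
  have hmax : ∀ m' : I → J → ℝ, IsFl (fun i => (α i : ℝ)) (fun j => (β j : ℝ)) m' → Ind m' →
      (sup m').card ≤ (sup m).card := fun m' h1 h2 => by
    rw [hk]; exact le_csSup hSb ⟨m', h1, h2, rfl⟩
  refine ⟨m, hm, Bg_tree hI ?_⟩
  have hIne : Nonempty I := by
    by_contra h'
    rw [not_nonempty_iff] at h'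
    simp at hαs; omega
  have : Nonempty (I ⊕ J) := ⟨.inl hIne.some⟩
  by_contra hnc
  have hnp : ¬ (Bg m).Preconnected := fun h => hnc ⟨h⟩
  simp only [SimpleGraph.Preconnected] at hnp
  push Not at hnp
  obtain ⟨v0, v1, hv⟩ := hnp
  have hposm : ∀ {i j}, m i j ≠ 0 → 0 < m i j := fun {i j} h' => lt_of_le_of_ne (hm.nonneg _ _) h'.symm
  have hsep : Spl m (fun v => (Bg m).Reachable v0 v) := by
    refine ⟨fun i j hij => ?_⟩
    have hadj : (Bg m).Adj (.inl i) (.inr j) := hposm hij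
    exact ⟨fun h => h.trans hadj.reachable, fun h => h.trans hadj.symm.reachable⟩
  set a : I ⊕ J → Prop := fun v => (Bg m).Reachable v0 v with ha
  have ha0 : a v0 := SimpleGraph.Reachable.refl _
  have ha1 : ¬ a v1 := hv
  have hrank := hsep.rank hI ha0 ha1
  -- every vertex class contains an edge
  have hedge : ∀ b : I ⊕ J → Prop, Spl m b → ∀ v, b v → ∃ i j, b (.inl i) ∧ m i j ≠ 0 := by
    intro b hb v hv
    rcases v with i | j
    · have h1 : ∑ j, m i j ≠ 0 := by rw [hm.row]; have := hα i; positivity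
      obtain ⟨j, -, hj⟩ := Finset.exists_ne_zero_of_sum_ne_zero h1
      exact ⟨i, j, hv, hj⟩
    · have h1 : ∑ i, m i j ≠ 0 := by rw [hm.col]; have := hβ j; positivity
      obtain ⟨i, -, hj⟩ := Finset.exists_ne_zero_of_sum_ne_zero h1
      exact ⟨i, j, (hb.cl i j hj).mpr hv, hj⟩
  have hle : ∀ b : I ⊕ J → Prop, Spl m b → ∀ i1 j1 i2 j2, b (.inl i1) → ¬ b (.inl i2) → m i1 j1 ≠ 0 →
      m i2 j2 ≤ m i1 j1 := by
    intro b hb i1 j1 i2 j2 h1 h2 h3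
    by_contra hlt
    push Not at hlt
    obtain ⟨m', q1, q2, q3⟩ := stitch hb hI hm h1 h2 h3 hlt
    have := hmax m' q1 q2
    omega
  obtain ⟨i1, j1, q1, p1⟩ := hedge a hsep v0 ha0
  obtain ⟨i2, j2, q2, p2⟩ := hedge _ hsep.not v1 ha1
  have hcross : ∀ i j i' j', a (.inl i) → ¬ a (.inl i') → m i j ≠ 0 → m i' j' ≠ 0 → m i j = m i' j' := by
    intro i j i' j' e1 e2 e3 e4
    exact le_antisymm (hle _ hsep.not i' j' i j e2 (not_not.mpr e1) e4) (hle _ hsep i j i' j' e1 e2 e3)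
  obtain ⟨τ, hτ⟩ : ∃ τ, τ = m i1 j1 := ⟨_, rfl⟩
  have hτ0 : 0 < τ := by rw [hτ]; exact hposm p1
  have hall : ∀ i j, m i j ≠ 0 → m i j = τ := by
    intro i j hij
    by_cases hai : a (.inl i)
    · rw [hcross i j i2 j2 hai q2 hij p2, ← hcross i1 j1 i2 j2 q1 q2 p1 p2, hτ]
    · rw [← hcross i1 j1 i j q1 hai p1 hij, hτ]
  have hval : ∀ i j, m i j = τ * (if m i j ≠ 0 then 1 else 0) := by
    intro i j
    by_cases h' : m i j = 0
    · simp [h']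
    · rw [if_pos h', mul_one]; exact hall i j h'
  have hαz : ∀ i, ∃ z : ℤ, (α i : ℝ) = τ * z := fun i => by
    refine ⟨∑ j, if m i j ≠ 0 then 1 else 0, ?_⟩
    rw [← hm.row i]; push_cast; rw [Finset.mul_sum]
    exact Finset.sum_congr rfl fun j _ => hval i j
  have hβz : ∀ j, ∃ z : ℤ, (β j : ℝ) = τ * z := fun j => by
    refine ⟨∑ i, if m i j ≠ 0 then 1 else 0, ?_⟩
    rw [← hm.col j]; push_cast; rw [Finset.mul_sum]
    exact Finset.sum_congr rfl fun i _ => hval i j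
  have hnE : (n : ℝ) = τ * (sup m).card := by
    rw [← hαR]
    have : ((sup m).card : ℝ) = ∑ i, ∑ j, if m i j ≠ 0 then (1:ℝ) else 0 := by
      rw [sup, Finset.card_filter, Fintype.sum_prod_type]; push_cast; rfl
    rw [this, Finset.mul_sum]
    refine Finset.sum_congr rfl fun i _ => ?_
    rw [← hm.row i, Finset.mul_sum]
    exact Finset.sum_congr rfl fun j _ => hval i j
  -- the set of integers that are integer multiples of τ is an additive subgroup
  have hgcd : ∀ x y : ℕ, (∃ z : ℤ, (x : ℝ) = τ * z) → (∃ z : ℤ, (y : ℝ) = τ * z) →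
      ∃ z : ℤ, ((Nat.gcd x y : ℕ) : ℝ) = τ * z := by
    rintro x y ⟨z1, h1⟩ ⟨z2, h2⟩
    refine ⟨z1 * Nat.gcdA x y + z2 * Nat.gcdB x y, ?_⟩
    have h3 := congrArg (Int.cast : ℤ → ℝ) (Nat.gcd_eq_gcd_ab x y)
    push_cast at h3 ⊢
    rw [h3, h1, h2]; ring
  have hgcdF : ∀ {K : Type _} (s : Finset K) (f : K → ℕ), (∀ k, ∃ z : ℤ, (f k : ℝ) = τ * z) →
      ∃ z : ℤ, ((s.gcd f : ℕ) : ℝ) = τ * z := by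
    intro K s f hf
    induction s using Finset.induction_on with
    | empty => exact ⟨0, by simp⟩
    | insert k s hks ih => rw [Finset.gcd_insert]; exact hgcd _ _ (hf k) ih
  obtain ⟨z, hz⟩ := hgcd _ _ (hgcdF Finset.univ α hαz) (by
    have hgcdF' : ∀ (s : Finset J), ∃ z : ℤ, ((s.gcd β : ℕ) : ℝ) = τ * z := by
      intro s
      induction s using Finset.induction_on with
      | empty => exact ⟨0, by simp⟩
      | insert k s hks ih => rw [Finset.gcd_insert]; exact hgcd _ _ (hβz k) ih
    exact hgcdF' Finset.univ)
  rw [← hd] at hz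
  have hdn : d ∣ n := by
    rw [← hαs]
    refine Finset.dvd_sum fun i hi => ?_
    rw [hd]; exact (Nat.gcd_dvd_left _ _).trans (Finset.gcd_dvd hi)
  have hd0 : 0 < d := Nat.pos_of_dvd_of_pos hdn hn
  obtain ⟨e, he⟩ := hdn
  have hz1 : 1 ≤ z := by
    have : (0:ℝ) < τ * z := by rw [← hz]; exact_mod_cast hd0
    have : (0:ℝ) < z := by
      by_contra h'
      push Not at h'
      nlinarith
    exact_mod_cast this
  have hE : ((sup m).card : ℝ) = e * z := by
    have h1 : τ * (sup m).card = τ * (e * z) := by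
      rw [← hnE, he]; push_cast; rw [hz]; ring
    exact mul_left_cancel₀ hτ0.ne' h1
  have hE' : ((sup m).card : ℤ) = e * z := by exact_mod_cast hE
  have : (e:ℤ) ≤ (sup m).card := by rw [hE']; nlinarith
  have hdiv : n / d = e := by rw [he, Nat.mul_div_cancel_left _ hd0]
  rw [hdiv] at hN
  omega

end Zan

open Set Filter Topology

namespace Zan

section fin
open Polynomial

theorem der_prod {I : Type*} (s : Finset I) (a : I → ℂ) (α : I → ℕ) (x : ℂ) (hx : ∀ i ∈ s, x ≠ a i) :
    eval x (derivative (∏ i ∈ s, (X - C (a i)) ^ α i)) =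
      eval x (∏ i ∈ s, (X - C (a i)) ^ α i) * ∑ i ∈ s, (α i : ℂ) / (x - a i) := by
  classical
  induction s using Finset.induction_on with
  | empty => simp
  | insert k s hk ih =>
    have h1 : x - a k ≠ 0 := sub_ne_zero.mpr (hx k (Finset.mem_insert_self _ _))
    rw [Finset.prod_insert hk, Finset.sum_insert hk, derivative_mul, eval_add, eval_mul, eval_mul,
      ih (fun i hi => hx i (Finset.mem_insert_of_mem hi)), eval_mul]
    have h2 : eval x (derivative ((X - C (a k)) ^ α k)) =
        eval x ((X - C (a k)) ^ α k) * ((α k : ℂ) / (x - a k)) := by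
      rw [derivative_X_sub_C_pow]
      simp only [eval_mul, eval_pow, eval_sub, eval_X, eval_C, eval_natCast]
      rcases Nat.eq_zero_or_pos (α k) with h0 | h0
      · simp [h0]
      · obtain ⟨r, hr⟩ := Nat.exists_eq_succ_of_ne_zero h0.ne'
        rw [hr]; simp only [Nat.succ_eq_add_one, Nat.add_sub_cancel, pow_succ]
        field_simp
    rw [h2]; ring

theorem pp_monic {I : Type*} [Fintype I] (a : I → ℂ) (α : I → ℕ) : (∏ i, (X - C (a i)) ^ α i).Monic :=
  monic_prod_of_monic _ _ fun i _ => (monic_X_sub_C _).pow _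

theorem pp_deg {I : Type*} [Fintype I] (a : I → ℂ) (α : I → ℕ) :
    (∏ i, (X - C (a i)) ^ α i).natDegree = ∑ i, α i := by
  rw [natDegree_prod_of_monic _ _ fun i _ => (monic_X_sub_C _).pow _]
  simp [natDegree_pow]

theorem XD_le (D : ℂ[X]) {k : ℕ} (hk : D.natDegree ≤ k) : (X * derivative D).natDegree ≤ k := by
  by_cases h : derivative D = 0
  · rw [h]; simp
  · have h0 : 0 < D.natDegree := by
      by_contra h'
      rw [natDegree_eq_zero.mp (by omega : D.natDegree = 0) |>.choose_spec.symm] at h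
      simp at h
    have h1 := natDegree_derivative_le D
    have h2 := natDegree_mul_le (p := (X : ℂ[X])) (q := derivative D)
    rw [natDegree_X] at h2
    omega

theorem XD_coeff (D : ℂ[X]) (k : ℕ) : (X * derivative D).coeff k = k * D.coeff k := by
  cases k with
  | zero => simp
  | succ k => rw [coeff_X_mul, coeff_derivative]; push_cast; ring

theorem deg_calc (P Q : ℂ[X]) (n N : ℕ) (hP : P.Monic) (hQ : Q.Monic) (hPn : P.natDegree = n)
    (hQn : Q.natDegree = n) (hn : 1 ≤ n) (hG0 : derivative P * Q - P * derivative Q ≠ 0)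
    (hG : (derivative P * Q - P * derivative Q).natDegree + N = 2 * n) :
    (P - Q).natDegree + N = n + 1 := by
  set D := P - Q with hD
  set k := D.natDegree with hk
  have hGD : derivative P * Q - P * derivative Q = P * derivative D - derivative P * D := by
    rw [hD, derivative_sub]; ring
  have hD0 : D ≠ 0 := by
    intro h; rw [hGD, h] at hG0; simp at hG0
  have hkn : k < n := by
    rw [hk]
    have : D.degree < P.degree := degree_sub_lt_left
      (by rw [degree_eq_natDegree hP.ne_zero, degree_eq_natDegree hQ.ne_zero, hPn, hQn]) hP.ne_zero
      (by rw [hP.leadingCoeff, hQ.leadingCoeff])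
    have := natDegree_lt_natDegree hD0 this
    rwa [hPn] at this
  set G := derivative P * Q - P * derivative Q with hGdef
  have hXG : X * G = P * (X * derivative D) - (X * derivative P) * D := by rw [hGD]; ring
  have hc : (X * G).coeff (n + k) = ((k : ℂ) - n) * D.leadingCoeff := by
    rw [hXG, coeff_sub, coeff_mul_add_eq_of_natDegree_le hPn.le (XD_le D le_rfl),
      coeff_mul_add_eq_of_natDegree_le (XD_le P hPn.le) le_rfl, XD_coeff, XD_coeff]
    have : P.coeff n = 1 := by rw [← hPn]; exact hP.coeff_natDegree
    rw [this, leadingCoeff]; ring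
  have hc0 : (X * G).coeff (n + k) ≠ 0 := by
    rw [hc]
    refine mul_ne_zero (sub_ne_zero.mpr ?_) (leadingCoeff_ne_zero.mpr hD0)
    exact_mod_cast hkn.ne
  have hle : (X * G).natDegree ≤ n + k := by
    rw [hXG]
    refine (natDegree_sub_le _ _).trans (max_le ?_ ?_)
    · exact natDegree_mul_le.trans (add_le_add hPn.le (XD_le D le_rfl))
    · exact natDegree_mul_le.trans (add_le_add (XD_le P hPn.le) le_rfl)
  have heq : (X * G).natDegree = n + k := le_antisymm hle (le_natDegree_of_ne_zero hc0)
  rw [natDegree_X_mul hG0] at heq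
  omega

theorem hard {p q : ℕ} (n : ℕ) (hn : 1 ≤ n) (α : Fin p → ℕ) (β : Fin q → ℕ) (hαs : ∑ i, α i = n)
    (hβs : ∑ j, β j = n) (c : Fin p ⊕ Fin q → ℂ)
    (hc : Cfg c (Sum.elim (fun i => (α i : ℝ)) (fun j => -(β j : ℝ)))) :
    ∃ (a : Fin p → ℂ) (b : Fin q → ℂ), Function.Injective a ∧ Function.Injective b ∧
      IsCoprime (∏ i, (X - C (a i)) ^ α i) (∏ j, (X - C (b j)) ^ β j) ∧
      (∏ i, (X - C (a i)) ^ α i - ∏ j, (X - C (b j)) ^ β j : ℂ[X]).natDegree + (p + q) = n + 1 := by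
  obtain ⟨L, hL⟩ := hc
  have hinj := hL.inj
  have hne : Nonempty (Fin p ⊕ Fin q) := by
    by_contra h'
    rw [not_nonempty_iff] at h'
    have : IsEmpty (Fin p) := ⟨fun i => h'.elim (.inl i)⟩
    simp at hαs; omega
  refine ⟨fun i => c (.inl i), fun j => c (.inr j), hinj.comp Sum.inl_injective, hinj.comp Sum.inr_injective, ?_, ?_⟩
  · refine IsCoprime.prod_left fun i _ => IsCoprime.prod_right fun j _ => IsCoprime.pow ?_
    refine isCoprime_X_sub_C_of_isUnit_sub ?_
    rw [isUnit_iff_ne_zero, sub_ne_zero]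
    exact fun h => by cases hinj h
  · set P : ℂ[X] := ∏ i, (X - C (c (.inl i))) ^ α i with hP
    set Q : ℂ[X] := ∏ j, (X - C (c (.inr j))) ^ β j with hQ
    have hPm : P.Monic := pp_monic _ _
    have hQm : Q.Monic := pp_monic _ _
    have hPn : P.natDegree = n := by rw [← hαs]; exact pp_deg _ _
    have hQn : Q.natDegree = n := by rw [← hβs]; exact pp_deg _ _
    have hRm : (∏ k, (X - C (c k)) : ℂ[X]).Monic := monic_prod_of_monic _ _ fun i _ => monic_X_sub_C _
    have hRn : (∏ k, (X - C (c k)) : ℂ[X]).natDegree = p + q := by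
      rw [natDegree_prod_of_monic _ _ fun i _ => monic_X_sub_C _]; simp
    have hid : (derivative P * Q - P * derivative Q) * ∏ k, (X - C (c k)) = C L * (P * Q) := by
      refine eq_of_infinite_eval_eq _ _ ?_
      refine Set.Infinite.mono (s := (Set.range c)ᶜ) ?_ (Set.finite_range c).infinite_compl
      intro x hx
      have hx' : ∀ k, x ≠ c k := fun k h => hx ⟨k, h.symm⟩
      have hinv := hL.inv (x := x) (by first | exact hx' | exact fun k => (hx' k).symm)
      have hprod : ∏ k, (x - c k) ≠ 0 := Finset.prod_ne_zero_iff.mpr fun k _ => sub_ne_zero.mpr (hx' k)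
      rw [eq_div_iff hprod, Fintype.sum_sum_type] at hinv
      simp only [Sum.elim_inl, Sum.elim_inr] at hinv
      push_cast at hinv
      have h1 := der_prod Finset.univ (fun i => c (.inl i)) α x (fun i _ => hx' _)
      have h2 := der_prod Finset.univ (fun i => c (.inr i)) β x (fun i _ => hx' _)
      rw [← hP] at h1
      rw [← hQ] at h2
      clear_value P Q
      show eval x _ = eval x _
      rw [eval_mul, eval_sub, eval_mul, eval_mul, h1, h2, eval_prod, eval_mul, eval_mul, eval_C]
      simp only [eval_sub, eval_X, eval_C]
      rw [← hinv]
      simp only [neg_div, Finset.sum_neg_distrib]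
      ring
    have hne : C L * (P * Q) ≠ 0 := mul_ne_zero (C_ne_zero.mpr hL.1) (mul_ne_zero hPm.ne_zero hQm.ne_zero)
    have hG0 : derivative P * Q - P * derivative Q ≠ 0 := by
      intro h; rw [h, zero_mul] at hid; exact hne hid.symm
    refine deg_calc P Q n (p + q) hPm hQm hPn hQn hn hG0 ?_
    have := congrArg natDegree hid
    rw [natDegree_mul hG0 hRm.ne_zero, hRn, natDegree_C_mul hL.1, natDegree_mul hPm.ne_zero hQm.ne_zero, hPn, hQn] at this
    omega

theorem easy (P Q p1 q1 : ℂ[X]) (d m : ℕ) (hd : 0 < d) (hp : p1.Monic) (hq : q1.Monic) (hpm : p1.natDegree = m)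
    (hqm : q1.natDegree = m) (hP : P = p1 ^ d) (hQ : Q = q1 ^ d) (hne : P ≠ Q) :
    (d - 1) * m ≤ (P - Q).natDegree := by
  have h1 : P - Q = (∑ i ∈ Finset.range d, p1 ^ i * q1 ^ (d - 1 - i)) * (p1 - q1) := by
    rw [hP, hQ]; exact ((Commute.all p1 q1).geom_sum₂_mul d).symm
  have h2 : (∑ i ∈ Finset.range d, p1 ^ i * q1 ^ (d - 1 - i)).coeff ((d - 1) * m) = d := by
    rw [finsetSum_coeff]
    rw [Finset.sum_congr rfl (g := fun _ => (1:ℂ))]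
    · simp
    · intro i hi
      have hi' := Finset.mem_range.mp hi
      have hm : (p1 ^ i * q1 ^ (d - 1 - i)).Monic := (hp.pow _).mul (hq.pow _)
      have hdeg : (p1 ^ i * q1 ^ (d - 1 - i)).natDegree = (d - 1) * m := by
        rw [(hp.pow _).natDegree_mul (hq.pow _), hp.natDegree_pow, hq.natDegree_pow, hpm, hqm, ← add_mul]
        congr 1; omega
      rw [← hdeg]; exact hm.coeff_natDegree
  have h3 : (d - 1) * m ≤ (∑ i ∈ Finset.range d, p1 ^ i * q1 ^ (d - 1 - i)).natDegree :=
    le_natDegree_of_ne_zero (by rw [h2]; exact_mod_cast hd.ne')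
  have h4 : P - Q ≠ 0 := sub_ne_zero.mpr hne
  rw [h1] at h4 ⊢
  rw [natDegree_mul (left_ne_zero_of_mul h4) (right_ne_zero_of_mul h4)]
  omega

end fin
end Zan

end ZanAll

open Polynomial

/-- Zannier's theorem: for partitions `α, β` of `n` with `p` and `q` parts and
`d = gcd(α, β)`, there exist coprime monic `P, Q` with factorization patterns
`α, β` and `deg (P - Q) = (n + 1) - (p + q)` iff `p + q ≤ n/d + 1`. -/
theorem stmt5 (n p q d : ℕ) (hn : 1 ≤ n)
    (α : Fin p → ℕ) (β : Fin q → ℕ)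
    (hα : ∀ i, 0 < α i) (hβ : ∀ j, 0 < β j)
    (hαsum : ∑ i, α i = n) (hβsum : ∑ j, β j = n)
    (hd : d = Nat.gcd (Finset.univ.gcd α) (Finset.univ.gcd β)) :
    (∃ (P Q : ℂ[X]) (a : Fin p → ℂ) (b : Fin q → ℂ),
        Function.Injective a ∧ Function.Injective b ∧
        P = ∏ i, (X - C (a i)) ^ α i ∧
        Q = ∏ j, (X - C (b j)) ^ β j ∧
        IsCoprime P Q ∧
        ((P - Q).natDegree : ℤ) = (n + 1 : ℤ) - ((p : ℤ) + (q : ℤ))) ↔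
      p + q ≤ n / d + 1 := by
  constructor
  · rintro ⟨P, Q, a, b, -, -, hP, hQ, hcop, hdeg⟩
    have hdα : ∀ i, d ∣ α i := fun i => by
      rw [hd]; exact (Nat.gcd_dvd_left _ _).trans (Finset.gcd_dvd (Finset.mem_univ i))
    have hdβ : ∀ j, d ∣ β j := fun j => by
      rw [hd]; exact (Nat.gcd_dvd_right _ _).trans (Finset.gcd_dvd (Finset.mem_univ j))
    choose α' hα' using hdα
    choose β' hβ' using hdβ
    have hdn : d ∣ n := by
      rw [← hαsum]; exact Finset.dvd_sum fun i _ => ⟨_, hα' i⟩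
    have hd0 : 0 < d := Nat.pos_of_dvd_of_pos hdn hn
    obtain ⟨m, hm⟩ := hdn
    have hα's : ∑ i, α' i = m := by
      have : d * ∑ i, α' i = d * m := by
        rw [← hm, ← hαsum, Finset.mul_sum]; exact Finset.sum_congr rfl fun i _ => (hα' i).symm
      exact Nat.eq_of_mul_eq_mul_left hd0 this
    have hβ's : ∑ i, β' i = m := by
      have : d * ∑ i, β' i = d * m := by
        rw [← hm, ← hβsum, Finset.mul_sum]; exact Finset.sum_congr rfl fun i _ => (hβ' i).symm
      exact Nat.eq_of_mul_eq_mul_left hd0 this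
    have hPn : P.natDegree = n := by rw [hP, Zan.pp_deg, hαsum]
    have hne : P ≠ Q := by
      rintro rfl
      have := natDegree_eq_zero_of_isUnit (isCoprime_self.mp hcop)
      omega
    have key := Zan.easy P Q (∏ i, (X - C (a i)) ^ (α' i)) (∏ j, (X - C (b j)) ^ (β' j)) d m hd0
      (Zan.pp_monic _ _) (Zan.pp_monic _ _) ((Zan.pp_deg _ _).trans hα's) ((Zan.pp_deg _ _).trans hβ's)
      (by rw [hP, ← Finset.prod_pow]; exact Finset.prod_congr rfl fun i _ => by rw [hα', mul_comm, pow_mul])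
      (by rw [hQ, ← Finset.prod_pow]; exact Finset.prod_congr rfl fun i _ => by rw [hβ', mul_comm, pow_mul]) hne
    rw [hm, Nat.mul_div_cancel_left _ hd0]
    have h5 : (d - 1) * m + m = n := by
      rw [hm]; obtain ⟨e, rfl⟩ := Nat.exists_eq_succ_of_ne_zero hd0.ne'; simp; ring
    omega
  · intro hN
    have hnt : Nontrivial (Fin p ⊕ Fin q) := by
      have hp : p ≠ 0 := by rintro rfl; simp at hαsum; omega
      have hq : q ≠ 0 := by rintro rfl; simp at hβsum; omega
      exact ⟨.inl ⟨0, by omega⟩, .inr ⟨0, by omega⟩, by simp⟩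
    obtain ⟨m, hm, hT⟩ := Zan.comb_main n d hn α β hα hβ hαsum hβsum hd (by simpa using hN)
    have hcard := Fintype.one_lt_card_iff_nontrivial.mpr hnt
    obtain ⟨c, hc, -⟩ := Zan.good_all (Fintype.card (Fin p ⊕ Fin q) - 2) _ _ _ _ (by omega) hT (Zan.Bg_flow hm)
    rw [Zan.Bg_W hm] at hc
    obtain ⟨a, b, h1, h2, h3, h4⟩ := Zan.hard n hn α β hαsum hβsum c hc
    exact ⟨_, _, a, b, h1, h2, rfl, rfl, h3, by omega⟩
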